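/- Let n ≥ 1, β ∈ (0,n) ∪ (n,∞), and let φ be a doubling Young function satisfying C_β := sup_{t>0} (t^β/φ(t)) ∫_0^t φ(s) s^{-β-1} ds < ∞. Then a domain Ω ⊂ ℝⁿ is a Ẇ^{β,φ}-extension domain if and only if Ω is Ahlfors n-regular. -/

import Mathlib

/-!
Throughout, `modI` is the double integral defining the seminorm at `λ = 1`, and `Phi φ t` is
`φ |t|` as an extended nonnegative real.

Extension domains are Ahlfors regular. The extension property is tested on the radial cutoff
`bump x s t H`, equal to `H` on `B(x,s)` and vanishing outside `B(x,t)`. Finiteness of `C_β` bounds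
its modular on `Ω` by a multiple of `|B(x,t) ∩ Ω| (t - s)^{-β} φ(H)` (`modI_bump_le`), so `H` can be
taken large when `Ω` has little volume in the ball (`exists_extended_bump`). On the whole space,
chaining averages over dyadic balls (`Phi_chain`) bounds the height of a function of unit modular:
for `β < n` by a capacity estimate (`Phi_height_le_of_lt`), for `β > n` by a Morrey estimate
(`Phi_height_le_of_gt`). Comparing the two bounds gives a lower bound for the volume, directly if
`β > n` (`volume_step_of_gt`), and after an iteration over shrinking radii if `β < n`
(`volume_ge_of_lt`). For `β > n`, connectedness of `Ω` provides a second point at a suitable distance.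

Ahlfors regular domains are extension domains. Outside `Ω`, the extension `extn Ω u` at `x` is the
average of `u` over `Ω` against a tent-shaped weight at the scale of the distance from `x` to `Ω`;
the boundary of `Ω` is a null set (`ae_infDist_pos`). Its modular is bounded by that of `u`
(`modI_extn_le`). Pairs of points that are close relative to their distance to `Ω` are handled by a
Lipschitz bound (`Phi_extn_sub_extn_le`) and the finiteness of `C_β` (`lintegral_near_le`). For the
other pairs both values are compared with averages at the scale `|x - y|`
(`Phi_extn_pointwise_le`); the errors telescope over dyadic scales into mean oscillations of `u` on
`Ω` (`tsum_Err_le`), and those, weighted by the kernel and summed over all scales, are bounded by the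
modular of `u` (`lintegral_tsum_Osc_le`, `lintegral_tsum_sub_Av_le`). Convexity of `φ` turns the
modular bound into a bound for the Luxemburg seminorm (`modI_extn_div_le`, `extension_of_ahlfors`).
-/

open MeasureTheory Metric Set Filter
open scoped ENNReal NNReal Topology Classical

noncomputable section

/-- `φ` is a Young function: convex, continuous on `[0,∞)`, `φ(0)=0`, `φ(t)>0` for `t>0`. -/
def IsYoung (φ : ℝ → ℝ) : Prop :=
  ContinuousOn φ (Set.Ici 0) ∧ ConvexOn ℝ (Set.Ici 0) φ ∧ φ 0 = 0 ∧ ∀ t > 0, 0 < φ t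

/-- `φ` is doubling with constant `K > 1`: `φ(2t) ≤ K φ(t)` for all `t > 0`. -/
def IsDoubling (φ : ℝ → ℝ) (K : ℝ) : Prop :=
  1 < K ∧ ∀ t > 0, φ (2 * t) ≤ K * φ t

/-- The (generalized) inverse of a Young function. -/
def yInv (φ : ℝ → ℝ) (y : ℝ) : ℝ :=
  sInf {t : ℝ | 0 ≤ t ∧ y ≤ φ t}

/-- `sup_{t>0} (t^β/φ(t)) ∫_0^t φ(s) s^{-β-1} ds ≤ M`. -/
def CbetaLE (β : ℝ) (φ : ℝ → ℝ) (M : ℝ) : Prop :=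
  ∀ t > 0,
    ENNReal.ofReal (t ^ β / φ t) *
        (∫⁻ s in Set.Ioc (0 : ℝ) t, ENNReal.ofReal (φ s / s ^ (β + 1))) ≤
      ENNReal.ofReal M

/-- The condition `C_β := sup_{t>0} (t^β/φ(t)) ∫_0^t φ(s) s^{-β-1} ds < ∞`. -/
def CbetaFinite (β : ℝ) (φ : ℝ → ℝ) : Prop :=
  ∃ M : ℝ, CbetaLE β φ M

/-- The double integral `∫_Ω ∫_Ω φ(|u(x)-u(y)|/λ) |x-y|^{-n-β} dx dy`. -/
def fracIntegral (n : ℕ) (β : ℝ) (φ : ℝ → ℝ) (Ω : Set (EuclideanSpace ℝ (Fin n)))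
    (u : EuclideanSpace ℝ (Fin n) → ℝ) (lam : ℝ) : ℝ≥0∞ :=
  ∫⁻ x in Ω, ∫⁻ y in Ω,
    ENNReal.ofReal (φ (|u x - u y| / lam) / dist x y ^ ((n : ℝ) + β))

/-- The fractional Orlicz–Sobolev (Luxemburg-type) seminorm `‖u‖_{Ẇ^{β,φ}(Ω)}`,
valued in `[0,∞]` (it is `∞` iff no admissible `λ` exists). -/
def fracNorm (n : ℕ) (β : ℝ) (φ : ℝ → ℝ) (Ω : Set (EuclideanSpace ℝ (Fin n)))
    (u : EuclideanSpace ℝ (Fin n) → ℝ) : ℝ≥0∞ :=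
  sInf {lam : ℝ≥0∞ | 0 < lam ∧ lam ≠ ∞ ∧ fracIntegral n β φ Ω u lam.toReal ≤ 1}

/-- `u ∈ Ẇ^{β,φ}(Ω)` : locally integrable on `Ω` with finite seminorm. -/
def MemW (n : ℕ) (β : ℝ) (φ : ℝ → ℝ) (Ω : Set (EuclideanSpace ℝ (Fin n)))
    (u : EuclideanSpace ℝ (Fin n) → ℝ) : Prop :=
  LocallyIntegrableOn u Ω ∧ fracNorm n β φ Ω u ≠ ∞

/-- The Orlicz (Luxemburg) norm `‖u‖_{L^ψ(Ω)}`, valued in `[0,∞]`. -/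
def luxNorm (n : ℕ) (ψ : ℝ → ℝ) (Ω : Set (EuclideanSpace ℝ (Fin n)))
    (u : EuclideanSpace ℝ (Fin n) → ℝ) : ℝ≥0∞ :=
  sInf {lam : ℝ≥0∞ | 0 < lam ∧ lam ≠ ∞ ∧
    (∫⁻ x in Ω, ENNReal.ofReal (ψ (|u x| / lam.toReal))) ≤ 1}

/-- `Ω` is Ahlfors `n`-regular: `|B(x,r) ∩ Ω| ≥ θ rⁿ` for all `x ∈ Ω`, `0 < r < 2 diam Ω`. -/
def AhlforsRegular (n : ℕ) (Ω : Set (EuclideanSpace ℝ (Fin n))) : Prop :=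
  ∃ θ > (0 : ℝ), ∀ x ∈ Ω, ∀ r : ℝ, 0 < r → ENNReal.ofReal r < 2 * EMetric.diam Ω →
    ENNReal.ofReal (θ * r ^ n) ≤ volume (Metric.ball x r ∩ Ω)

/-- `Ω` is a `Ẇ^{β,φ}`-extension domain: there are `C > 0` and a linear operator `E`
from `Ẇ^{β,φ}(Ω)` to `Ẇ^{β,φ}(ℝⁿ)` with `Eu = u` a.e. on `Ω` and
`‖Eu‖_{Ẇ^{β,φ}(ℝⁿ)} ≤ C ‖u‖_{Ẇ^{β,φ}(Ω)}`. -/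
def IsExtensionDomain (n : ℕ) (β : ℝ) (φ : ℝ → ℝ)
    (Ω : Set (EuclideanSpace ℝ (Fin n))) : Prop :=
  ∃ C > (0 : ℝ), ∃ E : (EuclideanSpace ℝ (Fin n) → ℝ) → (EuclideanSpace ℝ (Fin n) → ℝ),
    (∀ u v, MemW n β φ Ω u → MemW n β φ Ω v → E (u + v) = E u + E v) ∧
    (∀ (c : ℝ) (u), MemW n β φ Ω u → E (c • u) = c • E u) ∧
    (∀ u, MemW n β φ Ω u →
      MemW n β φ Set.univ (E u) ∧
      (∀ᵐ x ∂(volume.restrict Ω), E u x = u x) ∧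
      fracNorm n β φ Set.univ (E u) ≤ ENNReal.ofReal C * fracNorm n β φ Ω u)

end

/-! ### Young functions -/

/-- The even, `[0,∞]`-valued version `t ↦ φ(|t|)` of a Young function. -/
noncomputable def Phi (φ : ℝ → ℝ) (t : ℝ) : ℝ≥0∞ := ENNReal.ofReal (φ |t|)

section Young

variable {φ : ℝ → ℝ} {K : ℝ}

lemma IsYoung.nonneg (h : IsYoung φ) {t : ℝ} (ht : 0 ≤ t) : 0 ≤ φ t := by
  rcases ht.eq_or_lt with rfl | h0
  · exact h.2.2.1.ge
  · exact (h.2.2.2 t h0).le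

lemma IsYoung.scale (h : IsYoung φ) {c t : ℝ} (hc : 0 ≤ c) (hc1 : c ≤ 1) (ht : 0 ≤ t) :
    φ (c * t) ≤ c * φ t := by
  have := h.2.1.2 ht (mem_Ici.2 le_rfl : (0:ℝ) ∈ Ici (0:ℝ)) hc (sub_nonneg.2 hc1) (by ring)
  simpa [h.2.2.1] using this

lemma IsYoung.mono (h : IsYoung φ) {s t : ℝ} (hs : 0 ≤ s) (hst : s ≤ t) : φ s ≤ φ t := by
  rcases hst.eq_or_lt with rfl | hlt
  · exact le_rfl
  have ht : 0 < t := hs.trans_lt hlt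
  have h1 := h.scale (c := s / t) (t := t) (by positivity) ((div_le_one ht).2 hst) ht.le
  rw [div_mul_cancel₀ _ ht.ne'] at h1
  have h2 : s / t * φ t ≤ 1 * φ t :=
    mul_le_mul_of_nonneg_right ((div_le_one ht).2 hst) (h.nonneg ht.le)
  linarith

lemma IsYoung.continuous_abs (h : IsYoung φ) : Continuous fun t => φ |t| :=
  h.1.comp_continuous _root_.continuous_abs (fun x => abs_nonneg x)

lemma IsYoung.dbl (h : IsYoung φ) (hK : IsDoubling φ K) {t : ℝ} (ht : 0 ≤ t) :
    φ (2 * t) ≤ K * φ t := by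
  rcases ht.eq_or_lt with rfl | h0
  · simp [h.2.2.1]
  · exact hK.2 t h0

lemma IsYoung.dbl_pow (h : IsYoung φ) (hK : IsDoubling φ K) {t : ℝ} (ht : 0 ≤ t) (m : ℕ) :
    φ (2 ^ m * t) ≤ K ^ m * φ t := by
  induction m with
  | zero => simp
  | succ m ih =>
    have h1 := h.dbl hK (t := 2 ^ m * t) (by positivity)
    have h2 : (2:ℝ) ^ (m + 1) * t = 2 * (2 ^ m * t) := by ring
    rw [h2]
    calc _ ≤ K * φ (2 ^ m * t) := h1
      _ ≤ K * (K ^ m * φ t) := mul_le_mul_of_nonneg_left ih (by linarith [hK.1])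
      _ = _ := by ring

/-- Doubling makes `φ` grow at most like the power `log₂ K`. -/
lemma IsYoung.mul_le_rpow (h : IsYoung φ) (hK : IsDoubling φ K) {s t : ℝ} (hs : 1 ≤ s)
    (ht : 0 ≤ t) : φ (s * t) ≤ K * s ^ (Real.logb 2 K) * φ t := by
  obtain ⟨m, hm1, hm2⟩ := exists_nat_pow_near hs (one_lt_two : (1:ℝ) < 2)
  have hK0 : 0 < K := by linarith [hK.1]
  have hp : 0 ≤ Real.logb 2 K := Real.logb_nonneg one_lt_two hK.1.le
  have h1 : φ (s * t) ≤ φ (2 ^ (m + 1) * t) :=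
    h.mono (by positivity) (mul_le_mul_of_nonneg_right hm2.le ht)
  have h2 := h.dbl_pow hK ht (m + 1)
  have h3 : K ^ m ≤ s ^ (Real.logb 2 K) := by
    have : K ^ m = ((2:ℝ) ^ m) ^ (Real.logb 2 K) := by
      rw [← Real.rpow_natCast 2 m, ← Real.rpow_mul (by norm_num), mul_comm, Real.rpow_mul (by norm_num),
        Real.rpow_logb (by norm_num) (by norm_num) hK0, Real.rpow_natCast]
    rw [this]
    exact Real.rpow_le_rpow (by positivity) hm1 hp
  calc _ ≤ K ^ (m + 1) * φ t := h1.trans h2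
    _ = K * K ^ m * φ t := by ring
    _ ≤ _ := by
      have := h.nonneg ht
      gcongr

lemma IsYoung.exists_eq (h : IsYoung φ) : ∀ y : ℝ, 0 < y → ∃ t > 0, φ t = y := by
  intro y hy
  have h1 := h.2.2.2 1 one_pos
  set T := max 1 (y / φ 1)
  have hT : 1 ≤ T := le_max_left _ _
  have hyT : y ≤ φ T := by
    have h2 := h.scale (c := 1 / T) (t := T) (by positivity) (by rw [div_le_one (by positivity)]; exact hT) (by positivity)
    rw [one_div_mul_cancel (by positivity), one_div_mul_eq_div, le_div_iff₀ (by positivity)] at h2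
    have h3 : y / φ 1 ≤ T := le_max_right _ _
    rw [div_le_iff₀ h1] at h3
    linarith
  have := intermediate_value_Icc (by positivity : (0:ℝ) ≤ T) (h.1.mono Icc_subset_Ici_self)
  obtain ⟨t, ht, hty⟩ := this (show y ∈ Icc (φ 0) (φ T) from ⟨by rw [h.2.2.1]; exact hy.le, hyT⟩)
  refine ⟨t, lt_of_le_of_ne ht.1 ?_, hty⟩
  rintro rfl
  rw [h.2.2.1] at hty
  exact hy.ne hty

lemma measurable_Phi (h : IsYoung φ) : Measurable (Phi φ) :=
  h.continuous_abs.measurable.ennreal_ofReal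

lemma Phi_ne_top (t : ℝ) : Phi φ t ≠ ∞ := ENNReal.ofReal_ne_top

lemma Phi_zero (h : IsYoung φ) : Phi φ 0 = 0 := by simp [Phi, h.2.2.1]

lemma Phi_neg (t : ℝ) : Phi φ (-t) = Phi φ t := by simp [Phi]

lemma Phi_sub_comm (s t : ℝ) : Phi φ (s - t) = Phi φ (t - s) := by
  rw [← Phi_neg, neg_sub]

lemma Phi_abs (t : ℝ) : Phi φ |t| = Phi φ t := by simp [Phi]

lemma Phi_mono (h : IsYoung φ) {s t : ℝ} (hst : |s| ≤ |t|) : Phi φ s ≤ Phi φ t :=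
  ENNReal.ofReal_le_ofReal (h.mono (abs_nonneg _) hst)

lemma Phi_mul_le (h : IsYoung φ) (hK : IsDoubling φ K) (c : ℝ) :
    ∃ C : ℝ≥0, 0 < C ∧ ∀ s t : ℝ, |s| ≤ |c * t| → Phi φ s ≤ C * Phi φ t := by
  set c' := max 1 |c|
  have hc1 : 1 ≤ c' := le_max_left _ _
  have hK0 : 0 < K := by linarith [hK.1]
  have hpos : 0 < K * c' ^ (Real.logb 2 K) := by positivity
  refine ⟨(K * c' ^ (Real.logb 2 K)).toNNReal, Real.toNNReal_pos.2 hpos, fun s t hst => ?_⟩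
  change _ ≤ ENNReal.ofReal _ * _
  rw [Phi, Phi, ← ENNReal.ofReal_mul hpos.le]
  refine ENNReal.ofReal_le_ofReal (le_trans (h.mono (abs_nonneg _) ?_) (h.mul_le_rpow hK hc1 (abs_nonneg t)))
  rw [abs_mul] at hst
  exact hst.trans (mul_le_mul_of_nonneg_right (le_max_right _ _) (abs_nonneg _))

/-- A nearly sharp triangle inequality: the factor in front of `Φ(s)` can be taken as close to `1`
as desired, at the cost of a large factor in front of `Φ(t)`. -/
lemma Phi_add_eps (h : IsYoung φ) (hK : IsDoubling φ K) (q : ℝ≥0) (hq : 1 < q) :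
    ∃ C : ℝ≥0, ∀ s t : ℝ, Phi φ (s + t) ≤ q * Phi φ s + C * Phi φ t := by
  have hK1 := hK.1
  have hq' : (1:ℝ) < q := by exact_mod_cast hq
  set η : ℝ := min 1 ((q - 1) / K) with hη
  have hη0 : 0 < η := lt_min one_pos (div_pos (by linarith) (by linarith))
  have hη1 : η ≤ 1 := min_le_left _ _
  have hηK : η * K ≤ q - 1 := by
    rw [← le_div_iff₀ (by linarith)]; exact min_le_right _ _
  obtain ⟨C, -, hC⟩ := Phi_mul_le h hK (1 + 1 / η)
  refine ⟨C, fun s t => ?_⟩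
  by_cases hst : |t| ≤ η * |s|
  · refine le_trans ?_ le_self_add
    have hq0 : (q : ℝ≥0∞) = ENNReal.ofReal q := by simp
    rw [hq0, Phi, Phi, ← ENNReal.ofReal_mul (by positivity)]
    apply ENNReal.ofReal_le_ofReal
    have h1 : φ |s + t| ≤ φ ((1 + η) * |s|) :=
      h.mono (abs_nonneg _) ((abs_add_le s t).trans (by linarith))
    have h2 := h.2.1.2 (abs_nonneg s : |s| ∈ Ici (0:ℝ)) (by simp : 2 * |s| ∈ Ici (0:ℝ))
      (sub_nonneg.2 hη1) hη0.le (by ring)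
    simp only [smul_eq_mul] at h2
    have h3 := h.dbl hK (abs_nonneg s)
    have h4 : (1 - η) * |s| + η * (2 * |s|) = (1 + η) * |s| := by ring
    rw [h4] at h2
    have h5 := h.nonneg (abs_nonneg s)
    nlinarith [mul_le_mul_of_nonneg_left h3 hη0.le, mul_le_mul_of_nonneg_right hηK h5,
      mul_nonneg hη0.le h5]
  · refine le_trans (hC _ t ?_) le_add_self
    push Not at hst
    have : |s| ≤ 1 / η * |t| := by
      rw [one_div, ← div_eq_inv_mul, le_div_iff₀ hη0]; linarith
    rw [abs_mul, abs_of_pos (by positivity : 0 < 1 + 1 / η)]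
    calc _ ≤ |s| + |t| := abs_add_le _ _
      _ ≤ _ := by linarith

lemma Phi_add_le (h : IsYoung φ) (hK : IsDoubling φ K) :
    ∃ C : ℝ≥0, ∀ s t : ℝ, Phi φ (s + t) ≤ C * (Phi φ s + Phi φ t) := by
  obtain ⟨C, hC⟩ := Phi_add_eps h hK 2 one_lt_two
  refine ⟨2 + C, fun s t => (hC s t).trans ?_⟩
  rw [mul_add]
  push_cast
  gcongr
  · exact le_self_add
  · exact le_add_self

lemma Phi_add3_le (h : IsYoung φ) (hK : IsDoubling φ K) :
    ∃ C : ℝ≥0, ∀ s t r : ℝ, Phi φ (s + t + r) ≤ C * (Phi φ s + Phi φ t + Phi φ r) := by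
  obtain ⟨C, hC⟩ := Phi_add_le h hK
  refine ⟨C * (C + 1), fun s t r => (hC _ _).trans ?_⟩
  push_cast
  rw [mul_assoc]
  gcongr
  calc _ ≤ C * (Phi φ s + Phi φ t) + Phi φ r := by gcongr; exact hC _ _
    _ ≤ C * (Phi φ s + Phi φ t + Phi φ r) + (Phi φ s + Phi φ t + Phi φ r) := by
      refine add_le_add (mul_le_mul_right ?_ _) ?_
      · exact le_self_add
      · exact le_add_self
    _ = _ := by ring

end Young

/-! ### Jensen's inequality and kernels with vanishing integral -/

section Jensen

variable {α : Type*} [MeasurableSpace α] {φ : ℝ → ℝ}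

lemma Phi_integral_le (h : IsYoung φ) {μ : Measure α} [IsProbabilityMeasure μ] {f : α → ℝ}
    (hf : Integrable f μ) : Phi φ (∫ x, f x ∂μ) ≤ ∫⁻ x, Phi φ (f x) ∂μ := by
  have h0 : Phi φ (∫ x, f x ∂μ) ≤ Phi φ (∫ x, |f x| ∂μ) := by
    apply Phi_mono h
    rw [abs_of_nonneg (integral_nonneg fun x => abs_nonneg (f x) : 0 ≤ ∫ x, |f x| ∂μ)]
    exact abs_integral_le_integral_abs
  refine h0.trans ?_
  have hm : AEStronglyMeasurable (fun x => φ |f x|) μ :=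
    h.continuous_abs.comp_aestronglyMeasurable hf.1
  have hnn : ∀ x, 0 ≤ φ |f x| := fun x => h.nonneg (abs_nonneg _)
  by_cases hi : Integrable (fun x => φ |f x|) μ
  · have := h.2.1.map_integral_le h.1 isClosed_Ici
      (f := fun x => |f x|) (ae_of_all _ fun x => abs_nonneg (f x)) hf.abs hi
    rw [Phi, abs_of_nonneg (integral_nonneg fun x => abs_nonneg (f x))]
    refine (ENNReal.ofReal_le_ofReal this).trans ?_
    change ENNReal.ofReal (∫ x, φ |f x| ∂μ) ≤ _
    rw [ofReal_integral_eq_lintegral_ofReal hi (ae_of_all _ hnn)]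
    rfl
  · have : ∫⁻ x, Phi φ (f x) ∂μ = ∞ := by
      by_contra hne
      exact hi ⟨hm, (hasFiniteIntegral_iff_ofReal (ae_of_all _ hnn)).2 (lt_top_iff_ne_top.2 hne)⟩
    rw [this]
    exact le_top

lemma Phi_average_le (h : IsYoung φ) {μ : Measure α} [IsFiniteMeasure μ] (hμ : μ ≠ 0) {f : α → ℝ}
    (hf : Integrable f μ) : Phi φ (⨍ x, f x ∂μ) ≤ (μ univ)⁻¹ * ∫⁻ x, Phi φ (f x) ∂μ := by
  have : NeZero μ := ⟨hμ⟩
  have h1 : (μ univ)⁻¹ ≠ ∞ := by simpa using hμ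
  have := Phi_integral_le h (μ := (μ univ)⁻¹ • μ) (hf.smul_measure h1)
  rw [lintegral_smul_measure] at this
  simpa [average] using this

/-- Against a kernel `k` with mean zero only the differences of `u` matter; the double average of
`Φ(differences)` then controls `Φ(∫ k u)` by Jensen's inequality. -/
lemma Phi_kernel_le (h : IsYoung φ) {μ : Measure α} [IsFiniteMeasure μ] (hμ : μ ≠ 0) {u k : α → ℝ}
    (hu : Integrable u μ) (hk : AEStronglyMeasurable k μ) {M : ℝ} (hM : ∀ x, |k x| ≤ M)
    (hk0 : ∫ x, k x ∂μ = 0) :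
    Phi φ (∫ x, k x * u x ∂μ) ≤
      (μ univ)⁻¹ * (μ univ)⁻¹ * ∫⁻ z, ∫⁻ w, Phi φ (M * μ.real univ * (u z - u w)) ∂μ ∂μ := by
  have hm : 0 < μ.real univ := by
    rw [measureReal_def]
    exact ENNReal.toReal_pos (by simpa using hμ) (measure_ne_top _ _)
  set m := μ.real univ with hmdef
  have hki : Integrable k μ :=
    Integrable.of_bound hk M (ae_of_all _ fun x => by simpa using hM x)
  have hku : Integrable (fun x => k x * u x) μ :=
    hu.bdd_mul hk (ae_of_all _ fun x => (by simpa using hM x : ‖k x‖ ≤ M))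
  have hone : Integrable (fun _ : α => (1:ℝ)) μ := integrable_const 1
  have hI1 : Integrable (fun p : α × α => (k p.1 * u p.1) * 1) (μ.prod μ) := hku.mul_prod hone
  have hI2 : Integrable (fun p : α × α => k p.1 * u p.2) (μ.prod μ) := hki.mul_prod hu
  have hval : ∫ p : α × α, m * (k p.1 * (u p.1 - u p.2)) ∂(μ.prod μ)
      = m * m * ∫ x, k x * u x ∂μ := by
    have : (fun p : α × α => m * (k p.1 * (u p.1 - u p.2))) =
        fun p => m * ((k p.1 * u p.1) * 1 - k p.1 * u p.2) := by
      funext p; ring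
    rw [this, integral_const_mul, integral_sub hI1 hI2,
      integral_prod_mul (fun x => k x * u x) (fun _ => (1:ℝ)), integral_prod_mul k u, hk0]
    simp [hmdef]
    ring
  have h_int : Integrable (fun p : α × α => m * (k p.1 * (u p.1 - u p.2))) (μ.prod μ) := by
    have : (fun p : α × α => m * (k p.1 * (u p.1 - u p.2))) =
        fun p => m * ((k p.1 * u p.1) * 1 - k p.1 * u p.2) := by
      funext p; ring
    rw [this]
    exact (hI1.sub hI2).const_mul m
  have hprod : μ.prod μ ≠ 0 := by
    intro h0
    have : (μ.prod μ) univ = 0 := by rw [h0]; simp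
    rw [← univ_prod_univ, Measure.prod_prod] at this
    simp at this
    exact hμ this
  have key := Phi_average_le h hprod h_int
  have hav : ⨍ p : α × α, m * (k p.1 * (u p.1 - u p.2)) ∂(μ.prod μ) = ∫ x, k x * u x ∂μ := by
    rw [average_eq, hval, ← univ_prod_univ, measureReal_prod_prod, ← hmdef, smul_eq_mul]
    field_simp
  rw [hav] at key
  refine key.trans ?_
  have hmeas : AEMeasurable (fun p : α × α => Phi φ (M * m * (u p.1 - u p.2))) (μ.prod μ) := by
    refine (measurable_Phi h).comp_aemeasurable ?_
    have := hu.1.comp_fst (ν := μ)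
    have := hu.1.comp_snd (μ := μ)
    fun_prop
  have hM0 : ∀ x : α, 0 ≤ M := fun x => (abs_nonneg _).trans (hM x)
  have e1 : ((μ.prod μ) univ)⁻¹ = (μ univ)⁻¹ * (μ univ)⁻¹ := by
    rw [← univ_prod_univ, Measure.prod_prod]
    exact ENNReal.mul_inv (Or.inr (measure_ne_top _ _)) (Or.inl (measure_ne_top _ _))
  rw [e1, ← lintegral_prod _ hmeas]
  gcongr with p
  apply Phi_mono h
  rw [abs_mul, abs_mul, abs_mul, abs_mul, abs_of_nonneg (hM0 p.1)]
  have := hM p.1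
  calc |m| * (|k p.1| * |u p.1 - u p.2|) ≤ |m| * (M * |u p.1 - u p.2|) := by gcongr
    _ = _ := by ring

end Jensen

section AverageDiff

variable {E : Type*} [MeasurableSpace E] {μ : Measure E} {φ : ℝ → ℝ}

/-- Averages over two large portions of `B` differ by at most a double average over `B`. -/
lemma Phi_average_sub_le (h : IsYoung φ) {u : E → ℝ} {B B' B'' : Set E} (hB' : MeasurableSet B')
    (hB'' : MeasurableSet B'') (h1 : B' ⊆ B) (h2 : B'' ⊆ B)
    (hfin : μ B ≠ ∞) {c : ℝ} (hc : 0 < c) (hBpos : 0 < μ.real B)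
    (h3 : c * μ.real B ≤ μ.real B') (h4 : c * μ.real B ≤ μ.real B'') (hu : IntegrableOn u B μ) :
    Phi φ ((⨍ z in B', u z ∂μ) - ⨍ z in B'', u z ∂μ) ≤
      (μ B)⁻¹ * (μ B)⁻¹ * ∫⁻ z in B, ∫⁻ w in B, Phi φ (2 / c * (u z - u w)) ∂μ ∂μ := by
  have hp' : 0 < μ.real B' := lt_of_lt_of_le (by positivity) h3
  have hp'' : 0 < μ.real B'' := lt_of_lt_of_le (by positivity) h4
  have : IsFiniteMeasure (μ.restrict B) := ⟨by simpa using lt_top_iff_ne_top.2 hfin⟩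
  have hμ : μ.restrict B ≠ 0 := by
    intro h0
    rw [Measure.restrict_eq_zero] at h0
    simp [measureReal_def, h0] at hBpos
  set k : E → ℝ := fun z => B'.indicator (fun _ => (μ.real B')⁻¹) z
    - B''.indicator (fun _ => (μ.real B'')⁻¹) z with hk
  have hkm : Measurable k :=
    (measurable_const.indicator hB').sub (measurable_const.indicator hB'')
  have r1 : (μ.restrict B).restrict B' = μ.restrict B' := by
    rw [Measure.restrict_restrict hB', inter_eq_self_of_subset_left h1]
  have r2 : (μ.restrict B).restrict B'' = μ.restrict B'' := by
    rw [Measure.restrict_restrict hB'', inter_eq_self_of_subset_left h2]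
  have i1 : Integrable (B'.indicator (fun _ => (μ.real B')⁻¹)) (μ.restrict B) :=
    (integrable_const _).indicator hB'
  have i2 : Integrable (B''.indicator (fun _ => (μ.real B'')⁻¹)) (μ.restrict B) :=
    (integrable_const _).indicator hB''
  have hk0 : ∫ x in B, k x ∂μ = 0 := by
    rw [hk, integral_sub i1 i2, integral_indicator hB', integral_indicator hB'', r1, r2]
    simp [hp'.ne', hp''.ne']
  have hMb : ∀ x, |k x| ≤ 2 / (c * μ.real B) := by
    intro x
    have b1 : (μ.real B')⁻¹ ≤ (c * μ.real B)⁻¹ := inv_anti₀ (by positivity) h3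
    have b2 : (μ.real B'')⁻¹ ≤ (c * μ.real B)⁻¹ := inv_anti₀ (by positivity) h4
    have p1 : 0 < (μ.real B')⁻¹ := by positivity
    have p2 : 0 < (μ.real B'')⁻¹ := by positivity
    have e : 2 / (c * μ.real B) = (c * μ.real B)⁻¹ + (c * μ.real B)⁻¹ := by ring
    rw [e, abs_le]
    simp only [hk, indicator]
    split_ifs <;> constructor <;> linarith
  have hval : ∫ x in B, k x * u x ∂μ = (⨍ z in B', u z ∂μ) - ⨍ z in B'', u z ∂μ := by
    have e : (fun x => k x * u x) = fun x => B'.indicator (fun z => (μ.real B')⁻¹ * u z) x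
        - B''.indicator (fun z => (μ.real B'')⁻¹ * u z) x := by
      funext x
      simp only [hk, indicator]
      split_ifs <;> ring
    rw [e, integral_sub ((hu.const_mul _).indicator hB') ((hu.const_mul _).indicator hB''),
      integral_indicator hB', integral_indicator hB'', r1, r2, integral_const_mul,
      integral_const_mul, setAverage_eq, setAverage_eq]
    simp
  have := Phi_kernel_le h hμ hu hkm.aestronglyMeasurable hMb hk0
  rw [hval] at this
  have e : 2 / (c * μ.real B) * (μ.restrict B).real univ = 2 / c := by
    simp only [measureReal_restrict_apply_univ]
    field_simp
  rw [e] at this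
  simpa using this

end AverageDiff

/-! ### The modular, volumes of balls, dyadic sums -/

/-- Euclidean space `ℝⁿ`. -/
abbrev EE (n : ℕ) := EuclideanSpace ℝ (Fin n)

/-- The singular kernel `r^{-n-β}`; its value at `r = 0` is `0`. -/
noncomputable def kr (n : ℕ) (β r : ℝ) : ℝ≥0∞ := ENNReal.ofReal (r ^ (-((n : ℝ) + β)))

/-- The modular `∫_Ω ∫_Ω Φ(u(x)-u(y)) |x-y|^{-n-β} dx dy`. -/
noncomputable def modI (n : ℕ) (β : ℝ) (φ : ℝ → ℝ) (Ω : Set (EE n)) (u : EE n → ℝ) : ℝ≥0∞ :=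
  ∫⁻ x in Ω, ∫⁻ y in Ω, Phi φ (u x - u y) * kr n β (dist x y)

/-- The volume of the unit ball of `ℝⁿ`. -/
noncomputable def om (n : ℕ) : ℝ≥0 := (volume (ball (0 : EE n) 1)).toNNReal

/-- The dyadic power `2^{-kγ}`. -/
noncomputable def dy (γ : ℝ) (k : ℤ) : ℝ≥0∞ := ENNReal.ofReal (((2 : ℝ) ^ k) ^ (-γ))

section Basics

variable {n : ℕ} {β : ℝ} {φ : ℝ → ℝ}

lemma fracIntegral_eq_modI (Ω : Set (EE n)) (u : EE n → ℝ) {lam : ℝ} (hl : 0 < lam) :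
    fracIntegral n β φ Ω u lam = modI n β φ Ω (fun x => u x / lam) := by
  unfold fracIntegral modI Phi kr
  congr! 5 with x y
  rw [← ENNReal.ofReal_mul' (by positivity), Real.rpow_neg dist_nonneg, div_eq_mul_inv]
  congr 3
  rw [← sub_div, abs_div, abs_of_pos hl]

lemma om_pos : 0 < om n := by
  apply ENNReal.toNNReal_pos
  · exact (measure_ball_pos volume _ one_pos).ne'
  · exact measure_ball_lt_top.ne

lemma volume_ball_eq (x : EE n) {r : ℝ} (hr : 0 < r) :
    volume (ball x r) = ENNReal.ofReal (r ^ n) * om n := by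
  rw [om, ENNReal.coe_toNNReal measure_ball_lt_top.ne, Measure.addHaar_ball_of_pos _ _ hr]
  simp

lemma volume_real_ball_eq (x : EE n) {r : ℝ} (hr : 0 < r) :
    volume.real (ball x r) = r ^ n * om n := by
  rw [measureReal_def, volume_ball_eq x hr, ENNReal.toReal_mul, ENNReal.toReal_ofReal (by positivity)]
  simp

lemma kr_anti (hβ : 0 < β) {r s : ℝ} (hr : 0 < r) (hrs : r ≤ s) : kr n β s ≤ kr n β r :=
  ENNReal.ofReal_le_ofReal (Real.rpow_le_rpow_of_nonpos hr hrs (by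
    have : (0:ℝ) ≤ n := n.cast_nonneg
    linarith))

lemma kr_ne_top (r : ℝ) : kr n β r ≠ ∞ := ENNReal.ofReal_ne_top

lemma kr_mul {a r : ℝ} (ha : 0 ≤ a) (hr : 0 ≤ r) : kr n β (a * r) = kr n β a * kr n β r := by
  unfold kr
  rw [Real.mul_rpow ha hr, ENNReal.ofReal_mul (by positivity)]

lemma kr_mul_pow {r : ℝ} (hr : 0 < r) :
    kr n β r * ENNReal.ofReal (r ^ n) = ENNReal.ofReal (r ^ (-β)) := by
  unfold kr
  rw [← ENNReal.ofReal_mul (by positivity), ← Real.rpow_natCast, ← Real.rpow_add hr]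
  congr 2
  ring

lemma kr_pos {r : ℝ} (hr : 0 < r) : 0 < kr n β r := by
  unfold kr
  rw [ENNReal.ofReal_pos]
  positivity

lemma measurable_kr : Measurable (kr n β) := by
  unfold kr
  fun_prop

lemma dy_ne_top (γ : ℝ) (k : ℤ) : dy γ k ≠ ∞ := ENNReal.ofReal_ne_top

lemma dy_ne_zero (γ : ℝ) (k : ℤ) : dy γ k ≠ 0 := by
  unfold dy
  rw [Ne, ENNReal.ofReal_eq_zero, not_le]
  positivity

lemma dy_add (a b : ℝ) (k : ℤ) : dy (a + b) k = dy a k * dy b k := by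
  unfold dy
  rw [← ENNReal.ofReal_mul (by positivity), ← Real.rpow_add (by positivity)]
  congr 2
  ring

lemma dy_shift (a : ℝ) (k j : ℤ) : dy a (k + j) = dy a k * dy a j := by
  unfold dy
  rw [zpow_add₀ two_ne_zero, Real.mul_rpow (by positivity) (by positivity),
    ENNReal.ofReal_mul (by positivity)]

lemma dy_zero (k : ℤ) : dy 0 k = 1 := by simp [dy]

lemma dy_nat (m : ℕ) (k : ℤ) : ENNReal.ofReal (((2:ℝ) ^ k) ^ m) = dy (-(m:ℝ)) k := by
  unfold dy
  rw [neg_neg, Real.rpow_natCast]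

lemma kr_zpow (k : ℤ) : kr n β ((2:ℝ) ^ k) = dy (n + β) k := rfl

lemma dy_toNNReal (a : ℝ) (k : ℤ) : ((dy a k).toNNReal : ℝ≥0∞) = dy a k :=
  ENNReal.coe_toNNReal (dy_ne_top _ _)

lemma tsum_geom_le {q : ℝ} (h0 : 0 ≤ q) (h1 : q < 1) :
    ∑' j : ℕ, ENNReal.ofReal (q ^ j) = ENNReal.ofReal (1 - q)⁻¹ := by
  rw [← ENNReal.ofReal_tsum_of_nonneg (fun j => by positivity)
    (summable_geometric_of_lt_one h0 h1), tsum_geometric_of_lt_one h0 h1]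

/-- The dyadic geometric sum `∑_{2^k > t} 2^{-kγ} ≲ t^{-γ}`. -/
lemma tsum_dy_le {γ : ℝ} (hγ : 0 < γ) :
    ∃ C : ℝ≥0, ∀ t : ℝ, 0 < t →
      ∑' k : ℤ, (if t < (2:ℝ) ^ k then dy γ k else 0) ≤ C * ENNReal.ofReal (t ^ (-γ)) := by
  have hq1 : (2:ℝ) ^ (-γ) < 1 := Real.rpow_lt_one_of_one_lt_of_neg one_lt_two (by linarith)
  refine ⟨(1 - (2:ℝ) ^ (-γ))⁻¹.toNNReal, fun t ht => ?_⟩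
  obtain ⟨k0, hk1, hk2⟩ := exists_mem_Ico_zpow ht (one_lt_two : (1:ℝ) < 2)
  have hinj : Function.Injective (fun j : ℕ => k0 + 1 + (j:ℤ)) := by
    intro a b hab
    simpa using hab
  rw [← hinj.tsum_eq]
  · have : ∀ j : ℕ, (if t < (2:ℝ) ^ (k0 + 1 + (j:ℤ)) then dy γ (k0 + 1 + (j:ℤ)) else 0) ≤
        ENNReal.ofReal (t ^ (-γ)) * ENNReal.ofReal (((2:ℝ) ^ (-γ)) ^ j) := by
      intro j
      split_ifs
      · rw [dy_shift]
        gcongr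
        · apply ENNReal.ofReal_le_ofReal
          exact Real.rpow_le_rpow_of_nonpos ht hk2.le (by linarith)
        · apply ENNReal.ofReal_le_ofReal
          rw [zpow_natCast, ← Real.rpow_natCast, ← Real.rpow_natCast, ← Real.rpow_mul (by norm_num),
            ← Real.rpow_mul (by norm_num), mul_comm]
      · exact zero_le
    refine (ENNReal.tsum_le_tsum this).trans ?_
    rw [ENNReal.tsum_mul_left, tsum_geom_le (by positivity) hq1, mul_comm]
    rfl
  · intro k hk
    rw [Function.mem_support, Ne, ite_eq_right_iff, Classical.not_imp] at hk
    have hlt : k0 < k := by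
      have := hk1.trans_lt hk.1
      exact (zpow_lt_zpow_iff_right₀ one_lt_two).1 this
    refine ⟨(k - (k0 + 1)).toNat, ?_⟩
    simp only
    omega

/-- A sequence that decays geometrically up to an error `b` is summable together with `b`. -/
lemma tsum_le_of_contract {s b : ℕ → ℝ≥0∞} {q : ℝ≥0} (hq : q < 1) (h0 : s 0 ≤ b 0)
    (hs : ∀ j, s (j + 1) ≤ q * s j + b (j + 1)) :
    ∑' j, s j ≤ (1 - q)⁻¹ * ∑' j, b j := by
  have hC : q * (1 - q)⁻¹ + 1 = (1 - q)⁻¹ := by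
    have h1 : (1 - q) ≠ 0 := (tsub_pos_of_lt hq).ne'
    have h2 : q + (1 - q) = 1 := add_tsub_cancel_of_le hq.le
    have h3 : (1 - q) * (1 - q)⁻¹ = 1 := mul_inv_cancel₀ h1
    calc q * (1 - q)⁻¹ + 1 = (q + (1 - q)) * (1 - q)⁻¹ := by rw [add_mul, h3]
      _ = _ := by rw [h2, one_mul]
  have hC' : (q : ℝ≥0∞) * ((1 - q)⁻¹ : ℝ≥0) + 1 = ((1 - q)⁻¹ : ℝ≥0) := by exact_mod_cast hC
  set C : ℝ≥0∞ := (((1 - q)⁻¹ : ℝ≥0) : ℝ≥0∞)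
  have hfin : ∀ N : ℕ, ∑ j ∈ Finset.range N, s j ≤ C * ∑' j, b j := by
    intro N
    induction N with
    | zero => simp
    | succ N ih =>
      rw [Finset.sum_range_succ']
      calc _ ≤ ∑ j ∈ Finset.range N, (q * s j + b (j + 1)) + b 0 := by
            gcongr with j
            exact hs j
        _ = q * ∑ j ∈ Finset.range N, s j + ∑ j ∈ Finset.range (N + 1), b j := by
            rw [Finset.sum_add_distrib, ← Finset.mul_sum, add_assoc, ← Finset.sum_range_succ']
        _ ≤ q * (C * ∑' j, b j) + ∑' j, b j := by
            gcongr
            exact ENNReal.sum_le_tsum _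
        _ = (q * C + 1) * ∑' j, b j := by ring
        _ = _ := by rw [hC']
  rw [ENNReal.tsum_eq_iSup_nat]
  exact iSup_le hfin

end Basics

section Integrability

variable {n : ℕ} {β : ℝ} {φ : ℝ → ℝ}

/-- Finite modular forces integrability on bounded pieces, up to the boundary of `Ω`. -/
lemma integrableOn_of_modI (h : IsYoung φ) (hβ : 0 < β) {Ω : Set (EE n)} (hΩ : MeasurableSet Ω)
    (hpos : volume Ω ≠ 0) {u : EE n → ℝ} (hu : AEStronglyMeasurable u (volume.restrict Ω))
    (hI : modI n β φ Ω u ≠ ∞) {s : Set (EE n)} (hsm : MeasurableSet s)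
    (hs : s ⊆ Ω) (hsb : Bornology.IsBounded s) :
    IntegrableOn u s := by
  obtain ⟨x0, hx0, hfin⟩ : ∃ x0 ∈ Ω, ∫⁻ y in Ω, Phi φ (u x0 - u y) * kr n β (dist x0 y) ≠ ∞ := by
    by_contra hcon
    push Not at hcon
    apply hI
    rw [modI, setLIntegral_congr_fun hΩ (g := fun _ => ∞) hcon]
    simp [hpos]
  obtain ⟨R, hR0, hR⟩ : ∃ R > 0, s ⊆ ball x0 R := by
    obtain ⟨R, hR⟩ := hsb.subset_ball x0
    exact ⟨max R 1, by positivity, hR.trans (ball_subset_ball (le_max_left _ _))⟩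
  have hμ : volume s ≠ ∞ := (hsb.measure_lt_top).ne
  have hmeas : AEStronglyMeasurable u (volume.restrict s) := hu.mono_measure (Measure.restrict_mono hs le_rfl)
  have hb : ∀ y ∈ s, Phi φ (u x0 - u y) ≤
      (kr n β R)⁻¹ * (Phi φ (u x0 - u y) * kr n β (dist x0 y)) := by
    intro y hy
    rcases eq_or_ne y x0 with rfl | hne
    · simp [Phi_zero h]
    · have hd : 0 < dist x0 y := dist_pos.2 hne.symm
      have h1 : kr n β R ≤ kr n β (dist x0 y) := kr_anti hβ hd (by rw [dist_comm]; exact (hR hy).le)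
      have h2 : (kr n β R)⁻¹ * kr n β R = 1 := ENNReal.inv_mul_cancel (kr_pos hR0).ne' (kr_ne_top _)
      calc Phi φ (u x0 - u y) = (kr n β R)⁻¹ * (Phi φ (u x0 - u y) * kr n β R) := by
            rw [mul_comm (Phi φ _), ← mul_assoc, h2, one_mul]
        _ ≤ _ := by gcongr
  have hfin2 : ∫⁻ y in s, Phi φ (u x0 - u y) ≠ ∞ := by
    have h1 : ∫⁻ y in s, Phi φ (u x0 - u y) ≤
        (kr n β R)⁻¹ * ∫⁻ y in Ω, Phi φ (u x0 - u y) * kr n β (dist x0 y) := by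
      rw [← lintegral_const_mul' _ _ (ENNReal.inv_ne_top.2 (kr_pos hR0).ne')]
      exact (setLIntegral_mono' hsm hb).trans (lintegral_mono_set hs)
    exact ne_top_of_le_ne_top (ENNReal.mul_ne_top (ENNReal.inv_ne_top.2 (kr_pos hR0).ne') hfin) h1
  have hφ1 := h.2.2.2 1 one_pos
  have h_int : IntegrableOn (fun y => φ |u x0 - u y|) s := by
    refine ⟨h.continuous_abs.comp_aestronglyMeasurable (aestronglyMeasurable_const.sub hmeas), ?_⟩
    rw [hasFiniteIntegral_iff_ofReal (ae_of_all _ fun y => h.nonneg (abs_nonneg _))]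
    exact lt_top_iff_ne_top.2 hfin2
  have hdom : IntegrableOn (fun y => (|u x0| + 1) + (φ 1)⁻¹ * φ |u x0 - u y|) s :=
    (integrableOn_const hμ).add (h_int.const_mul _)
  refine Integrable.mono' hdom hmeas (ae_of_all _ fun y => ?_)
  -- convexity gives `t ≤ 1 + φ(t)/φ(1)`
  have ht : ∀ t : ℝ, 0 ≤ t → t ≤ 1 + (φ 1)⁻¹ * φ t := by
    intro t ht
    have h0 := h.nonneg ht
    rcases le_or_gt t 1 with h1 | h1
    · have : 0 ≤ (φ 1)⁻¹ * φ t := by positivity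
      linarith
    · have h2 := h.scale (c := 1 / t) (t := t) (by positivity)
        ((div_le_one (by positivity)).2 h1.le) ht
      rw [one_div_mul_cancel (by positivity), one_div_mul_eq_div, le_div_iff₀ (by positivity)] at h2
      have : t ≤ (φ 1)⁻¹ * φ t := by
        rw [← div_eq_inv_mul, le_div_iff₀ hφ1]
        linarith
      linarith
  have h1 := ht _ (abs_nonneg (u x0 - u y))
  have h2 : |u y| ≤ |u x0| + |u x0 - u y| := by
    have := abs_sub_abs_le_abs_sub (u y) (u x0)
    rw [abs_sub_comm] at this
    linarith
  rw [Real.norm_eq_abs]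
  linarith

end Integrability

/-! ### Consequences of the condition on `C_β` -/

section Cbeta

variable {n : ℕ} {β : ℝ} {φ : ℝ → ℝ}

/-- The discrete form of the hypothesis on `C_β`: `∑_{j ≥ 1} 2^{jβ} φ(2^{-j} t) ≲ φ(t)`. -/
lemma tsum_Phi_le_pos (h : IsYoung φ) (hβ : 0 < β) (hC : CbetaFinite β φ) :
    ∃ C : ℝ≥0, ∀ t : ℝ, 0 < t →
      ∑' j : ℕ, ENNReal.ofReal (((2:ℝ) ^ j) ^ β) * Phi φ (t / 2 ^ (j + 1)) ≤ C * Phi φ t := by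
  obtain ⟨M, hM⟩ := hC
  refine ⟨2 * M.toNNReal, fun t ht => ?_⟩
  have hφt := h.2.2.2 t ht
  set I : ℕ → Set ℝ := fun j => Ioc (t / 2 ^ (j + 1)) (t / 2 ^ j) with hI
  have hdisj : Pairwise (Function.onFun Disjoint I) := by
    have hanti : Antitone (fun j : ℕ => t / (2:ℝ) ^ j) := by
      intro a b hab
      have : (2:ℝ) ^ a ≤ 2 ^ b := pow_le_pow_right₀ one_le_two hab
      dsimp only
      gcongr
    exact hanti.pairwise_disjoint_on_Ioc_succ
  have hsub : (⋃ j, I j) ⊆ Ioc 0 t := by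
    refine iUnion_subset fun j s hs => ⟨lt_trans (by positivity) hs.1, hs.2.trans ?_⟩
    exact div_le_self ht.le (one_le_pow₀ one_le_two)
  have h1 : ∑' j, ∫⁻ s in I j, ENNReal.ofReal (φ s / s ^ (β + 1)) ≤
      ∫⁻ s in Ioc 0 t, ENNReal.ofReal (φ s / s ^ (β + 1)) := by
    rw [← lintegral_iUnion (fun j => measurableSet_Ioc) hdisj]
    exact lintegral_mono_set hsub
  have h2 : ∀ j : ℕ, ENNReal.ofReal (t ^ (-β) / 2) *
      (ENNReal.ofReal (((2:ℝ) ^ j) ^ β) * Phi φ (t / 2 ^ (j + 1))) ≤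
      ∫⁻ s in I j, ENNReal.ofReal (φ s / s ^ (β + 1)) := by
    intro j
    have hp : (0:ℝ) < t / 2 ^ (j + 1) := by positivity
    have hp' : (0:ℝ) < t / 2 ^ j := by positivity
    have hφn := h.nonneg hp.le
    calc _ = ENNReal.ofReal (φ (t / 2 ^ (j + 1)) / (t / 2 ^ j) ^ (β + 1)) * volume (I j) := by
          rw [hI, Real.volume_Ioc, Phi, abs_of_pos hp, ← ENNReal.ofReal_mul (by positivity),
            ← ENNReal.ofReal_mul (by positivity), ← ENNReal.ofReal_mul (by positivity)]
          congr 1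
          rw [Real.rpow_add hp', Real.rpow_one, Real.div_rpow ht.le (by positivity),
            Real.rpow_neg ht.le, pow_succ]
          have : (0:ℝ) < t ^ β := by positivity
          have : (0:ℝ) < ((2:ℝ) ^ j) ^ β := by positivity
          field_simp
          ring
      _ = ∫⁻ s in I j, ENNReal.ofReal (φ (t / 2 ^ (j + 1)) / (t / 2 ^ j) ^ (β + 1)) := by simp
      _ ≤ _ := by
          refine setLIntegral_mono' measurableSet_Ioc fun s hs => ENNReal.ofReal_le_ofReal ?_
          have hs0 : 0 < s := hp.trans hs.1
          have a1 := h.mono hp.le hs.1.le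
          have a2 : s ^ (β + 1) ≤ (t / 2 ^ j) ^ (β + 1) :=
            Real.rpow_le_rpow hs0.le hs.2 (by linarith)
          have := h.nonneg hs0.le
          exact div_le_div₀ this a1 (by positivity) a2
  have h3 : ENNReal.ofReal (t ^ (-β) / 2) *
      ∑' j : ℕ, ENNReal.ofReal (((2:ℝ) ^ j) ^ β) * Phi φ (t / 2 ^ (j + 1)) ≤
      ∫⁻ s in Ioc 0 t, ENNReal.ofReal (φ s / s ^ (β + 1)) := by
    rw [← ENNReal.tsum_mul_left]
    exact (ENNReal.tsum_le_tsum h2).trans h1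
  have h4 := hM t ht
  set S := ∑' j : ℕ, ENNReal.ofReal (((2:ℝ) ^ j) ^ β) * Phi φ (t / 2 ^ (j + 1))
  have e : S = 2 * Phi φ t * (ENNReal.ofReal (t ^ β / φ t) * (ENNReal.ofReal (t ^ (-β) / 2) * S)) := by
    have e1 : (2:ℝ≥0∞) = ENNReal.ofReal 2 := by simp
    rw [Phi, abs_of_pos ht, ← mul_assoc, ← mul_assoc, e1, ← ENNReal.ofReal_mul (by positivity),
      ← ENNReal.ofReal_mul (by positivity), ← ENNReal.ofReal_mul (by positivity)]
    have : 2 * φ t * (t ^ β / φ t) * (t ^ (-β) / 2) = 1 := by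
      rw [Real.rpow_neg ht.le]
      have : (0:ℝ) < t ^ β := by positivity
      field_simp
    rw [this]
    simp
  rw [e]
  calc _ ≤ 2 * Phi φ t * ENNReal.ofReal M := by
        gcongr
        exact (mul_le_mul_right h3 _).trans h4
    _ = _ := by
        push_cast
        rw [ENNReal.ofReal]
        ring

lemma tsum_Phi_le (h : IsYoung φ) (hβ : 0 < β) (hC : CbetaFinite β φ) :
    ∃ C : ℝ≥0, ∀ t : ℝ,
      ∑' j : ℕ, ENNReal.ofReal (((2:ℝ) ^ j) ^ β) * Phi φ (t / 2 ^ j) ≤ C * Phi φ t := by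
  obtain ⟨C, hC⟩ := tsum_Phi_le_pos h hβ hC
  refine ⟨1 + ((2:ℝ) ^ β).toNNReal * C, fun t => ?_⟩
  rcases eq_or_ne t 0 with rfl | ht
  · simp [Phi_zero h]
  have h1 := hC |t| (abs_pos.2 ht)
  have h2 : ∀ m : ℕ, Phi φ (|t| / 2 ^ m) = Phi φ (t / 2 ^ m) := by
    intro m
    rw [Phi, Phi, abs_div, abs_div, abs_abs]
  simp only [h2, Phi_abs] at h1
  rw [tsum_eq_zero_add' ENNReal.summable]
  have h3 : ∀ j : ℕ, ENNReal.ofReal (((2:ℝ) ^ (j + 1)) ^ β) * Phi φ (t / 2 ^ (j + 1)) =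
      ENNReal.ofReal ((2:ℝ) ^ β) * (ENNReal.ofReal (((2:ℝ) ^ j) ^ β) * Phi φ (t / 2 ^ (j + 1))) := by
    intro j
    rw [← mul_assoc, ← ENNReal.ofReal_mul (by positivity), pow_succ,
      Real.mul_rpow (by positivity) (by positivity), mul_comm (((2:ℝ) ^ j) ^ β)]
  simp_rw [h3]
  rw [ENNReal.tsum_mul_left]
  push_cast
  rw [add_mul, mul_assoc]
  gcongr
  · simp
  · simp
  · exact le_of_eq rfl

/-- At scales below `ρ` the singular kernel is tamed by a Lipschitz factor `|x-y|/ρ`. -/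
lemma lintegral_ball_Phi_le (h : IsYoung φ) (hβ : 0 < β) (hC : CbetaFinite β φ) (n : ℕ) :
    ∃ C : ℝ≥0, ∀ (x : EE n) (ρ t : ℝ), 0 < ρ →
      ∫⁻ y in ball x ρ, Phi φ (dist x y / ρ * t) * kr n β (dist x y) ≤
        C * ENNReal.ofReal (ρ ^ (-β)) * Phi φ t := by
  obtain ⟨C, hC⟩ := tsum_Phi_le h hβ hC
  refine ⟨(kr n β (1/2)).toNNReal * (2 ^ n * om n) * C, fun x ρ t hρ => ?_⟩
  set F : ℕ → EE n → ℝ≥0∞ := fun j => (ball x (2 * (ρ / 2 ^ j))).indicator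
    (fun _ => Phi φ (t / 2 ^ j) * kr n β (1 / 2 * (ρ / 2 ^ j))) with hF
  have hFm : ∀ j, Measurable (F j) := fun j => measurable_const.indicator measurableSet_ball
  have hpt : ∀ y ∈ ball x ρ, Phi φ (dist x y / ρ * t) * kr n β (dist x y) ≤ ∑' j, F j y := by
    intro y hy
    rcases eq_or_ne x y with rfl | hne
    · simp [Phi_zero h]
    have hd : 0 < dist x y := dist_pos.2 hne
    have hdρ : dist x y < ρ := by rw [dist_comm]; exact hy
    obtain ⟨j, hj1, hj2⟩ := exists_nat_pow_near_of_lt_one (div_pos hd hρ)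
      ((div_le_one hρ).2 hdρ.le) (by norm_num : (0:ℝ) < 1 / 2) (by norm_num)
    have hj1' : 1 / 2 * (ρ / 2 ^ j) ≤ dist x y := by
      rw [lt_div_iff₀ hρ, pow_succ, one_div_pow] at hj1
      refine le_trans (le_of_eq ?_) hj1.le
      ring
    have hj2' : dist x y ≤ ρ / 2 ^ j := by
      rw [div_le_iff₀ hρ, one_div_pow] at hj2
      refine hj2.trans (le_of_eq ?_)
      ring
    refine le_trans ?_ (ENNReal.le_tsum j)
    have hmem : y ∈ ball x (2 * (ρ / 2 ^ j)) := by
      rw [mem_ball, dist_comm]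
      have : 0 < ρ / 2 ^ j := by positivity
      linarith
    rw [hF]
    simp only
    rw [indicator_of_mem hmem]
    gcongr
    · apply Phi_mono h
      rw [abs_mul, abs_div t, abs_of_pos (by positivity : (0:ℝ) < dist x y / ρ),
        abs_of_pos (by positivity : (0:ℝ) < 2 ^ j), div_eq_mul_one_div |t|, mul_comm,
        ← one_div_pow]
      gcongr
    · exact kr_anti hβ (by positivity) hj1'
  have h_int : ∀ j, ∫⁻ y, F j y = (kr n β (1/2)).toNNReal * (2 ^ n * om n) *
      ENNReal.ofReal (ρ ^ (-β)) * (ENNReal.ofReal (((2:ℝ) ^ j) ^ β) * Phi φ (t / 2 ^ j)) := by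
    intro j
    have hr : 0 < ρ / 2 ^ j := by positivity
    rw [hF]
    simp only
    rw [lintegral_indicator measurableSet_ball]
    simp only [lintegral_const, Measure.restrict_apply MeasurableSet.univ, univ_inter]
    rw [volume_ball_eq x (by positivity), kr_mul (by norm_num) hr.le, mul_pow,
      ENNReal.ofReal_mul (by positivity)]
    have e1 : ENNReal.ofReal (ρ ^ (-β)) * ENNReal.ofReal (((2:ℝ) ^ j) ^ β) =
        kr n β (ρ / 2 ^ j) * ENNReal.ofReal ((ρ / 2 ^ j) ^ n) := by
      rw [kr_mul_pow hr, ← ENNReal.ofReal_mul (by positivity), Real.div_rpow hρ.le (by positivity),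
        Real.rpow_neg (by positivity : (0:ℝ) ≤ 2 ^ j), div_inv_eq_mul]
    have e2 : ENNReal.ofReal ((2:ℝ) ^ n) = 2 ^ n := by
      rw [ENNReal.ofReal_pow (by norm_num)]
      simp
    rw [← mul_assoc _ (ENNReal.ofReal _) (Phi φ _), mul_assoc _ (ENNReal.ofReal (ρ ^ (-β))), e1, e2,
      ENNReal.coe_toNNReal (kr_ne_top _)]
    ring
  calc _ ≤ ∫⁻ y in ball x ρ, ∑' j, F j y := setLIntegral_mono' measurableSet_ball hpt
    _ ≤ ∫⁻ y, ∑' j, F j y := setLIntegral_le_lintegral _ _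
    _ = ∑' j, ∫⁻ y, F j y := lintegral_tsum fun j => (hFm j).aemeasurable
    _ ≤ _ := by
      simp_rw [h_int]
      rw [ENNReal.tsum_mul_left]
      push_cast
      calc _ ≤ _ := mul_le_mul_right (hC t) _
        _ = _ := by ring

lemma lintegral_compl_ball_kr_le (hβ : 0 < β) (n : ℕ) :
    ∃ C : ℝ≥0, ∀ (x : EE n) (ρ : ℝ), 0 < ρ →
      ∫⁻ y in (ball x ρ)ᶜ, kr n β (dist x y) ≤ C * ENNReal.ofReal (ρ ^ (-β)) := by
  have hq1 : (2:ℝ) ^ (-β) < 1 := Real.rpow_lt_one_of_one_lt_of_neg one_lt_two (by linarith)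
  refine ⟨2 ^ n * om n * (1 - (2:ℝ) ^ (-β))⁻¹.toNNReal, fun x ρ hρ => ?_⟩
  set F : ℕ → EE n → ℝ≥0∞ := fun j => (ball x (2 * (2 ^ j * ρ))).indicator
    (fun _ => kr n β (2 ^ j * ρ)) with hF
  have hFm : ∀ j, Measurable (F j) := fun j => measurable_const.indicator measurableSet_ball
  have hpt : ∀ y ∈ (ball x ρ)ᶜ, kr n β (dist x y) ≤ ∑' j, F j y := by
    intro y hy
    have hdρ : ρ ≤ dist x y := by
      rw [dist_comm]
      simpa using hy
    obtain ⟨j, hj1, hj2⟩ := exists_nat_pow_near ((one_le_div hρ).2 hdρ) (one_lt_two : (1:ℝ) < 2)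
    rw [le_div_iff₀ hρ] at hj1
    rw [div_lt_iff₀ hρ, pow_succ] at hj2
    refine le_trans ?_ (ENNReal.le_tsum j)
    have hmem : y ∈ ball x (2 * (2 ^ j * ρ)) := by
      rw [mem_ball, dist_comm]
      linarith
    rw [hF]
    simp only
    rw [indicator_of_mem hmem]
    exact kr_anti hβ (by positivity) hj1
  have h_int : ∀ j, ∫⁻ y, F j y = 2 ^ n * om n * ENNReal.ofReal (ρ ^ (-β)) *
      ENNReal.ofReal (((2:ℝ) ^ (-β)) ^ j) := by
    intro j
    have hr : 0 < 2 ^ j * ρ := by positivity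
    rw [hF]
    simp only
    rw [lintegral_indicator measurableSet_ball]
    simp only [lintegral_const, Measure.restrict_apply MeasurableSet.univ, univ_inter]
    rw [volume_ball_eq x (by positivity), mul_pow, ENNReal.ofReal_mul (by positivity)]
    have e1 : ENNReal.ofReal (ρ ^ (-β)) * ENNReal.ofReal (((2:ℝ) ^ (-β)) ^ j) =
        kr n β (2 ^ j * ρ) * ENNReal.ofReal ((2 ^ j * ρ) ^ n) := by
      rw [kr_mul_pow hr, ← ENNReal.ofReal_mul (by positivity), Real.mul_rpow (by positivity) hρ.le,
        mul_comm]
      congr 2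
      rw [← Real.rpow_natCast, ← Real.rpow_natCast, ← Real.rpow_mul (by norm_num),
        ← Real.rpow_mul (by norm_num), mul_comm]
    have e2 : ENNReal.ofReal ((2:ℝ) ^ n) = 2 ^ n := by
      rw [ENNReal.ofReal_pow (by norm_num)]
      simp
    rw [mul_assoc _ (ENNReal.ofReal (ρ ^ (-β))), e1, e2]
    ring
  calc _ ≤ ∫⁻ y in (ball x ρ)ᶜ, ∑' j, F j y := setLIntegral_mono' measurableSet_ball.compl hpt
    _ ≤ ∫⁻ y, ∑' j, F j y := setLIntegral_le_lintegral _ _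
    _ = ∑' j, ∫⁻ y, F j y := lintegral_tsum fun j => (hFm j).aemeasurable
    _ ≤ _ := by
      simp_rw [h_int]
      rw [ENNReal.tsum_mul_left, tsum_geom_le (by positivity) hq1]
      push_cast
      apply le_of_eq
      have e : ENNReal.ofReal (1 - (2:ℝ) ^ (-β))⁻¹ = ((1 - (2:ℝ) ^ (-β))⁻¹.toNNReal : ℝ≥0∞) := rfl
      rw [e]
      ring

end Cbeta

/-! ### Oscillation of averages on the whole space -/

section Necessity

variable {n : ℕ} {β K : ℝ} {φ : ℝ → ℝ}

/-- Summing along a chain whose steps decay geometrically in the modular. -/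
lemma Phi_chain (h : IsYoung φ) (hK : IsDoubling φ K) (θ : ℝ≥0) (hθ : θ < 1) :
    ∃ C : ℝ≥0, ∀ (m : ℕ) (g : ℕ → ℝ) (D : ℝ≥0∞),
      (∀ j, Phi φ (g j - g (j + 1)) ≤ D * θ ^ j) → Phi φ (g 0 - g m) ≤ C * D := by
  obtain ⟨q, hq1, hq2⟩ : ∃ q : ℝ≥0, 1 < q ∧ q * θ < 1 := by
    rcases eq_or_ne θ 0 with rfl | h0
    · exact ⟨2, one_lt_two, by simp⟩
    · have : 1 < θ⁻¹ := (one_lt_inv₀ (pos_iff_ne_zero.2 h0)).2 hθ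
      obtain ⟨q, h1, h2⟩ := exists_between this
      refine ⟨q, h1, ?_⟩
      calc q * θ < θ⁻¹ * θ := by gcongr
        _ = 1 := inv_mul_cancel₀ h0
  obtain ⟨C0, hC0⟩ := Phi_add_eps h hK q hq1
  -- the fixed point of `C ↦ C0 + q θ C`
  have hfix : C0 + q * θ * (C0 / (1 - q * θ)) = C0 / (1 - q * θ) := by
    have h1 : 1 - q * θ ≠ 0 := (tsub_pos_of_lt hq2).ne'
    have h2 : (1 - q * θ) + q * θ = 1 := tsub_add_cancel_of_le hq2.le
    calc C0 + q * θ * (C0 / (1 - q * θ))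
        = ((1 - q * θ) + q * θ) * (C0 / (1 - q * θ)) := by
          rw [add_mul, mul_div_cancel₀ _ h1]
      _ = _ := by rw [h2, one_mul]
  refine ⟨C0 / (1 - q * θ), fun m => ?_⟩
  induction m with
  | zero => intro g D _; simp [Phi_zero h]
  | succ m ih =>
    intro g D hg
    have h1 := ih (fun j => g (j + 1)) (D * θ) (fun j => by
      refine (hg (j + 1)).trans (le_of_eq ?_)
      rw [pow_succ]; ring)
    simp only [zero_add] at h1
    have h2 := hC0 (g 1 - g (m + 1)) (g 0 - g 1)
    have h3 : Phi φ (g 0 - g 1) ≤ D := by simpa using hg 0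
    have e : g 1 - g (m + 1) + (g 0 - g 1) = g 0 - g (m + 1) := by ring
    rw [e] at h2
    calc _ ≤ _ := h2
      _ ≤ q * ((C0 / (1 - q * θ) : ℝ≥0) * (D * θ)) + C0 * D := by gcongr
      _ = ((C0 + q * θ * (C0 / (1 - q * θ)) : ℝ≥0) : ℝ≥0∞) * D := by push_cast; ring
      _ = _ := by rw [hfix]

lemma kr_mul_lintegral_le (h : IsYoung φ) (hβ : 0 < β) {A B Ω : Set (EE n)} (hA : A ⊆ Ω)
    (hB : B ⊆ Ω) (hAm : MeasurableSet A) (hBm : MeasurableSet B) {w : EE n → ℝ} {r : ℝ}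
    (hd : ∀ z ∈ A, ∀ y ∈ B, dist z y ≤ r) :
    kr n β r * ∫⁻ z in A, ∫⁻ y in B, Phi φ (w z - w y) ≤ modI n β φ Ω w := by
  rw [← lintegral_const_mul' _ _ (kr_ne_top _)]
  refine le_trans (setLIntegral_mono' hAm fun z hz => ?_) (lintegral_mono_set hA)
  rw [← lintegral_const_mul' _ _ (kr_ne_top _)]
  refine le_trans (setLIntegral_mono' hBm fun y hy => ?_) (lintegral_mono_set hB)
  rcases eq_or_ne z y with rfl | hne
  · simp [Phi_zero h]
  · rw [mul_comm]
    gcongr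
    exact kr_anti hβ (dist_pos.2 hne) (hd z hz y hy)

lemma kr_inv {r : ℝ} (hr : 0 < r) : (kr n β r)⁻¹ = ENNReal.ofReal (r ^ ((n:ℝ) + β)) := by
  rw [kr, Real.rpow_neg hr.le, ENNReal.ofReal_inv_of_pos (by positivity), inv_inv]

lemma volume_ball_inv (x : EE n) {r : ℝ} (hr : 0 < r) :
    (volume (ball x r))⁻¹ = ENNReal.ofReal ((r ^ n * om n)⁻¹) := by
  have := om_pos (n := n)
  rw [volume_ball_eq x hr, ENNReal.ofReal_inv_of_pos (by positivity),
    ENNReal.ofReal_mul (by positivity), ENNReal.ofReal_coe_nnreal]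

/-- Averages of a function of unit modular over comparable balls of radius `R` differ by at most what
`R ^ (β - n)` allows: Jensen, since the kernel is bounded below on pairs at distance `≲ R`. -/
lemma Phi_avg_sub_le (h : IsYoung φ) (hK : IsDoubling φ K) (hβ : 0 < β) (n : ℕ) :
    ∃ C : ℝ≥0, ∀ w : EE n → ℝ, LocallyIntegrable w → modI n β φ univ w ≤ 1 →
      ∀ (x y : EE n) (R s : ℝ), 0 < R → R ≤ s → s ≤ 2 * R → dist x y ≤ R →
      Phi φ ((⨍ z in ball x R, w z) - ⨍ z in ball y s, w z) ≤
        C * ENNReal.ofReal (R ^ (β - n)) := by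
  obtain ⟨C1, -, hC1⟩ := Phi_mul_le h hK (2 / (1 / 4) ^ n)
  have hom := om_pos (n := n)
  refine ⟨C1 * ((4 ^ n * om n : ℝ)⁻¹ * (4 ^ n * om n : ℝ)⁻¹ * 8 ^ ((n:ℝ) + β)).toNNReal,
    fun w hw hI x y R s hR hRs hs2 hxy => ?_⟩
  have hsub1 : ball x R ⊆ ball x (4 * R) := ball_subset_ball (by linarith)
  have hsub2 : ball y s ⊆ ball x (4 * R) := by
    apply ball_subset_ball'
    rw [dist_comm]; linarith
  have e1 : (1/4:ℝ) ^ n * volume.real (ball x (4 * R)) = R ^ n * om n := by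
    rw [volume_real_ball_eq x (by positivity), ← mul_assoc, ← mul_pow]
    congr 2; ring
  have h_int : IntegrableOn w (ball x (4 * R)) :=
    (hw.integrableOn_isCompact (isCompact_closedBall x (4 * R))).mono_set ball_subset_closedBall
  have key := Phi_average_sub_le (μ := volume) h (u := w) measurableSet_ball measurableSet_ball hsub1 hsub2
    measure_ball_lt_top.ne (by positivity : (0:ℝ) < (1/4) ^ n)
    (by rw [volume_real_ball_eq x (by positivity)]; positivity)
    (by rw [e1, volume_real_ball_eq x hR])
    (by rw [e1, volume_real_ball_eq y (by linarith)]; gcongr) h_int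
  refine key.trans ?_
  set S := ∫⁻ z in ball x (4 * R), ∫⁻ v in ball x (4 * R), Phi φ (w z - w v) with hS
  have h1 : ∫⁻ z in ball x (4 * R), ∫⁻ v in ball x (4 * R), Phi φ (2 / (1 / 4) ^ n * (w z - w v))
      ≤ C1 * S := by
    rw [hS, ← lintegral_const_mul' _ _ ENNReal.coe_ne_top]
    refine lintegral_mono fun z => ?_
    rw [← lintegral_const_mul' _ _ ENNReal.coe_ne_top]
    exact lintegral_mono fun v => hC1 _ _ le_rfl
  have h2 : kr n β (8 * R) * S ≤ 1 := by
    refine le_trans (kr_mul_lintegral_le h hβ (subset_univ _) (subset_univ _) measurableSet_ball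
      measurableSet_ball fun z hz v hv => ?_) hI
    have := dist_triangle_right z v x
    rw [mem_ball] at hz hv
    linarith
  have h3 : S ≤ ENNReal.ofReal ((8 * R) ^ ((n:ℝ) + β)) := by
    rw [← kr_inv (by positivity)]
    rw [mul_comm] at h2
    exact ENNReal.le_inv_iff_mul_le.2 h2
  calc _ ≤ (volume (ball x (4 * R)))⁻¹ * (volume (ball x (4 * R)))⁻¹ *
        (C1 * ENNReal.ofReal ((8 * R) ^ ((n:ℝ) + β))) := by
        gcongr
        exact h1.trans (by gcongr)
    _ = C1 * ENNReal.ofReal (((4 * R) ^ n * om n)⁻¹ * ((4 * R) ^ n * om n)⁻¹ *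
        (8 * R) ^ ((n:ℝ) + β)) := by
        rw [volume_ball_inv x (by positivity), ENNReal.ofReal_mul (by positivity),
          ENNReal.ofReal_mul (by positivity)]
        ring
    _ = C1 * ENNReal.ofReal (((4 ^ n * om n : ℝ)⁻¹ * (4 ^ n * om n : ℝ)⁻¹ * 8 ^ ((n:ℝ) + β)) *
          R ^ (β - n)) := by
        congr 2
        have e3 : R ^ (β - n) = R ^ ((n:ℝ) + β) * (R ^ n)⁻¹ * (R ^ n)⁻¹ := by
          rw [← Real.rpow_natCast R n, ← Real.rpow_neg hR.le, ← Real.rpow_add hR,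
            ← Real.rpow_add hR]
          congr 1; ring
        rw [e3, mul_pow, Real.mul_rpow (by norm_num) hR.le]
        have : (0:ℝ) < om n := by exact_mod_cast hom
        have : (0:ℝ) < R ^ n := by positivity
        field_simp
    _ = _ := by
        rw [ENNReal.ofReal_mul (by positivity), ENNReal.coe_mul, ← mul_assoc]
        rfl

/-- On average, a function differs little from its mean at scale `R`. -/
lemma lintegral_Phi_sub_avg_le (h : IsYoung φ) (hβ : 0 < β) (n : ℕ) :
    ∃ C : ℝ≥0, 0 < C ∧ ∀ w : EE n → ℝ, LocallyIntegrable w → modI n β φ univ w ≤ 1 →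
      ∀ R : ℝ, 0 < R →
      ∫⁻ x, Phi φ (w x - ⨍ z in ball x R, w z) ≤ C * ENNReal.ofReal (R ^ β) := by
  have hom := om_pos (n := n)
  have hom' : (0:ℝ) < om n := by exact_mod_cast hom
  refine ⟨((om n : ℝ)⁻¹).toNNReal, by simpa using hom, fun w hw hI R hR => ?_⟩
  have h1 : ∀ x, Phi φ (w x - ⨍ z in ball x R, w z) ≤
      (volume (ball x R))⁻¹ * ∫⁻ z in ball x R, Phi φ (w x - w z) := by
    intro x
    have h_int : IntegrableOn w (ball x R) :=
      (hw.integrableOn_isCompact (isCompact_closedBall x R)).mono_set ball_subset_closedBall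
    have hpos : volume (ball x R) ≠ 0 := (measure_ball_pos volume x hR).ne'
    have hfin : volume (ball x R) ≠ ∞ := measure_ball_lt_top.ne
    have : IsFiniteMeasure (volume.restrict (ball x R)) := ⟨by simpa using measure_ball_lt_top⟩
    have := Phi_average_le h (μ := volume.restrict (ball x R)) (by simpa using hpos)
      (f := fun z => w x - w z) ((integrable_const _).sub h_int)
    rw [Measure.restrict_apply_univ] at this
    convert this using 2
    rw [average_eq, average_eq, integral_sub (integrable_const _) h_int]
    have hne : (volume.restrict (ball x R)).real univ ≠ 0 := by
      rw [measureReal_restrict_apply_univ, volume_real_ball_eq x hR]; positivity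
    simp only [integral_const, smul_eq_mul]
    field_simp
  calc _ ≤ ∫⁻ x, ENNReal.ofReal ((R ^ n * om n)⁻¹) * ∫⁻ z in ball x R, Phi φ (w x - w z) := by
        refine lintegral_mono fun x => (h1 x).trans ?_
        rw [volume_ball_inv x hR]
    _ = ENNReal.ofReal ((R ^ n * om n)⁻¹) * ∫⁻ x, ∫⁻ z in ball x R, Phi φ (w x - w z) :=
        lintegral_const_mul' _ _ ENNReal.ofReal_ne_top
    _ ≤ ENNReal.ofReal ((R ^ n * om n)⁻¹) * ENNReal.ofReal (R ^ ((n:ℝ) + β)) := by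
        gcongr
        rw [← kr_inv hR, ENNReal.le_inv_iff_mul_le, mul_comm]
        refine le_trans ?_ hI
        rw [← lintegral_const_mul' _ _ (kr_ne_top _), modI, Measure.restrict_univ]
        refine lintegral_mono fun x => ?_
        rw [← lintegral_const_mul' _ _ (kr_ne_top _)]
        refine le_trans (setLIntegral_mono' measurableSet_ball fun y hy => ?_)
          (setLIntegral_le_lintegral (ball x R) _)
        rcases eq_or_ne x y with rfl | hne
        · simp [Phi_zero h]
        · rw [mul_comm]
          gcongr
          refine kr_anti hβ (dist_pos.2 hne) ?_
          rw [dist_comm]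
          exact (mem_ball.1 hy).le
    _ = _ := by
        rw [← ENNReal.ofReal_mul (by positivity)]
        change _ = ENNReal.ofReal _ * _
        rw [← ENNReal.ofReal_mul (by positivity), Real.rpow_add hR, Real.rpow_natCast]
        congr 1
        field_simp

end Necessity

/-! ### A capacity and a Morrey estimate -/

section Capacity

variable {n : ℕ} {β K : ℝ} {φ : ℝ → ℝ}

/-- For `β < n`, means at a common scale `R` oscillate boundedly over all of space. -/
lemma Phi_avg_sub_le_of_lt (h : IsYoung φ) (hK : IsDoubling φ K) (hβ : 0 < β) (hβn : β < n) :
    ∃ C : ℝ≥0, ∀ w : EE n → ℝ, LocallyIntegrable w → modI n β φ univ w ≤ 1 →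
      ∀ (x y : EE n) (R : ℝ), 0 < R →
      Phi φ ((⨍ z in ball x R, w z) - ⨍ z in ball y R, w z) ≤
        C * ENNReal.ofReal (R ^ (β - n)) := by
  obtain ⟨C1, hC1⟩ := Phi_avg_sub_le h hK hβ n
  have hθ : (2:ℝ) ^ (β - n) < 1 := Real.rpow_lt_one_of_one_lt_of_neg one_lt_two (by linarith)
  obtain ⟨C2, hC2⟩ := Phi_chain h hK ((2:ℝ) ^ (β - n)).toNNReal (by
    rw [← Real.toNNReal_one]; exact (Real.toNNReal_lt_toNNReal_iff one_pos).2 hθ)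
  obtain ⟨C3, hC3⟩ := Phi_add3_le h hK
  refine ⟨C3 * (C2 * C1 + C1 + C2 * C1), fun w hw hI x y R hR => ?_⟩
  have hstep : ∀ j : ℕ, ENNReal.ofReal ((2 ^ j * R) ^ (β - n)) =
      ENNReal.ofReal (R ^ (β - n)) * (((2:ℝ) ^ (β - n)).toNNReal : ℝ≥0∞) ^ j := by
    intro j
    change _ = _ * (ENNReal.ofReal _) ^ j
    rw [← ENNReal.ofReal_pow (by positivity), ← ENNReal.ofReal_mul (by positivity),
      Real.mul_rpow (by positivity) hR.le, mul_comm, ← Real.rpow_natCast, ← Real.rpow_natCast,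
      ← Real.rpow_mul (by norm_num), ← Real.rpow_mul (by norm_num), mul_comm (j:ℝ)]
  have hch : ∀ (x : EE n) (m : ℕ), Phi φ ((⨍ z in ball x R, w z) - ⨍ z in ball x (2 ^ m * R), w z) ≤
      C2 * (C1 * ENNReal.ofReal (R ^ (β - n))) := by
    intro x m
    have := hC2 m (fun j => ⨍ z in ball x (2 ^ j * R), w z) (C1 * ENNReal.ofReal (R ^ (β - n)))
      (fun j => by
        have hp : 0 < 2 ^ j * R := by positivity
        have := hC1 w hw hI x x (2 ^ j * R) (2 ^ (j + 1) * R) hp (by rw [pow_succ]; nlinarith)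
          (by rw [pow_succ]; nlinarith) (by rw [dist_self]; positivity)
        refine this.trans (le_of_eq ?_)
        rw [hstep, mul_assoc])
    simpa using this
  obtain ⟨m, hm⟩ := pow_unbounded_of_one_lt (dist x y / R) (one_lt_two : (1:ℝ) < 2)
  have hm' : dist x y ≤ 2 ^ m * R := ((div_lt_iff₀ hR).1 hm).le
  have hp : 0 < 2 ^ m * R := by positivity
  have h1 := hch x m
  have h2 := hC1 w hw hI x y _ _ hp le_rfl (by linarith) hm'
  have h3 := hch y m
  rw [Phi_sub_comm] at h3
  have h4 : ENNReal.ofReal ((2 ^ m * R) ^ (β - n)) ≤ ENNReal.ofReal (R ^ (β - n)) := by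
    apply ENNReal.ofReal_le_ofReal
    apply Real.rpow_le_rpow_of_nonpos hR _ (by linarith)
    have : (1:ℝ) ≤ 2 ^ m := one_le_pow₀ one_le_two
    nlinarith
  have := hC3 ((⨍ z in ball x R, w z) - ⨍ z in ball x (2 ^ m * R), w z)
    ((⨍ z in ball x (2 ^ m * R), w z) - ⨍ z in ball y (2 ^ m * R), w z)
    ((⨍ z in ball y (2 ^ m * R), w z) - ⨍ z in ball y R, w z)
  rw [sub_add_sub_cancel, sub_add_sub_cancel] at this
  refine this.trans ?_
  calc _ ≤ C3 * (C2 * (C1 * ENNReal.ofReal (R ^ (β - n))) + C1 * ENNReal.ofReal (R ^ (β - n)) +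
        C2 * (C1 * ENNReal.ofReal (R ^ (β - n)))) := by
        gcongr
        exact h2.trans (by gcongr)
    _ = _ := by push_cast; ring

/-- A function of unit modular that equals `H` on a set of volume at least `R ^ n` has an average
over some ball of radius `R` that is close to `H`. -/
lemma exists_Phi_sub_avg_le (h : IsYoung φ) (hβ : 0 < β) (n : ℕ) :
    ∃ C : ℝ≥0, ∀ w : EE n → ℝ, LocallyIntegrable w → modI n β φ univ w ≤ 1 →
      ∀ (R H : ℝ) (A : Set (EE n)), MeasurableSet A → 0 < R → ENNReal.ofReal (R ^ n) ≤ volume A →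
      (∀ᵐ x ∂(volume.restrict A), w x = H) →
      ∃ x, Phi φ (H - ⨍ z in ball x R, w z) ≤ C * ENNReal.ofReal (R ^ (β - n)) := by
  obtain ⟨C, hC0, hC⟩ := lintegral_Phi_sub_avg_le h hβ n
  refine ⟨2 * C, fun w hw hI R H A hA hR hvol hH => ?_⟩
  by_contra hcon
  push Not at hcon
  have h1 : ∫⁻ x in A, ((2 * C : ℝ≥0) : ℝ≥0∞) * ENNReal.ofReal (R ^ (β - n)) ≤
      ∫⁻ x in A, Phi φ (w x - ⨍ z in ball x R, w z) := by
    refine lintegral_mono_ae ?_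
    filter_upwards [hH] with x hx
    rw [hx]
    exact (hcon x).le
  have h2 := h1.trans ((setLIntegral_le_lintegral A _).trans (hC w hw hI R hR))
  rw [setLIntegral_const] at h2
  have h3 : ((2 * C : ℝ≥0) : ℝ≥0∞) * ENNReal.ofReal (R ^ (β - n)) * ENNReal.ofReal (R ^ n) ≤
      C * ENNReal.ofReal (R ^ β) := le_trans (by gcongr) h2
  rw [mul_assoc, ← ENNReal.ofReal_mul (by positivity), ← Real.rpow_natCast R n,
    ← Real.rpow_add hR, sub_add_cancel] at h3
  have h4 : (((2 * C : ℝ≥0) : ℝ≥0∞)) * ENNReal.ofReal (R ^ β) =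
      C * ENNReal.ofReal (R ^ β) + C * ENNReal.ofReal (R ^ β) := by
    push_cast; ring
  rw [h4] at h3
  have h5 : (C:ℝ≥0∞) * ENNReal.ofReal (R ^ β) ≠ 0 := by
    have : 0 < R ^ β := by positivity
    simp [hC0.ne', this]
  have h6 : (C:ℝ≥0∞) * ENNReal.ofReal (R ^ β) ≠ ∞ :=
    ENNReal.mul_ne_top ENNReal.coe_ne_top ENNReal.ofReal_ne_top
  exact absurd h3 (not_le.2 (ENNReal.lt_add_right h6 h5))

/-- A capacity estimate, for `β < n`: a function of modular `≤ 1` cannot have a high jump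
between two large sets. -/
lemma Phi_height_le_of_lt (h : IsYoung φ) (hK : IsDoubling φ K) (hβ : 0 < β) (hβn : β < n) :
    ∃ C : ℝ≥0, ∀ w : EE n → ℝ, LocallyIntegrable w → modI n β φ univ w ≤ 1 →
      ∀ (R H : ℝ) (A A' : Set (EE n)), MeasurableSet A → MeasurableSet A' → 0 < R →
      ENNReal.ofReal (R ^ n) ≤ volume A → ENNReal.ofReal (R ^ n) ≤ volume A' →
      (∀ᵐ x ∂(volume.restrict A), w x = H) → (∀ᵐ x ∂(volume.restrict A'), w x = 0) →
      Phi φ H ≤ C * ENNReal.ofReal (R ^ (β - n)) := by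
  obtain ⟨C1, hC1⟩ := Phi_avg_sub_le_of_lt h hK hβ hβn
  obtain ⟨C2, hC2⟩ := exists_Phi_sub_avg_le h hβ n
  obtain ⟨C3, hC3⟩ := Phi_add3_le h hK
  refine ⟨C3 * (C2 + C1 + C2), fun w hw hI R H A A' hA hA' hR hv hv' hH hH' => ?_⟩
  obtain ⟨x, hx⟩ := hC2 w hw hI R H A hA hR hv hH
  obtain ⟨y, hy⟩ := hC2 w hw hI R 0 A' hA' hR hv' hH'
  rw [Phi_sub_comm] at hy
  have := hC3 (H - ⨍ z in ball x R, w z) ((⨍ z in ball x R, w z) - ⨍ z in ball y R, w z)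
    ((⨍ z in ball y R, w z) - 0)
  rw [sub_add_sub_cancel, sub_add_sub_cancel, sub_zero] at this
  refine this.trans ?_
  rw [sub_zero] at hy
  calc _ ≤ C3 * (C2 * ENNReal.ofReal (R ^ (β - n)) + C1 * ENNReal.ofReal (R ^ (β - n)) +
        C2 * ENNReal.ofReal (R ^ (β - n))) := by
        gcongr
        · exact hC1 w hw hI x y R hR
        · simpa using hy
    _ = _ := by push_cast; ring

/-- A Morrey estimate, for `β > n`. -/
lemma Phi_height_le_of_gt (h : IsYoung φ) (hK : IsDoubling φ K) (hβ : 0 < β) (hβn : n < β) :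
    ∃ C : ℝ≥0, ∀ w : EE n → ℝ, LocallyIntegrable w → modI n β φ univ w ≤ 1 →
      ∀ (R H s : ℝ) (x y : EE n), 0 < s → dist x y ≤ R → 0 < R →
      (∀ᵐ z ∂(volume.restrict (ball x s)), w z = H) →
      (∀ᵐ z ∂(volume.restrict (ball y s)), w z = 0) →
      Phi φ H ≤ C * ENNReal.ofReal (R ^ (β - n)) := by
  obtain ⟨C1, hC1⟩ := Phi_avg_sub_le h hK hβ n
  have hθ : (1/2:ℝ) ^ (β - n) < 1 := Real.rpow_lt_one (by norm_num) (by norm_num) (by linarith)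
  obtain ⟨C2, hC2⟩ := Phi_chain h hK ((1/2:ℝ) ^ (β - n)).toNNReal (by
    rw [← Real.toNNReal_one]; exact (Real.toNNReal_lt_toNNReal_iff one_pos).2 hθ)
  obtain ⟨C3, hC3⟩ := Phi_add3_le h hK
  refine ⟨C3 * (C2 * C1 + C1 + C2 * C1), fun w hw hI R H s x y hs hxy hR hH hH' => ?_⟩
  have hstep : ∀ j : ℕ, ENNReal.ofReal (((1/2) ^ j * R) ^ (β - n)) =
      ENNReal.ofReal (R ^ (β - n)) * (((1/2:ℝ) ^ (β - n)).toNNReal : ℝ≥0∞) ^ j := by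
    intro j
    change _ = _ * (ENNReal.ofReal _) ^ j
    rw [← ENNReal.ofReal_pow (by positivity), ← ENNReal.ofReal_mul (by positivity),
      Real.mul_rpow (by positivity) hR.le, mul_comm, ← Real.rpow_natCast, ← Real.rpow_natCast,
      ← Real.rpow_mul (by norm_num), ← Real.rpow_mul (by norm_num), mul_comm (j:ℝ)]
  have hch : ∀ (x : EE n) (m : ℕ),
      Phi φ ((⨍ z in ball x R, w z) - ⨍ z in ball x ((1/2) ^ m * R), w z) ≤
      C2 * (C1 * ENNReal.ofReal (R ^ (β - n))) := by
    intro x m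
    have := hC2 m (fun j => ⨍ z in ball x ((1/2) ^ j * R), w z) (C1 * ENNReal.ofReal (R ^ (β - n)))
      (fun j => by
        have hp : 0 < (1/2) ^ j * R := by positivity
        have hp' : 0 < (1/2) ^ (j+1) * R := by positivity
        have := hC1 w hw hI x x ((1/2) ^ (j + 1) * R) ((1/2) ^ j * R) hp' (by rw [pow_succ]; nlinarith)
          (by rw [pow_succ]; nlinarith) (by rw [dist_self]; positivity)
        rw [Phi_sub_comm]
        refine this.trans ?_
        rw [mul_assoc, ← hstep]
        gcongr (C1:ℝ≥0∞) * ?_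
        refine ENNReal.ofReal_le_ofReal (Real.rpow_le_rpow hp'.le ?_ (sub_nonneg.2 hβn.le))
        rw [pow_succ]; nlinarith)
    simpa using this
  obtain ⟨m, hm⟩ := exists_pow_lt_of_lt_one (div_pos hs hR) (by norm_num : (1/2:ℝ) < 1)
  have hm' : (1/2) ^ m * R ≤ s := ((lt_div_iff₀ hR).1 hm).le
  have hp : 0 < (1/2) ^ m * R := by positivity
  have havg : ∀ (x : EE n) (a : ℝ), (∀ᵐ z ∂(volume.restrict (ball x s)), w z = a) →
      ⨍ z in ball x ((1/2) ^ m * R), w z = a := by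
    intro x a ha
    have h1 : ∀ᵐ z ∂(volume.restrict (ball x ((1/2) ^ m * R))), w z = a :=
      ae_restrict_of_ae_restrict_of_subset (ball_subset_ball hm') ha
    rw [average_congr h1]
    exact setAverage_const (measure_ball_pos volume x hp).ne' measure_ball_lt_top.ne a
  have h1 := hch x m
  have h2 := hC1 w hw hI x y R R hR le_rfl (by linarith) hxy
  have h3 := hch y m
  rw [havg x H hH, Phi_sub_comm] at h1
  rw [havg y 0 hH'] at h3
  have := hC3 (H - ⨍ z in ball x R, w z) ((⨍ z in ball x R, w z) - ⨍ z in ball y R, w z)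
    ((⨍ z in ball y R, w z) - 0)
  rw [sub_add_sub_cancel, sub_add_sub_cancel, sub_zero] at this
  refine this.trans ?_
  calc _ ≤ C3 * (C2 * (C1 * ENNReal.ofReal (R ^ (β - n))) + C1 * ENNReal.ofReal (R ^ (β - n)) +
        C2 * (C1 * ENNReal.ofReal (R ^ (β - n)))) := by
        gcongr
    _ = _ := by push_cast; ring

end Capacity

/-! ### Bump functions -/

/-- The radial cut-off of height `H`, equal to `H` on `B(x,s)` and to `0` off `B(x,t)`. -/
noncomputable def bump {n : ℕ} (x : EE n) (s t H : ℝ) (z : EE n) : ℝ :=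
  H * max 0 (min 1 ((t - dist z x) / (t - s)))

section Bump

variable {n : ℕ} {β K : ℝ} {φ : ℝ → ℝ}

lemma continuous_bump (x : EE n) (s t H : ℝ) : Continuous (bump x s t H) := by
  unfold bump
  fun_prop

lemma bump_eq {x z : EE n} {s t H : ℝ} (hst : s < t) (hz : dist z x ≤ s) :
    bump x s t H z = H := by
  have : 1 ≤ (t - dist z x) / (t - s) := by
    rw [one_le_div (by linarith)]; linarith
  simp [bump, this]

lemma bump_eq_zero {x z : EE n} {s t H : ℝ} (hst : s < t) (hz : t ≤ dist z x) :
    bump x s t H z = 0 := by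
  have : (t - dist z x) / (t - s) ≤ 0 := div_nonpos_of_nonpos_of_nonneg (by linarith) (by linarith)
  have h2 : min 1 ((t - dist z x) / (t - s)) ≤ 0 := (min_le_right _ _).trans this
  simp [bump, max_eq_left h2]

lemma clamp_sub_le (a b : ℝ) : |max 0 (min 1 a) - max 0 (min 1 b)| ≤ min 1 |a - b| := by
  rcases le_total 1 a with h1 | h1 <;> rcases le_total 1 b with h2 | h2 <;>
  rcases le_total 0 a with h3 | h3 <;> rcases le_total 0 b with h4 | h4 <;>
  rcases le_total a b with h5 | h5 <;>
  simp only [min_eq_left, min_eq_right, max_eq_left, max_eq_right, h1, h2, h3, h4, zero_le_one,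
    le_min_iff, abs_le, abs_of_nonneg (sub_nonneg.2 h5), abs_of_nonpos (sub_nonpos.2 h5)] <;>
  (repeat' apply And.intro) <;> linarith

lemma abs_bump_sub_le {x : EE n} {s t H : ℝ} (hst : s < t) (z y : EE n) :
    |bump x s t H z - bump x s t H y| ≤ |min 1 (dist z y / (t - s)) * H| := by
  have hρ : 0 < t - s := by linarith
  rw [bump, bump, ← mul_sub, abs_mul, abs_mul, mul_comm,
    abs_of_nonneg (le_min zero_le_one (by positivity) : 0 ≤ min 1 (dist z y / (t - s)))]
  gcongr
  refine (clamp_sub_le _ _).trans (min_le_min le_rfl ?_)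
  rw [← sub_div, abs_div, abs_of_pos hρ]
  gcongr
  rw [sub_sub_sub_cancel_left, dist_comm z y, abs_sub_comm, dist_comm y z, abs_sub_comm]
  have := abs_dist_sub_le y z x
  rwa [dist_comm y z] at this

/-- The condition on `C_β` controls pairs at distance less than `t - s`, where the cutoff is Lipschitz; the
remaining pairs only see the tail of the kernel. -/
lemma modI_bump_le (h : IsYoung φ) (hβ : 0 < β) (hC : CbetaFinite β φ) (n : ℕ) :
    ∃ C : ℝ≥0, 0 < C ∧ ∀ (Ω : Set (EE n)) (x : EE n) (s t H : ℝ), MeasurableSet Ω → s < t →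
      modI n β φ Ω (bump x s t H) ≤
        C * volume (ball x t ∩ Ω) * ENNReal.ofReal ((t - s) ^ (-β)) * Phi φ H := by
  obtain ⟨C1, hC1⟩ := lintegral_ball_Phi_le h hβ hC n
  obtain ⟨C2, hC2⟩ := lintegral_compl_ball_kr_le hβ n
  refine ⟨2 * (C1 + C2) + 1, by positivity, fun Ω x s t H hΩ hst => ?_⟩
  set ρ := t - s with hρdef
  have hρ : 0 < ρ := by rw [hρdef]; linarith
  set G : EE n → EE n → ℝ≥0∞ := fun z y => Phi φ (min 1 (dist z y / ρ) * H) * kr n β (dist z y)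
    with hG
  set B := ball x t with hB
  have hGm : Measurable (Function.uncurry G) := by
    have hd : Measurable fun p : EE n × EE n => dist p.1 p.2 := continuous_dist.measurable
    exact ((measurable_Phi h).comp ((measurable_const.min (hd.div_const ρ)).mul_const H)).mul
      (measurable_kr.comp hd)
  have hGs : ∀ z y, G z y = G y z := fun z y => by simp only [hG, dist_comm z y]
  have hGint : ∀ z, ∫⁻ y in Ω, G z y ≤ (C1 + C2) * (ENNReal.ofReal (ρ ^ (-β)) * Phi φ H) := by
    intro z
    refine (setLIntegral_le_lintegral _ _).trans ?_
    rw [← lintegral_add_compl _ (measurableSet_ball (x := z) (ε := ρ)), add_mul]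
    gcongr
    · rw [← mul_assoc]
      refine le_trans (lintegral_mono fun y => ?_) (hC1 z ρ H hρ)
      simp only [hG]
      gcongr
      apply Phi_mono h
      rw [abs_mul, abs_mul]
      gcongr
      exact min_le_right _ _
    · calc _ ≤ ∫⁻ y in (ball z ρ)ᶜ, Phi φ H * kr n β (dist z y) := by
            refine lintegral_mono fun y => ?_
            simp only [hG]
            gcongr
            apply Phi_mono h
            rw [abs_mul]
            refine mul_le_of_le_one_left (abs_nonneg _) ?_
            rw [abs_of_nonneg (le_min zero_le_one (by positivity))]
            exact min_le_left _ _
        _ = Phi φ H * ∫⁻ y in (ball z ρ)ᶜ, kr n β (dist z y) :=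
            lintegral_const_mul' _ _ (Phi_ne_top _)
        _ ≤ Phi φ H * (C2 * ENNReal.ofReal (ρ ^ (-β))) := by gcongr; exact hC2 z ρ hρ
        _ = _ := by ring
  have hI1 : Measurable fun p : EE n × EE n => B.indicator (fun _ => (1:ℝ≥0∞)) p.1 :=
    (measurable_const.indicator measurableSet_ball).comp measurable_fst
  have hI2 : Measurable fun p : EE n × EE n => B.indicator (fun _ => (1:ℝ≥0∞)) p.2 :=
    (measurable_const.indicator measurableSet_ball).comp measurable_snd
  have hpt : ∀ z y, Phi φ (bump x s t H z - bump x s t H y) * kr n β (dist z y) ≤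
      B.indicator (fun _ => 1) z * G z y + B.indicator (fun _ => 1) y * G z y := by
    intro z y
    have h1 : Phi φ (bump x s t H z - bump x s t H y) * kr n β (dist z y) ≤ G z y := by
      simp only [hG]
      gcongr
      exact Phi_mono h (abs_bump_sub_le hst z y)
    by_cases hz : z ∈ B
    · rw [indicator_of_mem hz, one_mul]
      exact h1.trans le_self_add
    · by_cases hy : y ∈ B
      · rw [indicator_of_mem hy, one_mul]
        exact h1.trans le_add_self
      · rw [bump_eq_zero hst (by simpa [hB] using hz), bump_eq_zero hst (by simpa [hB] using hy)]
        simp [Phi_zero h]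
  have hA : ∫⁻ z in Ω, ∫⁻ y in Ω, B.indicator (fun _ => 1) z * G z y ≤
      volume (B ∩ Ω) * ((C1 + C2) * (ENNReal.ofReal (ρ ^ (-β)) * Phi φ H)) := by
    calc _ ≤ ∫⁻ z in Ω, B.indicator (fun _ => 1) z *
          ((C1 + C2) * (ENNReal.ofReal (ρ ^ (-β)) * Phi φ H)) := by
          refine lintegral_mono fun z => ?_
          rw [lintegral_const_mul]
          · gcongr
            exact hGint z
          · exact hGm.of_uncurry_left
      _ = _ := by
          rw [lintegral_mul_const _ (measurable_const.indicator measurableSet_ball),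
            lintegral_indicator measurableSet_ball, setLIntegral_one,
            Measure.restrict_apply measurableSet_ball]
  have hB' : ∫⁻ z in Ω, ∫⁻ y in Ω, B.indicator (fun _ => 1) y * G z y =
      ∫⁻ z in Ω, ∫⁻ y in Ω, B.indicator (fun _ => 1) z * G z y := by
    rw [lintegral_lintegral_swap (hI2.mul hGm).aemeasurable]
    refine lintegral_congr fun z => lintegral_congr fun y => ?_
    rw [hGs]
  calc _ ≤ ∫⁻ z in Ω, ∫⁻ y in Ω,
        (B.indicator (fun _ => 1) z * G z y + B.indicator (fun _ => 1) y * G z y) :=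
        lintegral_mono fun z => lintegral_mono fun y => hpt z y
    _ = ∫⁻ z in Ω, ((∫⁻ y in Ω, B.indicator (fun _ => 1) z * G z y) +
        ∫⁻ y in Ω, B.indicator (fun _ => 1) y * G z y) := by
        refine lintegral_congr fun z => ?_
        rw [lintegral_add_left]
        exact measurable_const.mul hGm.of_uncurry_left
    _ = (∫⁻ z in Ω, ∫⁻ y in Ω, B.indicator (fun _ => 1) z * G z y) +
        ∫⁻ z in Ω, ∫⁻ y in Ω, B.indicator (fun _ => 1) y * G z y := by
        rw [lintegral_add_left]
        exact (hI1.mul hGm).lintegral_prod_right'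
    _ ≤ volume (B ∩ Ω) * ((C1 + C2) * (ENNReal.ofReal (ρ ^ (-β)) * Phi φ H)) +
        volume (B ∩ Ω) * ((C1 + C2) * (ENNReal.ofReal (ρ ^ (-β)) * Phi φ H)) := by
        rw [hB']
        exact add_le_add hA hA
    _ = (2 * (C1 + C2)) * volume (B ∩ Ω) * ENNReal.ofReal (ρ ^ (-β)) * Phi φ H := by ring
    _ ≤ _ := by
        push_cast
        gcongr
        exact le_self_add

end Bump

/-! ### Extension domains are Ahlfors regular -/

section ExtAhlfors

variable {n : ℕ} {β K : ℝ} {φ : ℝ → ℝ} {Ω : Set (EE n)}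

/-- The extension property in modular form: a function of unit modular on `Ω` agrees, up to a bounded
factor, with a function of unit modular on the whole space. -/
lemma exists_extension (hE : IsExtensionDomain n β φ Ω) :
    ∃ L : ℝ, 0 < L ∧ ∀ u : EE n → ℝ, LocallyIntegrableOn u Ω → modI n β φ Ω u ≤ 1 →
      ∃ (lam : ℝ) (w : EE n → ℝ), 0 < lam ∧ lam ≤ L ∧ LocallyIntegrable w ∧
        modI n β φ univ w ≤ 1 ∧ ∀ᵐ x ∂(volume.restrict Ω), w x = u x / lam := by
  obtain ⟨C, hC, E, -, -, hE⟩ := hE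
  refine ⟨C + 1, by positivity, fun u hu hI => ?_⟩
  have h1 : fracNorm n β φ Ω u ≤ 1 := by
    refine sInf_le ⟨one_pos, ENNReal.one_ne_top, ?_⟩
    rw [ENNReal.toReal_one, fracIntegral_eq_modI _ _ one_pos]
    simpa using hI
  obtain ⟨⟨hEl, -⟩, hEa, hEn⟩ := hE u ⟨hu, (h1.trans_lt ENNReal.one_lt_top).ne⟩
  have h2 : fracNorm n β φ univ (E u) < ENNReal.ofReal (C + 1) := by
    calc _ ≤ ENNReal.ofReal C * fracNorm n β φ Ω u := hEn
      _ ≤ ENNReal.ofReal C * 1 := by gcongr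
      _ = ENNReal.ofReal C := mul_one _
      _ < _ := (ENNReal.ofReal_lt_ofReal_iff (by positivity)).2 (by linarith)
  obtain ⟨lam, ⟨hl0, hl1, hl2⟩, hl3⟩ := sInf_lt_iff.1 h2
  have hpos : 0 < lam.toReal := ENNReal.toReal_pos hl0.ne' hl1
  rw [fracIntegral_eq_modI _ _ hpos] at hl2
  refine ⟨lam.toReal, fun x => E u x / lam.toReal, hpos, ?_, ?_, hl2, ?_⟩
  · exact ENNReal.toReal_le_of_le_ofReal (by positivity) hl3.le
  · have := (locallyIntegrableOn_univ.1 hEl).smul (lam.toReal⁻¹)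
    refine this.congr (Eventually.of_forall fun x => ?_)
    simp [div_eq_inv_mul]
  · filter_upwards [hEa] with x hx
    rw [hx]

/-- Normalizing and extending a cutoff gives a function of unit modular on the whole space whose
height `H` is large whenever `Ω` has little volume in the ball. -/
lemma exists_extended_bump (h : IsYoung φ) (hK : IsDoubling φ K) (hβ : 0 < β)
    (hCβ : CbetaFinite β φ) (hΩ : MeasurableSet Ω) (hE : IsExtensionDomain n β φ Ω) :
    ∃ C : ℝ≥0, ∀ (x : EE n) (s t : ℝ), s < t → volume (ball x t ∩ Ω) ≠ 0 →
      ∃ (w : EE n → ℝ) (H : ℝ), LocallyIntegrable w ∧ modI n β φ univ w ≤ 1 ∧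
        (∀ᵐ z ∂(volume.restrict Ω), dist z x ≤ s → w z = H) ∧
        (∀ᵐ z ∂(volume.restrict Ω), t ≤ dist z x → w z = 0) ∧
        ENNReal.ofReal ((t - s) ^ β) ≤ C * volume (ball x t ∩ Ω) * Phi φ H := by
  obtain ⟨L, hL, hE⟩ := exists_extension hE
  obtain ⟨C1, hC10, hC1⟩ := modI_bump_le h hβ hCβ n
  obtain ⟨C3, -, hC3⟩ := Phi_mul_le h hK L
  refine ⟨C1 * C3, fun x s t hst hm => ?_⟩
  have hρ : 0 < t - s := by linarith
  have hρβ : 0 < (t - s) ^ (-β) := by positivity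
  set m := volume (ball x t ∩ Ω) with hmdef
  have hmf : m ≠ ∞ := ((measure_mono inter_subset_left).trans_lt measure_ball_lt_top).ne
  set M := C1 * m * ENNReal.ofReal ((t - s) ^ (-β)) with hM
  have hM0 : M ≠ 0 := by
    simp [hM, hm, hC10.ne', hρβ]
  have hMf : M ≠ ∞ := by
    rw [hM]
    exact ENNReal.mul_ne_top (ENNReal.mul_ne_top ENNReal.coe_ne_top hmf) ENNReal.ofReal_ne_top
  have hMp : 0 < M.toReal := ENNReal.toReal_pos hM0 hMf
  -- the height is normalised so that the modular of the bump is at most `1`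
  obtain ⟨H, hH, hφH⟩ := h.exists_eq (M.toReal)⁻¹ (by positivity)
  have hMH : M * Phi φ H = 1 := by
    rw [Phi, abs_of_pos hH, hφH, ENNReal.ofReal_inv_of_pos hMp, ENNReal.ofReal_toReal hMf,
      ENNReal.mul_inv_cancel hM0 hMf]
  obtain ⟨lam, w, hl0, hlL, hw, hwI, hwa⟩ := hE (bump x s t H)
    ((continuous_bump x s t H).locallyIntegrable.locallyIntegrableOn Ω)
    ((hC1 Ω x s t H hΩ hst).trans hMH.le)
  refine ⟨w, H / lam, hw, hwI, ?_, ?_, ?_⟩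
  · filter_upwards [hwa] with z hz hd
    rw [hz, bump_eq hst hd]
  · filter_upwards [hwa] with z hz hd
    rw [hz, bump_eq_zero hst hd, zero_div]
  · have h1 : Phi φ H ≤ C3 * Phi φ (H / lam) := by
      refine hC3 _ _ ?_
      rw [abs_of_pos hH, abs_of_pos (by positivity)]
      calc H = lam * (H / lam) := by field_simp
        _ ≤ _ := by gcongr
    calc ENNReal.ofReal ((t - s) ^ β) = ENNReal.ofReal ((t - s) ^ β) * (M * Phi φ H) := by
          rw [hMH, mul_one]
      _ ≤ ENNReal.ofReal ((t - s) ^ β) * (M * (C3 * Phi φ (H / lam))) := by gcongr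
      _ = (ENNReal.ofReal ((t - s) ^ β) * ENNReal.ofReal ((t - s) ^ (-β))) *
          (C1 * C3 * m * Phi φ (H / lam)) := by
          rw [hM]; ring
      _ = _ := by
          rw [← ENNReal.ofReal_mul (by positivity), ← Real.rpow_add hρ]
          simp

/-- The self-improving volume inequality behind the iteration for `β < n`. -/
lemma volume_step_of_lt (h : IsYoung φ) (hK : IsDoubling φ K) (hβ : 0 < β) (hβn : β < n)
    (hCβ : CbetaFinite β φ) (hΩ : MeasurableSet Ω) (hE : IsExtensionDomain n β φ Ω) :
    ∃ C : ℝ≥0, ∀ (x : EE n) (s t R : ℝ), s < t → 0 < R →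
      ENNReal.ofReal (R ^ n) ≤ volume (ball x s ∩ Ω) →
      ENNReal.ofReal (R ^ n) ≤ volume (Ω \ ball x t) →
      ENNReal.ofReal ((t - s) ^ β * R ^ (n - β)) ≤ C * volume (ball x t ∩ Ω) := by
  obtain ⟨C1, hC1⟩ := exists_extended_bump h hK hβ hCβ hΩ hE
  obtain ⟨C2, hC2⟩ := Phi_height_le_of_lt (n := n) h hK hβ hβn
  refine ⟨C1 * C2, fun x s t R hst hR h1 h2 => ?_⟩
  have hsub : ball x s ∩ Ω ⊆ ball x t ∩ Ω :=
    inter_subset_inter_left _ (ball_subset_ball hst.le)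
  have hRn : 0 < R ^ n := by positivity
  have hne : volume (ball x t ∩ Ω) ≠ 0 := by
    refine ne_of_gt (lt_of_lt_of_le ?_ (h1.trans (measure_mono hsub)))
    simpa using hRn
  obtain ⟨w, H, hw, hI, hw1, hw2, hρ⟩ := hC1 x s t hst hne
  have hH := hC2 w hw hI R H (ball x s ∩ Ω) (Ω \ ball x t) (measurableSet_ball.inter hΩ)
    (hΩ.diff measurableSet_ball) hR h1 h2
    (by
      have h3 := ae_restrict_of_ae_restrict_of_subset (inter_subset_right : ball x s ∩ Ω ⊆ Ω) hw1
      filter_upwards [h3, ae_restrict_mem (measurableSet_ball.inter hΩ)] with z hz hz2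
      exact hz (mem_ball.1 hz2.1).le)
    (by
      have h3 := ae_restrict_of_ae_restrict_of_subset (sdiff_subset : Ω \ ball x t ⊆ Ω) hw2
      filter_upwards [h3, ae_restrict_mem (hΩ.diff measurableSet_ball)] with z hz hz2
      exact hz (by simpa using hz2.2))
  rw [ENNReal.ofReal_mul (by have : 0 < t - s := by linarith
                             positivity)]
  calc _ ≤ (C1 * volume (ball x t ∩ Ω) * (C2 * ENNReal.ofReal (R ^ (β - n)))) *
        ENNReal.ofReal (R ^ (n - β)) := by
        gcongr
        exact hρ.trans (by gcongr)
    _ = C1 * C2 * volume (ball x t ∩ Ω) *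
        (ENNReal.ofReal (R ^ (β - n)) * ENNReal.ofReal (R ^ (n - β))) := by ring
    _ = _ := by
        rw [← ENNReal.ofReal_mul (by positivity), ← Real.rpow_add hR]
        simp

/-- Above the dimension, the Morrey estimate bounds the height of the extended cutoff through its
values near the two points `x` and `z` only. -/
lemma volume_step_of_gt (h : IsYoung φ) (hK : IsDoubling φ K) (hβ : 0 < β) (hβn : n < β)
    (hCβ : CbetaFinite β φ) (hΩ : IsOpen Ω) (hE : IsExtensionDomain n β φ Ω) :
    ∃ C : ℝ≥0, ∀ (x z : EE n) (t R : ℝ), 0 < t → x ∈ Ω → z ∈ Ω → t < dist z x → dist z x ≤ R →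
      ENNReal.ofReal ((t / 2) ^ β * R ^ (n - β)) ≤ C * volume (ball x t ∩ Ω) := by
  obtain ⟨C1, hC1⟩ := exists_extended_bump h hK hβ hCβ hΩ.measurableSet hE
  obtain ⟨C2, hC2⟩ := Phi_height_le_of_gt (n := n) h hK hβ hβn
  refine ⟨C1 * C2, fun x z t R ht hx hz htz hzR => ?_⟩
  have hR : 0 < R := by linarith
  have hne : volume (ball x t ∩ Ω) ≠ 0 :=
    ((isOpen_ball.inter hΩ).measure_pos volume ⟨x, mem_ball_self ht, hx⟩).ne'
  obtain ⟨w, H, hw, hI, hw1, hw2, hρ⟩ := hC1 x (t / 2) t (by linarith) hne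
  obtain ⟨a, ha, hax⟩ := Metric.isOpen_iff.1 hΩ x hx
  obtain ⟨b, hb, hbz⟩ := Metric.isOpen_iff.1 hΩ z hz
  set s := min (min a b) (min (t / 2) (dist z x - t)) with hs
  have hs0 : 0 < s := lt_min (lt_min ha hb) (lt_min (by linarith) (by linarith))
  have hsa : s ≤ a := (min_le_left _ _).trans (min_le_left _ _)
  have hsb : s ≤ b := (min_le_left _ _).trans (min_le_right _ _)
  have hst : s ≤ t / 2 := (min_le_right _ _).trans (min_le_left _ _)
  have hsd : s ≤ dist z x - t := (min_le_right _ _).trans (min_le_right _ _)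
  have hH := hC2 w hw hI R H s x z hs0 (by rwa [dist_comm]) hR
    (by
      have h3 := ae_restrict_of_ae_restrict_of_subset ((ball_subset_ball hsa).trans hax) hw1
      filter_upwards [h3, ae_restrict_mem measurableSet_ball] with y hy hy2
      exact hy ((mem_ball.1 hy2).le.trans hst))
    (by
      have h3 := ae_restrict_of_ae_restrict_of_subset ((ball_subset_ball hsb).trans hbz) hw2
      filter_upwards [h3, ae_restrict_mem measurableSet_ball] with y hy hy2
      refine hy ?_
      have := dist_triangle_left z x y
      rw [mem_ball] at hy2
      linarith)
  have e : t - t / 2 = t / 2 := by ring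
  rw [e] at hρ
  rw [ENNReal.ofReal_mul (by positivity)]
  calc _ ≤ (C1 * volume (ball x t ∩ Ω) * (C2 * ENNReal.ofReal (R ^ (β - n)))) *
        ENNReal.ofReal (R ^ (n - β)) := by
        gcongr
        exact hρ.trans (by gcongr)
    _ = C1 * C2 * volume (ball x t ∩ Ω) *
        (ENNReal.ofReal (R ^ (β - n)) * ENNReal.ofReal (R ^ (n - β))) := by ring
    _ = _ := by
        rw [← ENNReal.ofReal_mul (by positivity), ← Real.rpow_add hR]
        simp

end ExtAhlfors

section AhlforsOfExt

variable {n : ℕ} {β K : ℝ} {φ : ℝ → ℝ} {Ω : Set (EE n)}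

/-- For `β < n`: if `B(x,r)` carries at most the volume of a disjoint ball `B(y,r)`, then
iterating `volume_step_of_lt` over shrinking radii bounds that volume from below. -/
lemma volume_ge_of_lt (hn : 1 ≤ n) (h : IsYoung φ) (hK : IsDoubling φ K) (hβ : 0 < β) (hβn : β < n)
    (hCβ : CbetaFinite β φ) (hΩ : IsOpen Ω) (hE : IsExtensionDomain n β φ Ω) :
    ∃ δ : ℝ, 0 < δ ∧ ∀ (x y : EE n) (r : ℝ), x ∈ Ω → 0 < r → 2 * r ≤ dist x y →
      volume (ball x r ∩ Ω) ≤ volume (ball y r ∩ Ω) →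
      ENNReal.ofReal ((δ * r) ^ n) ≤ volume (ball x r ∩ Ω) := by
  obtain ⟨C, hC⟩ := volume_step_of_lt h hK hβ hβn hCβ hΩ.measurableSet hE
  set a : ℝ := 1 / (((C:ℝ) + 1) * 2 ^ n) with ha
  have ha0 : 0 < a := by positivity
  have hb0 : 0 < a ^ (1 / β) := by positivity
  refine ⟨a ^ (1 / β) / 2, by positivity, fun x y r hx hr hxy hle => ?_⟩
  set δ := a ^ (1 / β) / 2 with hδ
  have hδ0 : 0 < δ := by positivity
  have h2δ : (2 * δ) ^ β = a := by
    rw [hδ, mul_div_cancel₀ _ (two_ne_zero), ← Real.rpow_mul ha0.le, one_div_mul_cancel hβ.ne',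
      Real.rpow_one]
  by_contra hcon
  push Not at hcon
  set t : ℕ → ℝ := fun j => r / 2 * (1 + (1 / 2) ^ j) with ht
  have htr : ∀ j, t j ≤ r := by
    intro j
    have : (1/2:ℝ) ^ j ≤ 1 := pow_le_one₀ (by norm_num) (by norm_num)
    simp only [ht]; nlinarith
  have hstep : ∀ j, volume (ball x (t j) ∩ Ω) ≤ ENNReal.ofReal ((δ * r * (1 / 2) ^ j) ^ n) := by
    intro j
    induction j with
    | zero =>
      have : t 0 = r := by simp only [ht, pow_zero]; ring
      rw [this, pow_zero, mul_one]
      exact hcon.le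
    | succ j ih =>
      by_contra hj
      push Not at hj
      set R := δ * r * (1 / 2) ^ (j + 1) with hR
      have hR0 : 0 < R := by positivity
      have e1 : t j - t (j + 1) = R / (2 * δ) := by
        simp only [ht, hR]
        rw [pow_succ]
        field_simp
        ring
      have e2 : δ * r * (1 / 2) ^ j = 2 * R := by
        rw [hR, pow_succ]; ring
      have hlt : t (j + 1) < t j := by
        have : 0 < R / (2 * δ) := by positivity
        linarith
      have h2 : volume (ball x (t (j + 1)) ∩ Ω) ≤ volume (Ω \ ball x (t j)) := by
        calc _ ≤ volume (ball x r ∩ Ω) :=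
              measure_mono (inter_subset_inter_left _ (ball_subset_ball (htr _)))
          _ ≤ volume (ball y r ∩ Ω) := hle
          _ ≤ _ := by
              refine measure_mono fun z hz => ⟨hz.2, fun hz' => ?_⟩
              have := dist_triangle_left x y z
              have h3 := hz.1
              rw [mem_ball] at h3 hz'
              have := htr j
              linarith
      have h3 := hC x (t (j + 1)) (t j) R hlt hR0 hj.le (hj.le.trans h2)
      rw [e1] at h3
      rw [e2] at ih
      have h4 : ENNReal.ofReal ((R / (2 * δ)) ^ β * R ^ ((n:ℝ) - β)) ≤
          ENNReal.ofReal (C * (2 * R) ^ n) := by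
        rw [ENNReal.ofReal_mul NNReal.zero_le_coe, ENNReal.ofReal_coe_nnreal]
        exact h3.trans (by gcongr)
      rw [ENNReal.ofReal_le_ofReal_iff (by positivity), Real.div_rpow hR0.le (by positivity), h2δ,
        Real.rpow_sub hR0, Real.rpow_natCast, mul_pow 2 R, ha] at h4
      have hRn : 0 < R ^ n := by positivity
      have hRβ : 0 < R ^ β := by positivity
      have e3 : R ^ β / (1 / (((C:ℝ) + 1) * 2 ^ n)) * (R ^ n / R ^ β) =
          ((C:ℝ) + 1) * (2 ^ n * R ^ n) := by
        field_simp
      rw [e3] at h4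
      have : (0:ℝ) < 2 ^ n * R ^ n := by positivity
      nlinarith
  have h5 : ∀ j, volume (ball x (r / 2) ∩ Ω) ≤ ENNReal.ofReal ((δ * r * (1 / 2) ^ j) ^ n) := by
    intro j
    refine (measure_mono (inter_subset_inter_left _ (ball_subset_ball ?_))).trans (hstep j)
    have : (0:ℝ) ≤ (1/2) ^ j := by positivity
    simp only [ht]; nlinarith
  have h6 : Tendsto (fun j : ℕ => ENNReal.ofReal ((δ * r * (1 / 2) ^ j) ^ n)) atTop (𝓝 0) := by
    have h7 : Tendsto (fun j : ℕ => (δ * r * (1 / 2 : ℝ) ^ j) ^ n) atTop (𝓝 0) := by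
      have := ((tendsto_pow_atTop_nhds_zero_of_lt_one (by norm_num : (0:ℝ) ≤ 1 / 2)
        (by norm_num)).const_mul (δ * r)).pow n
      rwa [mul_zero, zero_pow (by omega)] at this
    simpa using ENNReal.tendsto_ofReal h7
  have h8 := ge_of_tendsto' h6 h5
  have h9 : 0 < volume (ball x (r / 2) ∩ Ω) :=
    (isOpen_ball.inter hΩ).measure_pos volume ⟨x, mem_ball_self (by positivity), hx⟩
  exact absurd h8 (not_le.2 h9)

lemma exists_far {x : EE n} {r : ℝ}
    (hd : ENNReal.ofReal r < 2 * Metric.ediam Ω) : ∃ y ∈ Ω, r / 4 < dist y x := by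
  by_contra hcon
  push Not at hcon
  have h1 : Metric.ediam Ω ≤ ENNReal.ofReal (r / 2) := by
    refine Metric.ediam_le fun y hy z hz => ?_
    rw [edist_dist]
    apply ENNReal.ofReal_le_ofReal
    have := dist_triangle_right y z x
    linarith [hcon y hy, hcon z hz]
  have h2 : 2 * Metric.ediam Ω ≤ ENNReal.ofReal r := by
    calc _ ≤ 2 * ENNReal.ofReal (r / 2) := by gcongr
      _ = ENNReal.ofReal 2 * ENNReal.ofReal (r / 2) := by simp
      _ = _ := by rw [← ENNReal.ofReal_mul (by norm_num)]; congr 1; ring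
  exact absurd hd (not_lt.2 h2)

lemma ahlfors_of_extension (hn : 1 ≤ n) (h : IsYoung φ) (hK : IsDoubling φ K) (hβ : 0 < β)
    (hβn : β < n ∨ n < β) (hCβ : CbetaFinite β φ) (hΩ : IsOpen Ω) (hΩc : IsConnected Ω)
    (hE : IsExtensionDomain n β φ Ω) : AhlforsRegular n Ω := by
  rcases hβn with hβn | hβn
  · obtain ⟨δ, hδ, hvol⟩ := volume_ge_of_lt hn h hK hβ hβn hCβ hΩ hE
    refine ⟨(δ / 8) ^ n, by positivity, fun x hx r hr hrd => ?_⟩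
    obtain ⟨y, hy, hyx⟩ := exists_far (x := x) hrd
    have hr8 : 0 < r / 8 := by positivity
    have e : (δ / 8) ^ n * r ^ n = (δ * (r / 8)) ^ n := by rw [← mul_pow]; congr 1; ring
    rw [e]
    have hsub : volume (ball x (r / 8) ∩ Ω) ≤ volume (ball x r ∩ Ω) :=
      measure_mono (inter_subset_inter_left _ (ball_subset_ball (by linarith)))
    refine le_trans ?_ hsub
    rcases le_total (volume (ball x (r / 8) ∩ Ω)) (volume (ball y (r / 8) ∩ Ω)) with hc | hc
    · exact hvol x y (r / 8) hx hr8 (by rw [dist_comm]; linarith) hc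
    · exact (hvol y x (r / 8) hy hr8 (by linarith) hc).trans hc
  · obtain ⟨C, hC⟩ := volume_step_of_gt h hK hβ hβn hCβ hΩ hE
    have hc0 : (0:ℝ) < (1 / 16) ^ β * (1 / 4) ^ ((n:ℝ) - β) / (C + 1) := by positivity
    refine ⟨(1 / 16) ^ β * (1 / 4) ^ ((n:ℝ) - β) / (C + 1), hc0, fun x hx r hr hrd => ?_⟩
    obtain ⟨y, hy, hyx⟩ := exists_far (x := x) hrd
    obtain ⟨z, hz, hz1, hz2⟩ : ∃ z ∈ Ω, r / 8 < dist z x ∧ dist z x ≤ r / 4 := by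
      have := hΩc.isPreconnected.intermediate_value hx hy
        (f := fun z => dist z x) (by fun_prop)
      obtain ⟨z, hz, hz'⟩ := this (show r / 4 ∈ Icc (dist x x) (dist y x) from
        ⟨by rw [dist_self]; positivity, hyx.le⟩)
      simp only at hz'
      exact ⟨z, hz, by rw [hz']; linarith, hz'.le⟩
    have h1 := hC x z (r / 8) (r / 4) (by positivity) hx hz hz1 hz2
    have hsub : volume (ball x (r / 8) ∩ Ω) ≤ volume (ball x r ∩ Ω) :=
      measure_mono (inter_subset_inter_left _ (ball_subset_ball (by linarith)))
    have h2 : ENNReal.ofReal ((r / 8 / 2) ^ β * (r / 4) ^ ((n:ℝ) - β)) ≤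
        ((C + 1 : ℝ≥0) : ℝ≥0∞) * volume (ball x r ∩ Ω) :=
      h1.trans (by
        push_cast
        gcongr
        exact le_self_add)
    have e : (1 / 16) ^ β * (1 / 4) ^ ((n:ℝ) - β) / (C + 1) * r ^ n =
        ((C + 1 : ℝ≥0) : ℝ)⁻¹ * ((r / 8 / 2) ^ β * (r / 4) ^ ((n:ℝ) - β)) := by
      have e1 : r / 8 / 2 = 1 / 16 * r := by ring
      have e2 : r / 4 = 1 / 4 * r := by ring
      rw [e1, e2, Real.mul_rpow (by norm_num) hr.le, Real.mul_rpow (by norm_num) hr.le,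
        Real.rpow_sub hr, Real.rpow_natCast]
      have : 0 < r ^ β := by positivity
      push_cast
      field_simp
    rw [e, ENNReal.ofReal_mul (by positivity), ENNReal.ofReal_inv_of_pos (by positivity),
      ENNReal.ofReal_coe_nnreal]
    exact ENNReal.inv_mul_le_iff (by simp) ENNReal.coe_ne_top |>.2 h2

end AhlforsOfExt

/-! ### Ahlfors regular sets -/

/-- A nonempty open set that is Ahlfors `n`-regular with constant `θ`. -/
structure RegSet {n : ℕ} (Ω : Set (EE n)) (θ : ℝ) : Prop where
  isOpen : IsOpen Ω
  nonempty : Ω.Nonempty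
  pos : 0 < θ
  vol : ∀ x ∈ Ω, ∀ r : ℝ, 0 < r → ENNReal.ofReal r < 2 * Metric.ediam Ω →
    ENNReal.ofReal (θ * r ^ n) ≤ volume (ball x r ∩ Ω)

namespace RegSet

variable {n : ℕ} {Ω : Set (EE n)} {θ : ℝ}

lemma meas (hR : RegSet Ω θ) : MeasurableSet Ω := hR.isOpen.measurableSet

/-- Regularity at points outside `Ω`, at scales above the distance to `Ω`. -/
lemma vol_ge (hR : RegSet Ω θ) {y : EE n} {R : ℝ} (hR0 : 0 < R)
    (hRD : ENNReal.ofReal R < 8 * Metric.ediam Ω) (hy : infDist y Ω ≤ R / 2) :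
    ENNReal.ofReal (θ * (R / 4) ^ n) ≤ volume (ball y R ∩ Ω) := by
  obtain ⟨y0, hy0, hd⟩ := (Metric.infDist_lt_iff hR.nonempty).1
    (by linarith : infDist y Ω < 3 / 4 * R)
  have h1 : ENNReal.ofReal (R / 4) < 2 * Metric.ediam Ω := by
    by_contra hcon
    push Not at hcon
    refine absurd hRD (not_lt.2 ?_)
    calc 8 * Metric.ediam Ω = 4 * (2 * Metric.ediam Ω) := by ring
      _ ≤ 4 * ENNReal.ofReal (R / 4) := by gcongr
      _ = ENNReal.ofReal 4 * ENNReal.ofReal (R / 4) := by simp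
      _ = ENNReal.ofReal R := by rw [← ENNReal.ofReal_mul (by norm_num)]; congr 1; ring
  refine (hR.vol y0 hy0 (R / 4) (by positivity) h1).trans
    (measure_mono (inter_subset_inter_left _ (ball_subset_ball' ?_)))
  rw [dist_comm]; linarith

lemma dist_le {s : ℝ} (hs0 : 0 ≤ s) (hs : 2 * Metric.ediam Ω ≤ ENNReal.ofReal s) (x : EE n)
    {z : EE n} (hz : z ∈ Ω) : dist x z ≤ infDist x Ω + s / 2 := by
  have hfin : Metric.ediam Ω ≠ ∞ := by
    intro h
    rw [h, ENNReal.mul_top (by norm_num)] at hs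
    exact ENNReal.ofReal_ne_top (top_le_iff.1 hs)
  have hb : Bornology.IsBounded Ω := Metric.isBounded_iff_ediam_ne_top.2 hfin
  refine (Metric.dist_le_infDist_add_diam hb hz).trans ?_
  have h1 : 2 * Metric.diam Ω ≤ s := by
    have h2 := ENNReal.toReal_mono ENNReal.ofReal_ne_top hs
    rw [ENNReal.toReal_mul, ENNReal.toReal_ofReal hs0] at h2
    simpa [Metric.diam] using h2
  linarith

end RegSet

/-- Measurable functions that are integrable on the bounded parts of `Ω`. -/
structure GoodFun {n : ℕ} (Ω : Set (EE n)) (u : EE n → ℝ) : Prop where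
  meas : Measurable u
  int : ∀ x R, IntegrableOn u (ball x R ∩ Ω)

/-- The average of `u` over `B(x, 2^k) ∩ Ω`. -/
noncomputable def Av {n : ℕ} (Ω : Set (EE n)) (u : EE n → ℝ) (x : EE n) (k : ℤ) : ℝ :=
  ⨍ z in ball x ((2:ℝ) ^ k) ∩ Ω, u z

/-- The normalized oscillation `2^{-2kn} ∫∫ Φ(u(z)-u(w)) dz dw` over `B(x, 2^k) ∩ Ω`. -/
noncomputable def Osc {n : ℕ} (φ : ℝ → ℝ) (Ω : Set (EE n)) (u : EE n → ℝ) (x : EE n) (k : ℤ) :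
    ℝ≥0∞ :=
  dy n k * dy n k * ∫⁻ z in ball x ((2:ℝ) ^ k) ∩ Ω, ∫⁻ w in ball x ((2:ℝ) ^ k) ∩ Ω,
    Phi φ (u z - u w)

section Averages

variable {n : ℕ} {Ω : Set (EE n)} {θ : ℝ} {φ : ℝ → ℝ} {K : ℝ}

lemma inv_vol_le {c : ℝ} (hc : 0 < c) {V : ℝ≥0∞} {k : ℤ}
    (hV : ENNReal.ofReal (c * ((2:ℝ) ^ k) ^ n) ≤ V) : V⁻¹ ≤ ENNReal.ofReal c⁻¹ * dy n k := by
  refine (ENNReal.inv_le_inv.2 hV).trans (le_of_eq ?_)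
  rw [← ENNReal.ofReal_inv_of_pos (by positivity), mul_inv, ENNReal.ofReal_mul (by positivity), dy,
    Real.rpow_neg (by positivity), Real.rpow_natCast]

/-- A volume-normalized oscillation integral with a bounded factor inside is controlled by a
multiple of `Osc`. -/
lemma Osc_bound (h : IsYoung φ) (hK : IsDoubling φ K) {c : ℝ} (hc : 0 < c) (M₀ : ℝ) :
    ∃ C : ℝ≥0, ∀ (u : EE n → ℝ) (x : EE n) (k : ℤ) (M : ℝ), |M| ≤ M₀ →
      ENNReal.ofReal (c * ((2:ℝ) ^ k) ^ n) ≤ volume (ball x ((2:ℝ) ^ k) ∩ Ω) →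
      (volume (ball x ((2:ℝ) ^ k) ∩ Ω))⁻¹ * (volume (ball x ((2:ℝ) ^ k) ∩ Ω))⁻¹ *
        ∫⁻ z in ball x ((2:ℝ) ^ k) ∩ Ω, ∫⁻ w in ball x ((2:ℝ) ^ k) ∩ Ω, Phi φ (M * (u z - u w)) ≤
      C * Osc φ Ω u x k := by
  obtain ⟨C, -, hC⟩ := Phi_mul_le h hK M₀
  refine ⟨c⁻¹.toNNReal * c⁻¹.toNNReal * C, fun u x k M hM hV => ?_⟩
  have h1 := inv_vol_le hc hV
  have h2 : ∫⁻ z in ball x ((2:ℝ) ^ k) ∩ Ω, ∫⁻ w in ball x ((2:ℝ) ^ k) ∩ Ω, Phi φ (M * (u z - u w))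
      ≤ C * ∫⁻ z in ball x ((2:ℝ) ^ k) ∩ Ω, ∫⁻ w in ball x ((2:ℝ) ^ k) ∩ Ω,
        Phi φ (u z - u w) := by
    rw [← lintegral_const_mul' _ _ ENNReal.coe_ne_top]
    refine lintegral_mono fun z => ?_
    rw [← lintegral_const_mul' _ _ ENNReal.coe_ne_top]
    refine lintegral_mono fun w => hC _ _ ?_
    rw [abs_mul, abs_mul]
    exact mul_le_mul_of_nonneg_right (hM.trans (le_abs_self _)) (abs_nonneg _)
  refine (mul_le_mul' (mul_le_mul' h1 h1) h2).trans (le_of_eq ?_)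
  unfold Osc
  push_cast
  change _ * (C * _) = ENNReal.ofReal c⁻¹ * ENNReal.ofReal c⁻¹ * C * _
  ring

/-- Averages over comparable balls differ by at most the oscillation on a slightly larger ball. -/
lemma Phi_Av_sub_le (h : IsYoung φ) (hK : IsDoubling φ K) (hR : RegSet Ω θ) :
    ∃ C : ℝ≥0, ∀ u : EE n → ℝ, GoodFun Ω u → ∀ (x y : EE n) (k j : ℤ), j = k ∨ j = k + 1 →
      infDist x Ω ≤ (2:ℝ) ^ k / 4 → infDist y Ω ≤ (2:ℝ) ^ k / 4 → dist x y ≤ (2:ℝ) ^ k →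
      Phi φ (Av Ω u x k - Av Ω u y j) ≤ C * Osc φ Ω u x (k + 2) := by
  have hθ := hR.pos
  have hom : (0:ℝ) < om n := om_pos
  set c0 : ℝ := θ / 16 ^ n with hc0
  have hc0p : 0 < c0 := by positivity
  set c : ℝ := c0 / om n with hc
  have hcp : 0 < c := by positivity
  obtain ⟨C, hC⟩ := Osc_bound (Ω := Ω) (n := n) h hK hc0p (2 / c)
  refine ⟨C, fun u hu x y k j hj hx hy hxy => ?_⟩
  have hk0 : (0:ℝ) < 2 ^ k := by positivity
  have hk2 : (2:ℝ) ^ (k + 2) = 4 * 2 ^ k := by rw [zpow_add₀ two_ne_zero]; norm_num; ring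
  have hkj : (2:ℝ) ^ k ≤ 2 ^ j := zpow_le_zpow_right₀ one_le_two (by omega)
  have hj2 : (2:ℝ) ^ j ≤ 2 * 2 ^ k := by
    have : (2:ℝ) ^ (k + 1) = 2 * 2 ^ k := by rw [zpow_add₀ two_ne_zero]; norm_num; ring
    rw [← this]; exact zpow_le_zpow_right₀ one_le_two (by omega)
  rcases lt_or_ge (ENNReal.ofReal ((2:ℝ) ^ k)) (8 * Metric.ediam Ω) with hD | hD
  · have hsx : ball x ((2:ℝ) ^ k) ∩ Ω ⊆ ball x ((2:ℝ) ^ (k + 2)) ∩ Ω :=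
      inter_subset_inter_left _ (ball_subset_ball (by linarith))
    have hsy : ball y ((2:ℝ) ^ j) ∩ Ω ⊆ ball x ((2:ℝ) ^ (k + 2)) ∩ Ω :=
      inter_subset_inter_left _ (ball_subset_ball' (by rw [dist_comm]; linarith))
    have hvx := hR.vol_ge hk0 hD (y := x) (by linarith)
    have hvy : _ ≤ volume (ball y ((2:ℝ) ^ j) ∩ Ω) := (hR.vol_ge hk0 hD (y := y) (by linarith)).trans
      (measure_mono (inter_subset_inter_left _ (ball_subset_ball hkj)))
    have heq : θ * ((2:ℝ) ^ k / 4) ^ n = c0 * ((2:ℝ) ^ (k + 2)) ^ n := by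
      rw [hc0, hk2, div_mul_eq_mul_div, mul_div_assoc, ← div_pow]
      congr 2; ring
    rw [heq] at hvx hvy
    have hfin : ∀ z (r : ℝ), volume (ball z r ∩ Ω) ≠ ∞ := fun z r =>
      ((measure_mono inter_subset_left).trans_lt measure_ball_lt_top).ne
    have hB0 := hvx.trans (measure_mono hsx)
    have hup : c * volume.real (ball x ((2:ℝ) ^ (k + 2)) ∩ Ω) ≤ c0 * ((2:ℝ) ^ (k + 2)) ^ n := by
      have : volume.real (ball x ((2:ℝ) ^ (k + 2)) ∩ Ω) ≤ ((2:ℝ) ^ (k + 2)) ^ n * om n := by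
        rw [← volume_real_ball_eq x (by positivity)]
        exact measureReal_mono inter_subset_left measure_ball_lt_top.ne
      calc _ ≤ c * (((2:ℝ) ^ (k + 2)) ^ n * om n) := by gcongr
        _ = _ := by rw [hc]; field_simp
    have hlo : ∀ {s : Set (EE n)}, volume s ≠ ∞ →
        ENNReal.ofReal (c0 * ((2:ℝ) ^ (k + 2)) ^ n) ≤ volume s →
        c0 * ((2:ℝ) ^ (k + 2)) ^ n ≤ volume.real s := fun hs h1 =>
      (ENNReal.ofReal_le_iff_le_toReal hs).1 h1
    refine (Phi_average_sub_le h (measurableSet_ball.inter hR.meas)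
      (measurableSet_ball.inter hR.meas) hsx hsy (hfin _ _) hcp
      (lt_of_lt_of_le (by positivity) (hlo (hfin _ _) hB0))
      (hup.trans (hlo (hfin _ _) hvx)) (hup.trans (hlo (hfin _ _) hvy)) (hu.int _ _)).trans ?_
    exact hC u x (k + 2) (2 / c) (by rw [abs_of_pos (by positivity)]) hB0
    -- at scales above the diameter both balls contain all of `Ω`
  · have hs : 2 * Metric.ediam Ω ≤ ENNReal.ofReal ((2:ℝ) ^ k / 4) := by
      have h1 : 4 * (2 * Metric.ediam Ω) ≤ 4 * ENNReal.ofReal ((2:ℝ) ^ k / 4) := by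
        calc 4 * (2 * Metric.ediam Ω) = 8 * Metric.ediam Ω := by ring
          _ ≤ _ := hD
          _ = ENNReal.ofReal 4 * ENNReal.ofReal ((2:ℝ) ^ k / 4) := by
            rw [← ENNReal.ofReal_mul (by norm_num)]; congr 1; ring
          _ = _ := by simp
      exact (ENNReal.mul_le_mul_iff_right (by norm_num) (by norm_num)).1 h1
    have e1 : ball x ((2:ℝ) ^ k) ∩ Ω = Ω := inter_eq_right.2 fun z hz => by
      have := RegSet.dist_le (by positivity) hs x hz
      rw [mem_ball, dist_comm]; linarith
    have e2 : ball y ((2:ℝ) ^ j) ∩ Ω = Ω := inter_eq_right.2 fun z hz => by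
      have := RegSet.dist_le (by positivity) hs y hz
      rw [mem_ball, dist_comm]; linarith
    rw [Av, Av, e1, e2, sub_self, Phi_zero h]
    exact zero_le

end Averages

/-! ### Oscillations summed over all scales -/

section Master

variable {n : ℕ} {β : ℝ} {Ω : Set (EE n)} {θ : ℝ} {φ : ℝ → ℝ} {K : ℝ}

lemma lint_ball_inter (Ω : Set (EE n)) (x : EE n) (r : ℝ) (f : EE n → ℝ≥0∞) :
    ∫⁻ z in ball x r ∩ Ω, f z = ∫⁻ z in Ω, if dist z x < r then f z else 0 := by
  rw [← Measure.restrict_restrict measurableSet_ball, ← lintegral_indicator measurableSet_ball]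
  rfl

lemma lint_if_ball (z : EE n) {r : ℝ} (hr : 0 < r) (a : ℝ≥0∞) :
    ∫⁻ x, (if dist z x < r then a else 0) = a * (ENNReal.ofReal (r ^ n) * om n) := by
  rw [← volume_ball_eq z hr, ← setLIntegral_const, ← lintegral_indicator measurableSet_ball]
  refine lintegral_congr fun x => ?_
  simp only [indicator_apply, mem_ball, dist_comm]

lemma measurable_Osc (h : IsYoung φ) {u : EE n → ℝ} (hu : Measurable u)
    (k : ℤ) : Measurable fun x => Osc φ Ω u x k := by
  have hP := measurable_Phi h
  have key : (fun x => Osc φ Ω u x k) = fun x => dy n k * dy n k * ∫⁻ z in Ω, ∫⁻ w in Ω,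
      if dist z x < (2:ℝ) ^ k ∧ dist w x < (2:ℝ) ^ k then Phi φ (u z - u w) else 0 := by
    funext x
    rw [Osc, lint_ball_inter]
    congr 1
    refine lintegral_congr fun z => ?_
    rw [lint_ball_inter]
    by_cases hz : dist z x < (2:ℝ) ^ k <;> simp [hz]
  rw [key]
  refine Measurable.const_mul ?_ _
  refine Measurable.lintegral_prod_right' (f := fun p : EE n × EE n => ∫⁻ w in Ω,
      if dist p.2 p.1 < (2:ℝ) ^ k ∧ dist w p.1 < (2:ℝ) ^ k then Phi φ (u p.2 - u w) else 0) ?_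
  refine Measurable.lintegral_prod_right' (f := fun q : (EE n × EE n) × EE n =>
      if dist q.1.2 q.1.1 < (2:ℝ) ^ k ∧ dist q.2 q.1.1 < (2:ℝ) ^ k
        then Phi φ (u q.1.2 - u q.2) else 0) ?_
  have hset : ∀ f : (EE n × EE n) × EE n → EE n, Measurable f →
      MeasurableSet {q : (EE n × EE n) × EE n | dist (f q) q.1.1 < (2:ℝ) ^ k} := fun f hf =>
    measurableSet_lt (by fun_prop) measurable_const
  exact Measurable.ite ((hset (fun q => q.1.2) (by fun_prop)).inter
    (hset (fun q => q.2) (by fun_prop))) (by fun_prop) measurable_const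

/-- The oscillations summed over all scales and integrated over all centres are controlled by the
modular on `Ω`. -/
lemma lintegral_tsum_Osc_le (h : IsYoung φ) (hβ : 0 < β) (Ω : Set (EE n)) :
    ∃ C : ℝ≥0, ∀ u : EE n → ℝ, Measurable u →
      ∫⁻ x, ∑' k : ℤ, dy β k * Osc φ Ω u x k ≤ C * modI n β φ Ω u := by
  have hP := measurable_Phi h
  obtain ⟨C, hC⟩ := tsum_dy_le (γ := n + β) (by positivity)
  refine ⟨om n * (dy (n + β) (-1)).toNNReal * C, fun u hu => ?_⟩
  set g : ℤ → EE n → ℝ≥0∞ := fun k z =>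
    ∫⁻ w in Ω, if dist w z < (2:ℝ) ^ (k + 1) then Phi φ (u z - u w) else 0 with hg
  have hgm : ∀ k, Measurable (g k) := fun k => by
    refine Measurable.lintegral_prod_right' (f := fun q : EE n × EE n =>
      if dist q.2 q.1 < (2:ℝ) ^ (k + 1) then Phi φ (u q.1 - u q.2) else 0) ?_
    refine Measurable.ite (measurableSet_lt (by fun_prop) measurable_const) (by fun_prop)
      measurable_const
  have h1 : ∀ k x, Osc φ Ω u x k ≤
      dy n k * dy n k * ∫⁻ z in Ω, if dist z x < (2:ℝ) ^ k then g k z else 0 := by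
    intro k x
    rw [Osc, lint_ball_inter]
    gcongr with z
    split_ifs with hz
    · rw [lint_ball_inter]
      refine lintegral_mono fun w => ?_
      dsimp only
      split_ifs with h2 h3
      · exact le_rfl
      · refine absurd ?_ h3
        rw [zpow_add_one₀ two_ne_zero]
        linarith [dist_triangle w x z, dist_comm x z]
      · exact zero_le
      · exact le_rfl
    · exact le_rfl
  have h2 : ∀ k, ∫⁻ x, dy β k * Osc φ Ω u x k ≤
      om n * ∫⁻ z in Ω, dy (n + β) k * g k z := by
    intro k
    calc ∫⁻ x, dy β k * Osc φ Ω u x k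
        ≤ ∫⁻ x, dy β k * (dy n k * dy n k * ∫⁻ z in Ω, if dist z x < (2:ℝ) ^ k then g k z else 0) := by
          gcongr with x; exact h1 k x
      _ = dy β k * (dy n k * dy n k *
            ∫⁻ x, ∫⁻ z in Ω, if dist z x < (2:ℝ) ^ k then g k z else 0) := by
          rw [lintegral_const_mul' _ _ (dy_ne_top _ _), lintegral_const_mul' _ _
            (ENNReal.mul_ne_top (dy_ne_top _ _) (dy_ne_top _ _))]
      _ = dy β k * (dy n k * dy n k * ∫⁻ z in Ω, g k z * (dy (-(n:ℝ)) k * om n)) := by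
          rw [lintegral_lintegral_swap]
          · congr 3
            funext z
            rw [lint_if_ball z (by positivity), dy_nat]
          · refine Measurable.aemeasurable ?_
            exact Measurable.ite (measurableSet_lt (by fun_prop) measurable_const)
              ((hgm k).comp measurable_snd) measurable_const
      _ = _ := by
          rw [lintegral_mul_const' _ _ (ENNReal.mul_ne_top (dy_ne_top _ _) ENNReal.coe_ne_top),
            lintegral_const_mul' _ _ (dy_ne_top _ _), dy_add]
          have : dy (n:ℝ) k * dy (-(n:ℝ)) k = 1 := by rw [← dy_add, add_neg_cancel, dy_zero]
          calc _ = (dy (n:ℝ) k * dy (-(n:ℝ)) k) * (om n * (dy n k * dy β k * ∫⁻ z in Ω, g k z)) := by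
                ring
            _ = _ := by rw [this, one_mul]
  rw [lintegral_tsum fun k => ((measurable_Osc h hu k).const_mul _).aemeasurable]
  refine (ENNReal.tsum_le_tsum h2).trans ?_
  rw [ENNReal.tsum_mul_left, ← lintegral_tsum fun k => ((hgm k).const_mul _).aemeasurable]
  push_cast
  rw [dy_toNNReal, mul_assoc, mul_assoc]
  gcongr
  rw [modI, ← mul_assoc, ← lintegral_const_mul' _ _ (ENNReal.mul_ne_top (dy_ne_top _ _)
    ENNReal.coe_ne_top)]
  refine lintegral_mono fun z => ?_
  have h3 : ∑' k, dy (n + β) k * g k z = ∫⁻ w in Ω, ∑' k : ℤ, dy (n + β) k *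
      (if dist w z < (2:ℝ) ^ (k + 1) then Phi φ (u z - u w) else 0) := by
    rw [lintegral_tsum]
    · congr 1; funext k
      rw [hg, lintegral_const_mul' _ _ (dy_ne_top _ _)]
    · intro k
      refine Measurable.aemeasurable (Measurable.const_mul ?_ _)
      exact Measurable.ite (measurableSet_lt (by fun_prop) measurable_const) (by fun_prop)
        measurable_const
  dsimp only
  rw [h3, ← lintegral_const_mul' _ _ (ENNReal.mul_ne_top (dy_ne_top _ _) ENNReal.coe_ne_top)]
  refine lintegral_mono fun w => ?_
  dsimp only
  rcases eq_or_ne w z with rfl | hwz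
  · simp [Phi_zero h]
  have hd : 0 < dist w z := dist_pos.2 hwz
  have h4 : ∑' k : ℤ, dy (n + β) k *
      (if dist w z < (2:ℝ) ^ (k + 1) then Phi φ (u z - u w) else 0) =
      (∑' k : ℤ, dy (n + β) (-1) * (if dist w z < (2:ℝ) ^ k then dy (n + β) k else 0)) *
        Phi φ (u z - u w) := by
    rw [← (Equiv.addRight (1:ℤ)).tsum_eq fun k => dy (n + β) (-1) *
      (if dist w z < (2:ℝ) ^ k then dy (n + β) k else 0), ← ENNReal.tsum_mul_right]
    refine tsum_congr fun k => ?_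
    change _ = (dy (n + β) (-1) * (if dist w z < (2:ℝ) ^ (k + 1) then dy (n + β) (k + 1) else 0)) *
      Phi φ (u z - u w)
    by_cases hk : dist w z < (2:ℝ) ^ (k + 1)
    · rw [if_pos hk, if_pos hk, dy_shift _ k 1]
      have : dy ((n:ℝ) + β) (-1) * dy (n + β) 1 = 1 := by
        rw [← dy_shift]; simp [dy]
      calc _ = (dy ((n:ℝ) + β) (-1) * dy (n + β) 1) * (dy (n + β) k * Phi φ (u z - u w)) := by
            rw [this, one_mul]
        _ = _ := by ring
    · simp [hk]
  rw [h4, ENNReal.tsum_mul_left, dist_comm z w]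
  calc _ ≤ dy (n + β) (-1) * (C * kr n β (dist w z)) * Phi φ (u z - u w) := by
        gcongr; exact hC _ hd
    _ = _ := by ring

/-- Approximation of `u` by its averages, summed over all scales, at points of `Ω`. -/
lemma lintegral_tsum_sub_Av_le (h : IsYoung φ) (hβ : 0 < β) (hR : RegSet Ω θ) :
    ∃ C : ℝ≥0, ∀ u : EE n → ℝ, GoodFun Ω u →
      ∫⁻ x in Ω, ∑' k : ℤ, dy β k * Phi φ (u x - Av Ω u x k) ≤ C * modI n β φ Ω u := by
  have hP := measurable_Phi h
  obtain ⟨C, hC⟩ := tsum_dy_le hβ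
  refine ⟨C * θ⁻¹.toNNReal, fun u hu => ?_⟩
  have hum := hu.meas
  rw [modI, ← lintegral_const_mul' _ _ ENNReal.coe_ne_top]
  refine setLIntegral_mono' hR.meas fun x hx => ?_
  have hvpos : ∀ r : ℝ, 0 < r → volume (ball x r ∩ Ω) ≠ 0 := fun r hr =>
    ((isOpen_ball.inter hR.isOpen).measure_pos volume ⟨x, mem_ball_self hr, hx⟩).ne'
  have h1 : ∀ k : ℤ, Phi φ (u x - Av Ω u x k) ≤ ∫⁻ z in Ω,
      if dist z x < (2:ℝ) ^ k then
        (volume (ball x ((2:ℝ) ^ k) ∩ Ω))⁻¹ * Phi φ (u x - u z) else 0 := by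
    intro k
    have hk0 : (0:ℝ) < 2 ^ k := by positivity
    have hlt : volume (ball x ((2:ℝ) ^ k) ∩ Ω) < ∞ :=
      (measure_mono inter_subset_left).trans_lt measure_ball_lt_top
    have : IsFiniteMeasure (volume.restrict (ball x ((2:ℝ) ^ k) ∩ Ω)) := ⟨by simpa using hlt⟩
    have hne : volume.restrict (ball x ((2:ℝ) ^ k) ∩ Ω) ≠ 0 := by
      simpa using hvpos _ hk0
    have : NeZero (volume.restrict (ball x ((2:ℝ) ^ k) ∩ Ω)) := ⟨hne⟩
    have e : u x - Av Ω u x k = ⨍ z in ball x ((2:ℝ) ^ k) ∩ Ω, (u x - u z) := by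
      have := integral_sub (μ := (volume.restrict (ball x ((2:ℝ) ^ k) ∩ Ω) univ)⁻¹ •
        volume.restrict (ball x ((2:ℝ) ^ k) ∩ Ω)) (integrable_const (u x))
        ((hu.int x ((2:ℝ) ^ k)).smul_measure (by simpa using hvpos _ hk0))
      rw [average, this, Av, average]
      congr 1
      exact (average_const _ _).symm
    rw [e]
    refine (Phi_average_le h hne ((integrable_const (u x)).sub (hu.int x _))).trans (le_of_eq ?_)
    rw [lint_ball_inter, Measure.restrict_apply_univ, ← lintegral_const_mul' _ _
      (ENNReal.inv_ne_top.2 (hvpos _ hk0))]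
    simp only [mul_ite, mul_zero, Pi.sub_apply]
  have hm : ∀ (k : ℤ) (a : ℝ≥0∞), Measurable fun z =>
      if dist z x < (2:ℝ) ^ k then a * Phi φ (u x - u z) else 0 := fun k a =>
    Measurable.ite (measurableSet_lt (by fun_prop) measurable_const) (by fun_prop) measurable_const
  calc ∑' k : ℤ, dy β k * Phi φ (u x - Av Ω u x k)
      ≤ ∑' k : ℤ, ∫⁻ z in Ω, dy β k * (if dist z x < (2:ℝ) ^ k then
        (volume (ball x ((2:ℝ) ^ k) ∩ Ω))⁻¹ * Phi φ (u x - u z) else 0) := by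
        refine ENNReal.tsum_le_tsum fun k => ?_
        rw [lintegral_const_mul' _ _ (dy_ne_top _ _)]
        gcongr
        exact h1 k
    _ = ∫⁻ z in Ω, ∑' k : ℤ, dy β k * (if dist z x < (2:ℝ) ^ k then
        (volume (ball x ((2:ℝ) ^ k) ∩ Ω))⁻¹ * Phi φ (u x - u z) else 0) :=
        (lintegral_tsum fun k => ((hm k _).const_mul _).aemeasurable).symm
    _ ≤ _ := by
      rw [← lintegral_const_mul' _ _ ENNReal.coe_ne_top]
      refine setLIntegral_mono' hR.meas fun z hz => ?_
      rcases eq_or_ne z x with rfl | hzx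
      · simp [Phi_zero h]
      have hd : 0 < dist z x := dist_pos.2 hzx
      have hθ := hR.pos
      -- the ball of radius `|x - z|` already has the measure required by regularity
      have hv : ENNReal.ofReal (θ * dist z x ^ n) ≤ volume (ball x (dist z x) ∩ Ω) := by
        refine hR.vol x hx _ hd ?_
        rw [← edist_dist]
        have h2 : edist z x ≤ Metric.ediam Ω := Metric.edist_le_ediam_of_mem hz hx
        have h3 : 0 < edist z x := edist_pos.2 hzx
        refine lt_of_lt_of_le (?_ : edist z x < 2 * edist z x) (by gcongr)
        rw [two_mul]
        exact ENNReal.lt_add_right (edist_ne_top _ _) h3.ne'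
      calc _ ≤ ∑' k : ℤ, (if dist z x < (2:ℝ) ^ k then dy β k else 0) *
            ((ENNReal.ofReal (θ * dist z x ^ n))⁻¹ * Phi φ (u x - u z)) := by
            refine ENNReal.tsum_le_tsum fun k => ?_
            split_ifs with hk
            · gcongr
              exact hv.trans (measure_mono (inter_subset_inter_left _ (ball_subset_ball hk.le)))
            · simp
        _ ≤ C * ENNReal.ofReal (dist z x ^ (-β)) *
            ((ENNReal.ofReal (θ * dist z x ^ n))⁻¹ * Phi φ (u x - u z)) := by
            rw [ENNReal.tsum_mul_right]
            gcongr
            exact hC _ hd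
        _ = _ := by
          have e1 : ENNReal.ofReal (dist z x ^ (-β)) * (ENNReal.ofReal (θ * dist z x ^ n))⁻¹ =
              ENNReal.ofReal θ⁻¹ * kr n β (dist x z) := by
            rw [← ENNReal.ofReal_inv_of_pos (by positivity), ← ENNReal.ofReal_mul (by positivity),
              kr, dist_comm x z, ← ENNReal.ofReal_mul (by positivity)]
            congr 1
            rw [neg_add, Real.rpow_add hd, Real.rpow_neg hd.le, Real.rpow_neg hd.le,
              Real.rpow_natCast]
            field_simp
          push_cast
          calc _ = C * (ENNReal.ofReal (dist z x ^ (-β)) *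
                (ENNReal.ofReal (θ * dist z x ^ n))⁻¹) * Phi φ (u x - u z) := by ring
            _ = _ := by
              rw [e1]
              change _ = C * ENNReal.ofReal θ⁻¹ * _
              ring

end Master

/-! ### The extension operator -/

/-- The averaging kernel of the extension operator: a tent equal to `d(x) = dist(x, Ω)` on
`B(x, 2 d(x))`, vanishing off `B(x, 3 d(x))` and Lipschitz in both variables. -/
noncomputable def tent {n : ℕ} (Ω : Set (EE n)) (x z : EE n) : ℝ :=
  min (infDist x Ω) (max 0 (3 * infDist x Ω - dist x z))

/-- The extension of `u`: off `Ω`, the weighted average of `u` against the kernel `tent`. -/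
noncomputable def extn {n : ℕ} (Ω : Set (EE n)) (u : EE n → ℝ) (x : EE n) : ℝ :=
  if x ∈ Ω then u x else (∫ z in Ω, tent Ω x z * u z) / ∫ z in Ω, tent Ω x z

section Kernel

variable {n : ℕ} {β : ℝ} {Ω : Set (EE n)} {θ : ℝ} {φ : ℝ → ℝ} {K : ℝ}

lemma tent_nonneg (x z : EE n) : 0 ≤ tent Ω x z := le_min infDist_nonneg (le_max_left _ _)

lemma tent_le (x z : EE n) : tent Ω x z ≤ infDist x Ω := min_le_left _ _

lemma tent_eq {x z : EE n} (hz : dist x z ≤ 2 * infDist x Ω) : tent Ω x z = infDist x Ω :=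
  min_eq_left (le_max_of_le_right (by linarith))

lemma tent_eq_zero {x z : EE n} (hz : 3 * infDist x Ω ≤ dist x z) : tent Ω x z = 0 := by
  unfold tent
  rw [max_eq_left (by linarith), min_eq_right infDist_nonneg]

lemma measurable_tent (Ω : Set (EE n)) : Measurable fun p : EE n × EE n => tent Ω p.1 p.2 := by
  unfold tent
  have : Measurable fun p : EE n × EE n => infDist p.1 Ω :=
    (continuous_infDist_pt Ω).measurable.comp measurable_fst
  fun_prop

lemma measurable_tent_right (Ω : Set (EE n)) (x : EE n) : Measurable (tent Ω x) :=
  (measurable_tent Ω).of_uncurry_left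

lemma abs_tent_sub_le (x y z : EE n) : |tent Ω x z - tent Ω y z| ≤ 4 * dist x y := by
  have h1 : |infDist x Ω - infDist y Ω| ≤ dist x y := by
    rw [abs_sub_le_iff]
    constructor
    · linarith [infDist_le_infDist_add_dist (s := Ω) (x := x) (y := y)]
    · linarith [infDist_le_infDist_add_dist (s := Ω) (x := y) (y := x), dist_comm x y]
  have h2 : |dist x z - dist y z| ≤ dist x y := abs_dist_sub_le _ _ _
  refine (abs_min_sub_min_le_max _ _ _ _).trans (max_le ?_ ?_)
  · linarith [dist_nonneg (x := x) (y := y)]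
  · refine (abs_max_sub_max_le_max _ _ _ _).trans (max_le ?_ ?_)
    · simp
    · rw [abs_le] at *
      constructor <;> linarith [h1.1, h1.2, h2.1, h2.2]

lemma setIntegral_tent_eq (hΩ : MeasurableSet Ω) {x y : EE n} {R : ℝ}
    (hR : dist x y + 3 * infDist y Ω ≤ R) (f : EE n → ℝ) :
    ∫ z in Ω, tent Ω y z * f z = ∫ z in ball x R ∩ Ω, tent Ω y z * f z := by
  refine setIntegral_eq_of_subset_of_forall_sdiff_eq_zero hΩ inter_subset_right fun z hz => ?_
  rw [tent_eq_zero, zero_mul]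
  have : ¬ dist z x < R := fun hlt => hz.2 ⟨hlt, hz.1⟩
  push Not at this
  linarith [dist_triangle z y x, dist_comm z y, dist_comm y x]

lemma setIntegral_tent_eq' (hΩ : MeasurableSet Ω) {x y : EE n} {R : ℝ}
    (hR : dist x y + 3 * infDist y Ω ≤ R) :
    ∫ z in Ω, tent Ω y z = ∫ z in ball x R ∩ Ω, tent Ω y z := by
  simpa using setIntegral_tent_eq hΩ hR (fun _ => 1)

lemma vol_inter_ne_top (x : EE n) (R : ℝ) : volume (ball x R ∩ Ω) ≠ ∞ :=
  ((measure_mono inter_subset_left).trans_lt measure_ball_lt_top).ne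

lemma integrableOn_tent (x y : EE n) (R : ℝ) : IntegrableOn (tent Ω x) (ball y R ∩ Ω) := by
  refine Measure.integrableOn_of_bounded (M := infDist x Ω) (vol_inter_ne_top _ _)
    (measurable_tent_right Ω x).aestronglyMeasurable ?_
  refine ae_of_all _ fun z => ?_
  rw [Real.norm_eq_abs, abs_of_nonneg (tent_nonneg _ _)]
  exact tent_le _ _

/-- The mass of the kernel at a point off `Ω`, below the diameter scale. -/
lemma mass_ge (hR : RegSet Ω θ) {x : EE n} (hd : 0 < infDist x Ω)
    (hD : ENNReal.ofReal (2 * infDist x Ω) < 8 * Metric.ediam Ω) :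
    infDist x Ω * (θ * (infDist x Ω / 2) ^ n) ≤ ∫ z in Ω, tent Ω x z := by
  have h1 := hR.vol_ge (by positivity) hD (y := x) (by linarith)
  have h2 : θ * (infDist x Ω / 2) ^ n ≤ volume.real (ball x (2 * infDist x Ω) ∩ Ω) := by
    have := (ENNReal.ofReal_le_iff_le_toReal (vol_inter_ne_top _ _)).1 h1
    rw [show 2 * infDist x Ω / 4 = infDist x Ω / 2 by ring] at this
    exact this
  rw [setIntegral_tent_eq' hR.meas (x := x) (y := x) (R := 3 * infDist x Ω) (by simp)]
  calc _ ≤ infDist x Ω * volume.real (ball x (2 * infDist x Ω) ∩ Ω) := by gcongr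
    _ = ∫ z in ball x (2 * infDist x Ω) ∩ Ω, infDist x Ω := by
      rw [setIntegral_const, smul_eq_mul, mul_comm]
    _ = ∫ z in ball x (2 * infDist x Ω) ∩ Ω, tent Ω x z := by
      refine setIntegral_congr_fun (measurableSet_ball.inter hR.meas) fun z hz => ?_
      exact (tent_eq (by rw [dist_comm]; exact (mem_ball.1 hz.1).le)).symm
    _ ≤ _ := by
      refine setIntegral_mono_set (integrableOn_tent _ _ _) (ae_of_all _ fun z => tent_nonneg _ _) ?_
      exact (inter_subset_inter_left _ (ball_subset_ball (by linarith))).eventuallyLE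

/-- Where the kernel is constant on `Ω`, the extension is the mean of `u`. -/
lemma extn_eq_average (hΩ : MeasurableSet Ω) (u : EE n → ℝ) {x : EE n} (hd : 0 < infDist x Ω)
    (hfar : ∀ z ∈ Ω, dist x z ≤ 2 * infDist x Ω) : extn Ω u x = ⨍ z in Ω, u z := by
  have hx : x ∉ Ω := fun hx => hd.ne' (infDist_zero_of_mem hx)
  have h1 : ∫ z in Ω, tent Ω x z * u z = infDist x Ω * ∫ z in Ω, u z := by
    rw [← integral_const_mul]
    exact setIntegral_congr_fun hΩ fun z hz => by simp only [tent_eq (hfar z hz)]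
  have h2 : ∫ z in Ω, tent Ω x z = infDist x Ω * volume.real Ω := by
    rw [mul_comm, ← smul_eq_mul, ← setIntegral_const]
    exact setIntegral_congr_fun hΩ fun z hz => by simp only [tent_eq (hfar z hz)]
  rw [extn, if_neg hx, h1, h2, setAverage_eq, smul_eq_mul, mul_div_mul_left _ _ hd.ne']
  ring

/-- Two unit-mass kernels that are uniformly close produce close averages. -/
lemma Phi_two_kernels (h : IsYoung φ) {x : EE n} {R : ℝ} (h0 : volume (ball x R ∩ Ω) ≠ 0)
    {u a b : EE n → ℝ} (hu : GoodFun Ω u) (ha : Measurable a) (hb : Measurable b) {Ma Mb M : ℝ}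
    (haM : ∀ z, |a z| ≤ Ma) (hbM : ∀ z, |b z| ≤ Mb) (hM : ∀ z, |a z - b z| ≤ M)
    (ha1 : ∫ z in ball x R ∩ Ω, a z = 1) (hb1 : ∫ z in ball x R ∩ Ω, b z = 1) :
    Phi φ ((∫ z in ball x R ∩ Ω, a z * u z) - ∫ z in ball x R ∩ Ω, b z * u z) ≤
      (volume (ball x R ∩ Ω))⁻¹ * (volume (ball x R ∩ Ω))⁻¹ *
        ∫⁻ z in ball x R ∩ Ω, ∫⁻ w in ball x R ∩ Ω,
          Phi φ (M * volume.real (ball x R ∩ Ω) * (u z - u w)) := by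
  have hlt : volume (ball x R ∩ Ω) < ∞ := (vol_inter_ne_top x R).lt_top
  have : IsFiniteMeasure (volume.restrict (ball x R ∩ Ω)) := ⟨by simpa using hlt⟩
  have hne : volume.restrict (ball x R ∩ Ω) ≠ 0 := by simpa using h0
  have hia : Integrable a (volume.restrict (ball x R ∩ Ω)) :=
    Integrable.of_bound ha.aestronglyMeasurable Ma (ae_of_all _ haM)
  have hib : Integrable b (volume.restrict (ball x R ∩ Ω)) :=
    Integrable.of_bound hb.aestronglyMeasurable Mb (ae_of_all _ hbM)
  have hau : Integrable (fun z => a z * u z) (volume.restrict (ball x R ∩ Ω)) :=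
    (hu.int x R).bdd_mul ha.aestronglyMeasurable (ae_of_all _ haM)
  have hbu : Integrable (fun z => b z * u z) (volume.restrict (ball x R ∩ Ω)) :=
    (hu.int x R).bdd_mul hb.aestronglyMeasurable (ae_of_all _ hbM)
  have := Phi_kernel_le h hne (hu.int x R) (k := fun z => a z - b z)
    (ha.sub hb).aestronglyMeasurable hM (by rw [integral_sub hia hib, ha1, hb1, sub_self])
  simp only [sub_mul, Measure.restrict_apply_univ, measureReal_restrict_apply_univ] at this
  rw [integral_sub hau hbu] at this
  simpa only [sub_mul] using this

end Kernel

/-! ### Local estimates for the extension -/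

section Local

variable {n : ℕ} {β : ℝ} {Ω : Set (EE n)} {θ : ℝ} {φ : ℝ → ℝ} {K : ℝ}

lemma ediam_le_of_le {a b : ℝ} (hab : a ≤ 4 * b) (hD : 8 * Metric.ediam Ω ≤ ENNReal.ofReal a) :
    2 * Metric.ediam Ω ≤ ENNReal.ofReal b := by
  have h1 : 4 * (2 * Metric.ediam Ω) ≤ 4 * ENNReal.ofReal b := by
    calc 4 * (2 * Metric.ediam Ω) = 8 * Metric.ediam Ω := by ring
      _ ≤ _ := hD
      _ ≤ ENNReal.ofReal (4 * b) := ENNReal.ofReal_le_ofReal hab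
      _ = 4 * ENNReal.ofReal b := by rw [ENNReal.ofReal_mul (by norm_num)]; simp
  exact (ENNReal.mul_le_mul_iff_right (by norm_num) (by norm_num)).1 h1

lemma vol_real_le (x : EE n) {R : ℝ} (hR : 0 < R) :
    volume.real (ball x R ∩ Ω) ≤ R ^ n * om n := by
  rw [← volume_real_ball_eq x hR]
  exact measureReal_mono inter_subset_left measure_ball_lt_top.ne

lemma vol_scale_ge (hR : RegSet Ω θ) {x : EE n} {k : ℤ} (hd : 0 < infDist x Ω)
    (hk1 : 4 * infDist x Ω ≤ (2:ℝ) ^ k) (hk2 : (2:ℝ) ^ k ≤ 16 * infDist x Ω)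
    (hD : ENNReal.ofReal (2 * infDist x Ω) < 8 * Metric.ediam Ω) :
    ENNReal.ofReal (θ / 32 ^ n * ((2:ℝ) ^ k) ^ n) ≤ volume (ball x ((2:ℝ) ^ k) ∩ Ω) := by
  have hθ := hR.pos
  refine le_trans (ENNReal.ofReal_le_ofReal ?_) ((hR.vol_ge (by positivity) hD (y := x)
    (by linarith)).trans (measure_mono (inter_subset_inter_left _ (ball_subset_ball ?_))))
  · rw [div_mul_eq_mul_div, mul_div_assoc, ← div_pow]
    exact mul_le_mul_of_nonneg_left (pow_le_pow_left₀ (by positivity) (by linarith) n) hθ.le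
  · linarith

/-- Off `Ω`, the extension is close to the average of `u` at the scale of the distance to `Ω`. -/
lemma Phi_extn_sub_Av_le (h : IsYoung φ) (hK : IsDoubling φ K) (hR : RegSet Ω θ) :
    ∃ C : ℝ≥0, ∀ u : EE n → ℝ, GoodFun Ω u → ∀ (x : EE n) (k : ℤ), 0 < infDist x Ω →
      4 * infDist x Ω ≤ (2:ℝ) ^ k → (2:ℝ) ^ k ≤ 16 * infDist x Ω →
      Phi φ (extn Ω u x - Av Ω u x k) ≤ C * Osc φ Ω u x k := by
  have hθ := hR.pos
  have hom : (0:ℝ) < om n := om_pos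
  obtain ⟨C, hC⟩ := Osc_bound (Ω := Ω) (n := n) h hK (c := θ / 32 ^ n) (by positivity)
    (2 * (32 ^ n * om n / θ))
  refine ⟨C, fun u hu x k hd hk1 hk2 => ?_⟩
  set d := infDist x Ω with hdd
  rcases lt_or_ge (ENNReal.ofReal (2 * d)) (8 * Metric.ediam Ω) with hD | hD
  · have hx : x ∉ Ω := fun hx => hd.ne' (infDist_zero_of_mem hx)
    have hv := vol_scale_ge hR hd hk1 hk2 hD
    set B := ball x ((2:ℝ) ^ k) ∩ Ω with hB
    have hV : θ * (d / 2) ^ n ≤ volume.real B := by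
      have h1 := (hR.vol_ge (by positivity) hD (y := x) (by linarith)).trans
        (measure_mono (inter_subset_inter_left _ (ball_subset_ball (by linarith :
          2 * d ≤ (2:ℝ) ^ k))))
      rw [show 2 * d / 4 = d / 2 by ring] at h1
      exact (ENNReal.ofReal_le_iff_le_toReal (vol_inter_ne_top _ _)).1 h1
    have hVp : 0 < volume.real B := lt_of_lt_of_le (by positivity) hV
    have h0 : volume B ≠ 0 := fun h0 => by simp [measureReal_def, h0] at hVp
    have hm := mass_ge hR hd hD
    set m := ∫ z in Ω, tent Ω x z with hmdef
    have hmp : 0 < m := lt_of_lt_of_le (by positivity) hm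
    have hmB : ∫ z in B, tent Ω x z = m :=
      (setIntegral_tent_eq' hR.meas (x := x) (y := x) (by simp; linarith)).symm
    have hae : ∀ z, |tent Ω x z / m| ≤ (θ * (d / 2) ^ n)⁻¹ := fun z => by
      rw [abs_of_nonneg (div_nonneg (tent_nonneg _ _) hmp.le), div_le_iff₀ hmp,
        ← div_eq_inv_mul, le_div_iff₀ (by positivity)]
      exact le_trans (mul_le_mul_of_nonneg_right (tent_le x z) (by positivity)) hm
    have hbe : ∀ _ : EE n, |(volume.real B)⁻¹| ≤ (θ * (d / 2) ^ n)⁻¹ := fun _ => by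
      rw [abs_of_pos (by positivity)]
      gcongr
    have key := Phi_two_kernels h (x := x) (R := (2:ℝ) ^ k) h0 hu
      (a := fun z => tent Ω x z / m) (b := fun _ => (volume.real B)⁻¹)
      ((measurable_tent_right Ω x).div_const _) measurable_const hae hbe
      (M := 2 * (θ * (d / 2) ^ n)⁻¹)
      (fun z => (abs_sub _ _).trans (by linarith [hae z, hbe z]))
      (by rw [integral_div, ← hB, hmB, div_self hmp.ne'])
      (by rw [setIntegral_const, smul_eq_mul, mul_inv_cancel₀ hVp.ne'])
    have e : extn Ω u x - Av Ω u x k = (∫ z in B, tent Ω x z / m * u z) -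
        ∫ z in B, (volume.real B)⁻¹ * u z := by
      rw [extn, if_neg hx, setIntegral_tent_eq hR.meas (x := x) (y := x) (R := (2:ℝ) ^ k)
        (by simp; linarith), Av, setAverage_eq, integral_const_mul, smul_eq_mul, ← integral_div]
      simp only [div_mul_eq_mul_div, ← hmdef, ← hB]
    rw [e]
    refine key.trans (hC u x k _ ?_ hv)
    rw [abs_of_pos (by positivity)]
    have hup := vol_real_le (Ω := Ω) x (by positivity : (0:ℝ) < 2 ^ k)
    calc 2 * (θ * (d / 2) ^ n)⁻¹ * volume.real B
        ≤ 2 * (θ * (d / 2) ^ n)⁻¹ * ((32 * (d / 2)) ^ n * om n) := by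
          gcongr
          refine hup.trans ?_
          gcongr
          linarith
      _ = 2 * (32 ^ n * om n / θ) := by
          rw [mul_pow]; field_simp
  · have hs := ediam_le_of_le (Ω := Ω) (b := d / 2) (by linarith) hD
    have hdist : ∀ z ∈ Ω, dist x z ≤ 2 * d := fun z hz => by
      linarith [RegSet.dist_le (by positivity) hs x hz]
    have e1 : ball x ((2:ℝ) ^ k) ∩ Ω = Ω := inter_eq_right.2 fun z hz => by
      rw [mem_ball, dist_comm]; linarith [hdist z hz]
    rw [extn_eq_average hR.meas u hd hdist, Av, e1, sub_self, Phi_zero h]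
    exact zero_le

/-- Near a point off `Ω` the extension is Lipschitz at the scale of the distance to `Ω`. -/
lemma Phi_extn_sub_extn_le (h : IsYoung φ) (hR : RegSet Ω θ) :
    ∃ C₀ : ℝ, 0 < C₀ ∧ ∀ u : EE n → ℝ, GoodFun Ω u → ∀ (x y : EE n) (k : ℤ), 0 < infDist x Ω →
      dist x y < infDist x Ω / 2 →
      8 * infDist x Ω ≤ (2:ℝ) ^ k → (2:ℝ) ^ k ≤ 16 * infDist x Ω →
      Phi φ (extn Ω u x - extn Ω u y) ≤
        ENNReal.ofReal (θ / 32 ^ n)⁻¹ * ENNReal.ofReal (θ / 32 ^ n)⁻¹ * (dy n k * dy n k *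
        ∫⁻ z in ball x ((2:ℝ) ^ k) ∩ Ω, ∫⁻ w in ball x ((2:ℝ) ^ k) ∩ Ω,
          Phi φ (dist x y / infDist x Ω * (C₀ * (u z - u w)))) := by
  have hθ := hR.pos
  have hom : (0:ℝ) < om n := om_pos
  refine ⟨4 * (64 ^ n * om n / θ) * (1 + 64 ^ n * om n / θ), by positivity,
    fun u hu x y k hd hxy hk1 hk2 => ?_⟩
  set d := infDist x Ω with hdd
  set d' := infDist y Ω with hdd'
  have hd1 : d' ≤ 3 / 2 * d := by
    have := infDist_le_infDist_add_dist (s := Ω) (x := y) (y := x)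
    rw [dist_comm] at this
    linarith
  have hd2 : d / 2 ≤ d' := by
    have := infDist_le_infDist_add_dist (s := Ω) (x := x) (y := y)
    linarith
  have hd' : 0 < d' := by linarith
  rcases lt_or_ge (ENNReal.ofReal (4 * d)) (8 * Metric.ediam Ω) with hD | hD
  · have hx : x ∉ Ω := fun hx => hd.ne' (infDist_zero_of_mem hx)
    have hy : y ∉ Ω := fun hy => hd'.ne' (infDist_zero_of_mem hy)
    have hDx : ENNReal.ofReal (2 * d) < 8 * Metric.ediam Ω :=
      lt_of_le_of_lt (ENNReal.ofReal_le_ofReal (by linarith)) hD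
    have hDy : ENNReal.ofReal (2 * d') < 8 * Metric.ediam Ω :=
      lt_of_le_of_lt (ENNReal.ofReal_le_ofReal (by linarith)) hD
    have hv := vol_scale_ge hR hd (by linarith) hk2 hDx
    set B := ball x ((2:ℝ) ^ k) ∩ Ω with hB
    have hBm : MeasurableSet B := measurableSet_ball.inter hR.meas
    have h0 : volume B ≠ 0 := fun h0 => by
      rw [h0, nonpos_iff_eq_zero, ENNReal.ofReal_eq_zero] at hv
      exact absurd hv (not_le.2 (by positivity))
    have hup : volume.real B ≤ (64 * (d / 4)) ^ n * om n := by
      refine (vol_real_le (Ω := Ω) x (by positivity : (0:ℝ) < 2 ^ k)).trans ?_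
      gcongr
      linarith
    have hm := mass_ge hR hd hDx
    have hm' := mass_ge hR hd' hDy
    have hmB := setIntegral_tent_eq' hR.meas (x := x) (y := x) (R := (2:ℝ) ^ k)
      (by simp; linarith)
    have hmB' := setIntegral_tent_eq' hR.meas (x := x) (y := y) (R := (2:ℝ) ^ k)
      (by linarith)
    have hnum := setIntegral_tent_eq hR.meas (x := x) (y := x) (R := (2:ℝ) ^ k)
      (by simp; linarith) u
    have hnum' := setIntegral_tent_eq hR.meas (x := x) (y := y) (R := (2:ℝ) ^ k)
      (by linarith) u
    rw [← hdd] at hm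
    rw [← hdd'] at hm'
    rw [← hB] at hmB hmB' hnum hnum'
    set m := ∫ z in Ω, tent Ω x z with hmdef
    set m' := ∫ z in Ω, tent Ω y z with hmdef'
    set V := (d / 4) ^ n with hVdef
    have hVp : 0 < V := by positivity
    have hmV : d * (θ * V) ≤ m := le_trans (by rw [hVdef]; gcongr <;> linarith) hm
    have hmV' : d' * (θ * V) ≤ m' := by
      have hpow : V ≤ (d' / 2) ^ n := pow_le_pow_left₀ (by positivity) (by linarith) n
      exact le_trans (by gcongr) hm'
    have hmp : 0 < m := lt_of_lt_of_le (by positivity) hmV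
    have hmp' : 0 < m' := lt_of_lt_of_le (by positivity) hmV'
    have hae : ∀ z, |tent Ω x z / m| ≤ d / m := fun z => by
      rw [abs_of_nonneg (div_nonneg (tent_nonneg _ _) hmp.le)]
      gcongr
      exact tent_le x z
    have hbe : ∀ z, |tent Ω y z / m'| ≤ (θ * V)⁻¹ := fun z => by
      rw [abs_of_nonneg (div_nonneg (tent_nonneg _ _) hmp'.le), div_le_iff₀ hmp',
        ← div_eq_inv_mul, le_div_iff₀ (by positivity)]
      exact le_trans (mul_le_mul_of_nonneg_right (tent_le y z) (by positivity)) hmV'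
    have hmm : |m' - m| ≤ 4 * dist x y * volume.real B := by
      rw [hmB, hmB', ← integral_sub (integrableOn_tent _ _ _) (integrableOn_tent _ _ _)]
      refine norm_setIntegral_le_of_norm_le_const (f := fun z => tent Ω y z - tent Ω x z)
        (vol_inter_ne_top x ((2:ℝ) ^ k)).lt_top fun z _ => ?_
      rw [Real.norm_eq_abs, abs_sub_comm]
      exact abs_tent_sub_le x y z
    have hM : ∀ z, |tent Ω x z / m - tent Ω y z / m'| ≤
        4 * dist x y / (d * (θ * V)) * (1 + 64 ^ n * om n / θ) := fun z => by
      have e : tent Ω x z / m - tent Ω y z / m' =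
          (tent Ω x z - tent Ω y z) / m + tent Ω y z / m' * ((m' - m) / m) := by
        field_simp
        ring
      rw [e]
      have h1 : |(tent Ω x z - tent Ω y z) / m| ≤ 4 * dist x y / (d * (θ * V)) := by
        rw [abs_div, abs_of_pos hmp]
        gcongr
        exact abs_tent_sub_le x y z
      have h2 : |(m' - m) / m| ≤ 4 * dist x y * ((64 * (d / 4)) ^ n * om n) / (d * (θ * V)) := by
        rw [abs_div, abs_of_pos hmp]
        gcongr
        exact hmm.trans (by gcongr)
      calc _ ≤ |(tent Ω x z - tent Ω y z) / m| + |tent Ω y z / m'| * |(m' - m) / m| := by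
            rw [← abs_mul]; exact abs_add_le _ _
        _ ≤ 4 * dist x y / (d * (θ * V)) + (θ * V)⁻¹ *
            (4 * dist x y * ((64 * (d / 4)) ^ n * om n) / (d * (θ * V))) := by
            gcongr
            exact hbe z
        _ = _ := by
            rw [mul_pow, ← hVdef]
            field_simp
    have key := Phi_two_kernels h (x := x) (R := (2:ℝ) ^ k) h0 hu
      (a := fun z => tent Ω x z / m) (b := fun z => tent Ω y z / m')
      ((measurable_tent_right Ω x).div_const _) ((measurable_tent_right Ω y).div_const _) hae hbe
      hM
      (by rw [integral_div, ← hB, ← hmB, div_self hmp.ne'])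
      (by rw [integral_div, ← hB, ← hmB', div_self hmp'.ne'])
    have e : extn Ω u x - extn Ω u y = (∫ z in B, tent Ω x z / m * u z) -
        ∫ z in B, tent Ω y z / m' * u z := by
      rw [extn, if_neg hx, extn, if_neg hy, hnum, hnum', ← integral_div, ← integral_div]
      simp only [div_mul_eq_mul_div, ← hmdef, ← hmdef']
    rw [e, ← mul_assoc]
    refine key.trans ?_
    have h1 := inv_vol_le (by positivity) hv
    rw [mul_mul_mul_comm (ENNReal.ofReal _) (ENNReal.ofReal _) (dy n k)]
    refine mul_le_mul' (mul_le_mul' h1 h1) ?_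
    refine lintegral_mono fun z => lintegral_mono fun w => Phi_mono h ?_
    rw [← mul_assoc (dist x y / d), abs_mul _ (u z - u w), abs_mul _ (u z - u w)]
    refine mul_le_mul_of_nonneg_right ?_ (abs_nonneg _)
    rw [abs_of_nonneg (by positivity), abs_of_nonneg (by positivity)]
    calc _ ≤ 4 * dist x y / (d * (θ * V)) * (1 + 64 ^ n * om n / θ) *
          ((64 * (d / 4)) ^ n * om n) := by gcongr
      _ = _ := by
        rw [mul_pow, ← hVdef]
        field_simp
  · have hs := ediam_le_of_le (Ω := Ω) (b := d) (by linarith) hD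
    rw [extn_eq_average hR.meas u hd fun z hz => by
        linarith [RegSet.dist_le (by positivity) hs x hz],
      extn_eq_average hR.meas u hd' fun z hz => by
        linarith [RegSet.dist_le (by positivity) hs y hz], sub_self, Phi_zero h]
    exact zero_le

end Local

/-! ### Comparison of the extension with averages -/

section Pointwise

variable {n : ℕ} {β : ℝ} {Ω : Set (EE n)} {θ : ℝ} {φ : ℝ → ℝ} {K : ℝ}

lemma measurable_setIntegral {f : EE n → EE n → ℝ} (hf : Measurable fun p : EE n × EE n => f p.1 p.2)
    (Ω : Set (EE n)) : Measurable fun x => ∫ z in Ω, f x z :=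
  (StronglyMeasurable.integral_prod_right' (ν := volume.restrict Ω)
    hf.stronglyMeasurable).measurable

lemma measurable_extn (hΩ : MeasurableSet Ω) {u : EE n → ℝ} (hu : Measurable u) :
    Measurable (extn Ω u) := by
  unfold extn
  refine Measurable.ite hΩ hu (Measurable.div ?_ ?_)
  · exact measurable_setIntegral (f := fun x z => tent Ω x z * u z)
      ((measurable_tent Ω).mul (hu.comp measurable_snd)) Ω
  · exact measurable_setIntegral (measurable_tent Ω) Ω

lemma measurable_Av {u : EE n → ℝ} (hu : Measurable u) (Ω : Set (EE n)) (k : ℤ) :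
    Measurable fun x => Av Ω u x k := by
  have hset : MeasurableSet {p : EE n × EE n | dist p.2 p.1 < (2:ℝ) ^ k} :=
    measurableSet_lt (by fun_prop) measurable_const
  have key : ∀ f : EE n → ℝ, Measurable f →
      Measurable fun x => ∫ z in ball x ((2:ℝ) ^ k) ∩ Ω, f z := by
    intro f hf
    have e : (fun x => ∫ z in ball x ((2:ℝ) ^ k) ∩ Ω, f z) =
        fun x => ∫ z in Ω, if dist z x < (2:ℝ) ^ k then f z else 0 := by
      funext x
      rw [← Measure.restrict_restrict measurableSet_ball, ← integral_indicator measurableSet_ball]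
      rfl
    rw [e]
    exact measurable_setIntegral (f := fun x z => if dist z x < (2:ℝ) ^ k then f z else 0)
      (Measurable.ite hset (hf.comp measurable_snd) measurable_const) Ω
  have e : (fun x => Av Ω u x k) = fun x => (∫ z in ball x ((2:ℝ) ^ k) ∩ Ω, (1:ℝ))⁻¹ *
      ∫ z in ball x ((2:ℝ) ^ k) ∩ Ω, u z := by
    funext x
    rw [Av, setAverage_eq, smul_eq_mul, setIntegral_const, smul_eq_mul, mul_one]
  rw [e]
  exact (key _ measurable_const).inv.mul (key _ hu)

/-- The boundary of a regular set is null, by the density theorem: off `Ω` almost every point has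
density zero, which regularity forbids at points of the closure. -/
lemma ae_infDist_pos (hR : RegSet Ω θ) : ∀ᵐ x : EE n, x ∉ Ω → 0 < infDist x Ω := by
  by_cases hsub : Ω.Subsingleton
  · refine ae_of_all _ fun x hx => ?_
    have hcl : IsClosed Ω := hsub.isClosed
    refine lt_of_le_of_ne infDist_nonneg fun h0 => hx ?_
    exact (hcl.mem_iff_infDist_zero hR.nonempty).2 h0.symm
  have hD : Metric.ediam Ω ≠ 0 := fun h0 => hsub (Metric.ediam_eq_zero_iff.1 h0)
  have hθ := hR.pos
  have hom : (0:ℝ) < om n := om_pos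
  have hnt : Nontrivial (EE n) := by
    obtain ⟨a, _, b, _, hab⟩ := Set.not_subsingleton_iff.1 hsub
    exact ⟨a, b, hab⟩
  filter_upwards [Besicovitch.ae_tendsto_measure_inter_div_of_measurableSet volume hR.meas] with x hx
  intro hxΩ
  refine lt_of_le_of_ne infDist_nonneg fun h0 => ?_
  rw [indicator_of_notMem hxΩ] at hx
  have hev : ∀ᶠ r in 𝓝[>] (0:ℝ), ENNReal.ofReal (θ / 4 ^ n / om n) ≤
      volume (Ω ∩ closedBall x r) / volume (closedBall x r) := by
    have h8 : ∀ᶠ r in 𝓝[>] (0:ℝ), ENNReal.ofReal r < 8 * Metric.ediam Ω := by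
      have ht : Tendsto (fun r : ℝ => ENNReal.ofReal r) (𝓝[>] 0) (𝓝 (ENNReal.ofReal 0)) :=
        (ENNReal.continuous_ofReal.tendsto 0).mono_left nhdsWithin_le_nhds
      rw [ENNReal.ofReal_zero] at ht
      exact ht.eventually_lt_const (pos_iff_ne_zero.2 (mul_ne_zero (by norm_num) hD))
    filter_upwards [h8, self_mem_nhdsWithin] with r hr hr0
    have hr0 : 0 < r := hr0
    have hv := hR.vol_ge hr0 hr (y := x) (by rw [← h0]; positivity)
    have hb : volume (closedBall x r) = ENNReal.ofReal (r ^ n * om n) := by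
      rw [Measure.addHaar_closedBall_eq_addHaar_ball, volume_ball_eq x hr0,
        ENNReal.ofReal_mul (by positivity)]
      simp
    rw [ENNReal.le_div_iff_mul_le (Or.inr (by
      refine ne_of_gt (lt_of_lt_of_le (ENNReal.ofReal_pos.2 (by positivity)) (hv.trans
        (measure_mono fun z hz => ⟨hz.2, ball_subset_closedBall hz.1⟩))))) (Or.inr
        ((measure_mono inter_subset_right).trans_lt measure_closedBall_lt_top).ne), hb,
      ← ENNReal.ofReal_mul (by positivity)]
    refine le_trans (le_of_eq ?_) (hv.trans
      (measure_mono fun z hz => ⟨hz.2, ball_subset_closedBall hz.1⟩))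
    congr 1
    rw [div_pow]
    field_simp
  have := ge_of_tendsto hx hev
  rw [nonpos_iff_eq_zero, ENNReal.ofReal_eq_zero] at this
  exact absurd this (not_le.2 (by positivity))

/-- The approximation error of the extension by averages of `u`, at scales above the distance
to `Ω`. -/
noncomputable def Err (φ : ℝ → ℝ) (Ω : Set (EE n)) (u : EE n → ℝ) (x : EE n) (k : ℤ) : ℝ≥0∞ :=
  if 4 * infDist x Ω ≤ (2:ℝ) ^ k then Phi φ (extn Ω u x - Av Ω u x k) else 0

lemma measurable_Err (h : IsYoung φ) (hΩ : MeasurableSet Ω) {u : EE n → ℝ} (hu : Measurable u)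
    (k : ℤ) : Measurable fun x => Err φ Ω u x k := by
  unfold Err
  have h1 : Measurable fun x : EE n => infDist x Ω := (continuous_infDist_pt Ω).measurable
  exact Measurable.ite (measurableSet_le (h1.const_mul 4) measurable_const)
    ((measurable_Phi h).comp ((measurable_extn hΩ hu).sub (measurable_Av hu Ω k)))
    measurable_const

/-- Off `Ω` the summed approximation errors telescope into oscillations; the factor `2^{-β}` per
scale absorbs the constant in the quasi-triangle inequality. -/
lemma tsum_Err_le (h : IsYoung φ) (hK : IsDoubling φ K) (hβ : 0 < β) (hR : RegSet Ω θ) :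
    ∃ C : ℝ≥0, ∀ u : EE n → ℝ, GoodFun Ω u → ∀ x : EE n, 0 < infDist x Ω →
      ∑' k : ℤ, dy β k * Err φ Ω u x k ≤ C * ∑' k : ℤ, dy β k * Osc φ Ω u x k := by
  obtain ⟨C1, hC1⟩ := Phi_extn_sub_Av_le h hK hR
  obtain ⟨C2, hC2⟩ := Phi_Av_sub_le h hK hR
  set q' : ℝ≥0 := ((2:ℝ) ^ (β / 2)).toNNReal with hq'
  set q : ℝ≥0 := ((2:ℝ) ^ (-(β / 2))).toNNReal with hq
  have hq1 : 1 < q' := by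
    rw [hq', Real.one_lt_toNNReal]
    exact Real.one_lt_rpow one_lt_two (by positivity)
  have hq2 : q < 1 := by
    rw [hq, Real.toNNReal_lt_one]
    exact Real.rpow_lt_one_of_one_lt_of_neg one_lt_two (by linarith)
  have hqq : dy β 1 * q' = q := by
    change ENNReal.ofReal _ * ENNReal.ofReal _ = ENNReal.ofReal _
    rw [← ENNReal.ofReal_mul (by positivity), zpow_one, ← Real.rpow_add two_pos]
    congr 2
    ring
  obtain ⟨C3, hC3⟩ := Phi_add_eps h hK q' hq1
  set Cb : ℝ≥0 := C1 + C3 * C2 * (dy β (-1)).toNNReal with hCb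
  refine ⟨(1 - q)⁻¹ * (Cb * 2), fun u hu x hd => ?_⟩
  obtain ⟨m, hm1, hm2⟩ := exists_mem_Ioc_zpow (by positivity : 0 < 4 * infDist x Ω)
    (one_lt_two : (1:ℝ) < 2)
  set k0 := m + 1 with hk0
  have hm3 : (2:ℝ) ^ k0 = 2 * 2 ^ m := by rw [hk0, zpow_add_one₀ two_ne_zero]; ring
  have hbig : ∀ j : ℕ, 4 * infDist x Ω ≤ (2:ℝ) ^ (k0 + (j:ℤ)) := fun j =>
    hm2.trans (zpow_le_zpow_right₀ one_le_two (by omega))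
  have hinj : Function.Injective (fun j : ℕ => k0 + (j:ℤ)) := fun a b hab => by
    simpa using hab
  set g : ℤ → ℝ≥0∞ := fun k => dy β k * Osc φ Ω u x k with hg
  set s : ℕ → ℝ≥0∞ := fun j => dy β (k0 + j) * Phi φ (extn Ω u x - Av Ω u x (k0 + j)) with hs
  set b : ℕ → ℝ≥0∞ := fun j => Cb * (g (k0 + j) + g (k0 + j + 1)) with hb
  have e1 : ∑' k : ℤ, dy β k * Err φ Ω u x k = ∑' j, s j := by
    rw [← hinj.tsum_eq]
    · refine tsum_congr fun j => ?_
      simp only [hs, Err, if_pos (hbig j)]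
    · intro k hk
      rw [Function.mem_support] at hk
      by_cases hle : 4 * infDist x Ω ≤ (2:ℝ) ^ k
      · have : m < k := (zpow_lt_zpow_iff_right₀ one_lt_two).1 (hm1.trans_le hle)
        exact ⟨(k - k0).toNat, by dsimp only; omega⟩
      · exact absurd (by simp [Err, hle]) hk
  have h0 : s 0 ≤ b 0 := by
    have h1 := hC1 u hu x k0 hd (by simpa using hbig 0) (by linarith)
    calc s 0 = dy β k0 * Phi φ (extn Ω u x - Av Ω u x k0) := by simp [hs]
      _ ≤ dy β k0 * (C1 * Osc φ Ω u x k0) := by gcongr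
      _ = C1 * g k0 := by rw [hg]; ring
      _ ≤ Cb * (g k0 + g (k0 + 1)) := by
        gcongr
        · rw [hCb]; exact le_self_add
        · exact le_self_add
      _ = b 0 := by simp [hb]
  have hstep : ∀ j, s (j + 1) ≤ q * s j + b (j + 1) := by
    intro j
    have h1 := hC2 u hu x x (k0 + j) (k0 + j + 1) (Or.inr rfl) (by linarith [hbig j])
      (by linarith [hbig j]) (by simp only [dist_self]; positivity)
    have h2 := hC3 (extn Ω u x - Av Ω u x (k0 + j)) (Av Ω u x (k0 + j) - Av Ω u x (k0 + j + 1))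
    rw [sub_add_sub_cancel] at h2
    have e2 : k0 + ((j + 1 : ℕ) : ℤ) = k0 + j + 1 := by push_cast; ring
    have e3 : dy β (k0 + j + 1) = dy β (-1) * dy β (k0 + j + 2) := by
      rw [← dy_shift]; congr 1; ring
    calc s (j + 1) = dy β (k0 + j + 1) * Phi φ (extn Ω u x - Av Ω u x (k0 + j + 1)) := by
          simp only [hs, e2]
      _ ≤ dy β (k0 + j + 1) * (q' * Phi φ (extn Ω u x - Av Ω u x (k0 + j)) +
          C3 * (C2 * Osc φ Ω u x (k0 + j + 2))) := by
          gcongr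
          exact h2.trans (by gcongr)
      _ = (dy β 1 * q') * s j + C3 * C2 * dy β (-1) * g (k0 + j + 2) := by
          rw [mul_add]
          congr 1
          · rw [dy_shift, hs]; ring
          · rw [e3, hg]; ring
      _ ≤ _ := by
          rw [hqq]
          gcongr
          simp only [hb, e2]
          rw [show k0 + (j:ℤ) + 1 + 1 = k0 + j + 2 by ring]
          gcongr
          · rw [hCb]
            push_cast
            rw [dy_toNNReal]
            exact le_add_self
          · exact le_add_self
  rw [e1]
  refine (tsum_le_of_contract hq2 h0 hstep).trans ?_
  have hsum : ∑' j, b j ≤ Cb * 2 * ∑' k, g k := by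
    rw [hb, ENNReal.tsum_mul_left, ENNReal.tsum_add, mul_assoc, two_mul]
    gcongr
    · exact ENNReal.tsum_comp_le_tsum_of_injective hinj g
    · exact ENNReal.tsum_comp_le_tsum_of_injective (f := fun j : ℕ => k0 + (j:ℤ) + 1)
        (fun a b hab => by simpa using hab) g
  refine (mul_le_mul_right hsum _).trans (le_of_eq ?_)
  rw [ENNReal.coe_mul, ENNReal.coe_mul]
  push_cast
  ring

end Pointwise

/-! ### Boundedness of the extension in the modular -/

section Near

variable {n : ℕ} {β : ℝ} {Ω : Set (EE n)} {θ : ℝ} {φ : ℝ → ℝ} {K : ℝ}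

/-- Near the diagonal, off `Ω`, the Lipschitz bound on the extension at scale `infDist x Ω` is
integrated against the kernel; this is where finiteness of `C_β` is used. -/
lemma lintegral_near_le (h : IsYoung φ) (hK : IsDoubling φ K) (hβ : 0 < β)
    (hCβ : CbetaFinite β φ) (hR : RegSet Ω θ) :
    ∃ C : ℝ≥0, ∀ u : EE n → ℝ, GoodFun Ω u → ∀ x : EE n, 0 < infDist x Ω →
      ∫⁻ y in ball x (infDist x Ω / 2), Phi φ (extn Ω u x - extn Ω u y) * kr n β (dist x y) ≤
        C * ∑' k : ℤ, dy β k * Osc φ Ω u x k := by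
  have hP := measurable_Phi h
  obtain ⟨C0, hC0, hE⟩ := Phi_extn_sub_extn_le h hR
  obtain ⟨C1, hC1⟩ := lintegral_ball_Phi_le h hβ hCβ n
  obtain ⟨C2, -, hC2⟩ := Phi_mul_le h hK C0
  set A : ℝ≥0 := (θ / 32 ^ n)⁻¹.toNNReal with hA
  refine ⟨A * A * C1 * C2 * (dy β (-4)).toNNReal, fun u hu x hd => ?_⟩
  set d := infDist x Ω with hdd
  obtain ⟨m, hm1, hm2⟩ := exists_mem_Ioc_zpow (by positivity : 0 < 8 * d)
    (one_lt_two : (1:ℝ) < 2)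
  set k := m + 1 with hk
  have hm3 : (2:ℝ) ^ k = 2 * 2 ^ m := by rw [hk, zpow_add_one₀ two_ne_zero]; ring
  set μ : Measure (EE n) := volume.restrict (ball x ((2:ℝ) ^ k) ∩ Ω) with hμ
  have hum := hu.meas
  have hAA : ENNReal.ofReal (θ / 32 ^ n)⁻¹ = (A : ℝ≥0∞) := rfl
  have hprod : ∀ c : ℝ, ∫⁻ z, ∫⁻ w, Phi φ (c * (C0 * (u z - u w))) ∂μ ∂μ =
      ∫⁻ p, Phi φ (c * (C0 * (u p.1 - u p.2))) ∂(μ.prod μ) := fun c =>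
    (lintegral_prod (μ := μ) (ν := μ) (fun p : EE n × EE n => Phi φ (c * (C0 * (u p.1 - u p.2))))
      (hP.comp (by fun_prop)).aemeasurable).symm
  have hprod1 : ∫⁻ z, ∫⁻ w, Phi φ (u z - u w) ∂μ ∂μ =
      ∫⁻ p, Phi φ (u p.1 - u p.2) ∂(μ.prod μ) :=
    (lintegral_prod (μ := μ) (ν := μ) (fun p : EE n × EE n => Phi φ (u p.1 - u p.2))
      (hP.comp (by fun_prop)).aemeasurable).symm
  have hdk : ENNReal.ofReal (d ^ (-β)) ≤ dy β k * dy β (-4) := by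
    rw [← dy_shift]
    refine ENNReal.ofReal_le_ofReal (Real.rpow_le_rpow_of_nonpos (by positivity) ?_ (by linarith))
    rw [zpow_add₀ two_ne_zero, hm3]
    norm_num
    linarith
  calc ∫⁻ y in ball x (d / 2), Phi φ (extn Ω u x - extn Ω u y) * kr n β (dist x y)
      ≤ ∫⁻ y in ball x (d / 2), (A * A * (dy n k * dy n k)) *
          ∫⁻ p, Phi φ (dist x y / d * (C0 * (u p.1 - u p.2))) * kr n β (dist x y)
            ∂(μ.prod μ) := by
        refine setLIntegral_mono' measurableSet_ball fun y hy => ?_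
        rw [mem_ball, dist_comm] at hy
        have h1 := hE u hu x y k hd hy hm2 (by linarith)
        rw [hprod, hAA] at h1
        rw [lintegral_mul_const' _ _ (kr_ne_top _), ← mul_assoc]
        gcongr
        refine h1.trans (le_of_eq (by ring))
    _ = (A * A * (dy n k * dy n k)) * ∫⁻ y in ball x (d / 2),
          ∫⁻ p, Phi φ (dist x y / d * (C0 * (u p.1 - u p.2))) * kr n β (dist x y)
            ∂(μ.prod μ) := lintegral_const_mul' _ _ (ENNReal.mul_ne_top
              (ENNReal.mul_ne_top ENNReal.coe_ne_top ENNReal.coe_ne_top)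
              (ENNReal.mul_ne_top (dy_ne_top _ _) (dy_ne_top _ _)))
    _ = (A * A * (dy n k * dy n k)) * ∫⁻ p, (∫⁻ y in ball x (d / 2),
          Phi φ (dist x y / d * (C0 * (u p.1 - u p.2))) * kr n β (dist x y))
            ∂(μ.prod μ) := by
        rw [lintegral_lintegral_swap]
        refine Measurable.aemeasurable (Measurable.mul (hP.comp ?_) (measurable_kr.comp ?_))
        · fun_prop
        · fun_prop
    _ ≤ (A * A * (dy n k * dy n k)) * ∫⁻ p, (C1 * ENNReal.ofReal (d ^ (-β)) * C2) *
          Phi φ (u p.1 - u p.2) ∂(μ.prod μ) := by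
        gcongr with p
        refine (lintegral_mono_set (ball_subset_ball (show d / 2 ≤ d by linarith))).trans ?_
        refine (hC1 x d _ hd).trans ?_
        rw [mul_assoc (_ * _) (C2 : ℝ≥0∞)]
        gcongr
        exact hC2 _ _ le_rfl
    _ = (A * A * (dy n k * dy n k)) * ((C1 * ENNReal.ofReal (d ^ (-β)) * C2) *
          ∫⁻ p, Phi φ (u p.1 - u p.2) ∂(μ.prod μ)) := by
        rw [lintegral_const_mul' _ _ (ENNReal.mul_ne_top
              (ENNReal.mul_ne_top ENNReal.coe_ne_top ENNReal.ofReal_ne_top) ENNReal.coe_ne_top)]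
    _ = (A * A * C1 * C2) * (ENNReal.ofReal (d ^ (-β)) * Osc φ Ω u x k) := by
        rw [← hprod1, Osc]; ring
    _ ≤ (A * A * C1 * C2) * (dy β k * dy β (-4) * Osc φ Ω u x k) := by gcongr
    _ = (A * A * C1 * C2) * dy β (-4) * (dy β k * Osc φ Ω u x k) := by ring
    _ ≤ (A * A * C1 * C2) * dy β (-4) * ∑' k : ℤ, dy β k * Osc φ Ω u x k := by
        gcongr
        exact ENNReal.le_tsum (f := fun k : ℤ => dy β k * Osc φ Ω u x k) k
    _ = _ := by push_cast; rw [dy_toNNReal]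

end Near

section Assembly

variable {n : ℕ} {β : ℝ} {Ω : Set (EE n)} {θ : ℝ} {φ : ℝ → ℝ} {K : ℝ}

/-- A pair `(x, y)` is either close relative to the distance of one of the points to `Ω`, or both
values of the extension are compared with averages of `u` at a scale comparable to `|x - y|`. -/
lemma Phi_extn_pointwise_le (h : IsYoung φ) (hK : IsDoubling φ K) (hβ : 0 < β)
    (hR : RegSet Ω θ) :
    ∃ C : ℝ≥0, ∀ u : EE n → ℝ, GoodFun Ω u → ∀ x y : EE n,
      Phi φ (extn Ω u x - extn Ω u y) * kr n β (dist x y) ≤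
        C * (∑' k : ℤ, dy (n + β) k * (if dist x y < (2:ℝ) ^ k then
          Err φ Ω u x k + Err φ Ω u y k + Osc φ Ω u x (k + 2) else 0)) +
        (if dist x y < infDist x Ω / 2 then
          Phi φ (extn Ω u x - extn Ω u y) * kr n β (dist x y) else 0) +
        (if dist x y < infDist y Ω / 2 then
          Phi φ (extn Ω u x - extn Ω u y) * kr n β (dist x y) else 0) := by
  obtain ⟨C1, hC1⟩ := Phi_Av_sub_le h hK hR
  obtain ⟨C2, hC2⟩ := Phi_add3_le h hK
  refine ⟨C2 * (1 + C1) * (dy (n + β) (-4)).toNNReal, fun u hu x y => ?_⟩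
  by_cases hx : dist x y < infDist x Ω / 2
  · rw [if_pos hx]
    exact le_add_left (le_refl _) |>.trans le_self_add
  by_cases hy : dist x y < infDist y Ω / 2
  · rw [if_pos hy]
    exact le_add_self
  rcases eq_or_ne x y with rfl | hxy
  · rw [sub_self, Phi_zero h, zero_mul]
    exact zero_le
  have hd : 0 < dist x y := dist_pos.2 hxy
  rw [not_lt] at hx hy
  obtain ⟨m, hm1, hm2⟩ := exists_mem_Ioc_zpow (by positivity : 0 < 8 * dist x y)
    (one_lt_two : (1:ℝ) < 2)
  set k := m + 1 with hk
  have hm3 : (2:ℝ) ^ k = 2 * 2 ^ m := by rw [hk, zpow_add_one₀ two_ne_zero]; ring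
  have hkr : kr n β (dist x y) ≤ dy (n + β) k * dy (n + β) (-4) := by
    rw [← dy_shift, ← kr_zpow]
    refine kr_anti hβ (by positivity) ?_
    rw [zpow_add₀ two_ne_zero, hm3]
    norm_num
    linarith
  have hEx : Phi φ (extn Ω u x - Av Ω u x k) = Err φ Ω u x k := by
    rw [Err, if_pos (by linarith)]
  have hEy : Phi φ (Av Ω u y k - extn Ω u y) = Err φ Ω u y k := by
    rw [Err, if_pos (by linarith), Phi_sub_comm]
  have h1 := hC1 u hu x y k k (Or.inl rfl) (by linarith) (by linarith) (by linarith)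
  have h2 := hC2 (extn Ω u x - Av Ω u x k) (Av Ω u x k - Av Ω u y k) (Av Ω u y k - extn Ω u y)
  rw [sub_add_sub_cancel, sub_add_sub_cancel, hEx, hEy] at h2
  have h3 : Phi φ (extn Ω u x - extn Ω u y) ≤ C2 * (1 + C1) *
      (Err φ Ω u x k + Err φ Ω u y k + Osc φ Ω u x (k + 2)) := by
    refine h2.trans ?_
    rw [mul_assoc]
    gcongr
    calc _ ≤ Err φ Ω u x k + C1 * Osc φ Ω u x (k + 2) + Err φ Ω u y k := by gcongr
      _ ≤ Err φ Ω u x k + C1 * Osc φ Ω u x (k + 2) + Err φ Ω u y k +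
        (C1 * (Err φ Ω u x k + Err φ Ω u y k) + Osc φ Ω u x (k + 2)) := le_self_add
      _ = _ := by ring
  refine le_trans ?_ (le_self_add.trans le_self_add)
  calc _ ≤ (C2 * (1 + C1) * (Err φ Ω u x k + Err φ Ω u y k + Osc φ Ω u x (k + 2))) *
        (dy (n + β) k * dy (n + β) (-4)) := by gcongr
    _ = (C2 * (1 + C1) * dy (n + β) (-4)) * (dy (n + β) k * (if dist x y < (2:ℝ) ^ k then
          Err φ Ω u x k + Err φ Ω u y k + Osc φ Ω u x (k + 2) else 0)) := by
        rw [if_pos (by linarith)]; ring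
    _ ≤ (C2 * (1 + C1) * dy (n + β) (-4)) * ∑' k : ℤ, dy (n + β) k *
          (if dist x y < (2:ℝ) ^ k then
          Err φ Ω u x k + Err φ Ω u y k + Osc φ Ω u x (k + 2) else 0) := by
        gcongr
        exact ENNReal.le_tsum (f := fun k : ℤ => dy (n + β) k * (if dist x y < (2:ℝ) ^ k then
          Err φ Ω u x k + Err φ Ω u y k + Osc φ Ω u x (k + 2) else 0)) k
    _ = _ := by push_cast; rw [dy_toNNReal]

lemma lintegral_if_dist_left (k : ℤ) (f : EE n → ℝ≥0∞) (hf : Measurable f) :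
    ∫⁻ x : EE n, ∫⁻ y : EE n, (if dist x y < (2:ℝ) ^ k then f x else 0) =
      om n * (dy (-n) k * ∫⁻ x, f x) := by
  simp_rw [lint_if_ball _ (by positivity : (0:ℝ) < (2:ℝ) ^ k), dy_nat]
  rw [lintegral_mul_const _ hf]
  ring

lemma lintegral_if_dist_right (k : ℤ) (f : EE n → ℝ≥0∞) (hf : Measurable f) :
    ∫⁻ x : EE n, ∫⁻ y : EE n, (if dist x y < (2:ℝ) ^ k then f y else 0) =
      om n * (dy (-n) k * ∫⁻ x, f x) := by
  rw [lintegral_lintegral_swap, ← lintegral_if_dist_left k f hf]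
  · simp_rw [dist_comm]
  · refine Measurable.aemeasurable (Measurable.ite (measurableSet_lt ?_ measurable_const)
      (hf.comp measurable_snd) measurable_const)
    fun_prop

lemma lintegral_tsum_Err_le (h : IsYoung φ) (hK : IsDoubling φ K) (hβ : 0 < β)
    (hR : RegSet Ω θ) :
    ∃ C : ℝ≥0, ∀ u : EE n → ℝ, GoodFun Ω u →
      ∫⁻ x, ∑' k : ℤ, dy β k * Err φ Ω u x k ≤ C * modI n β φ Ω u := by
  obtain ⟨C1, hC1⟩ := tsum_Err_le h hK hβ hR
  obtain ⟨C2, hC2⟩ := lintegral_tsum_Osc_le (φ := φ) h hβ Ω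
  obtain ⟨C3, hC3⟩ := lintegral_tsum_sub_Av_le h hβ hR
  refine ⟨C3 + C1 * C2, fun u hu => ?_⟩
  rw [← lintegral_add_compl _ hR.meas]
  push_cast
  rw [add_mul]
  refine add_le_add ((setLIntegral_mono' hR.meas fun x hx => ?_).trans (hC3 u hu)) ?_
  · refine ENNReal.tsum_le_tsum fun k => ?_
    gcongr
    rw [Err, extn, if_pos hx]
    split_ifs
    · exact le_rfl
    · exact zero_le
  · calc _ ≤ ∫⁻ x in Ωᶜ, C1 * ∑' k : ℤ, dy β k * Osc φ Ω u x k := by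
          refine lintegral_mono_ae ?_
          rw [ae_restrict_iff' hR.meas.compl]
          filter_upwards [ae_infDist_pos hR] with x hx hxΩ
          exact hC1 u hu x (hx hxΩ)
      _ ≤ ∫⁻ x, C1 * ∑' k : ℤ, dy β k * Osc φ Ω u x k := setLIntegral_le_lintegral _ _
      _ = C1 * ∫⁻ x, ∑' k : ℤ, dy β k * Osc φ Ω u x k :=
          lintegral_const_mul' _ _ ENNReal.coe_ne_top
      _ ≤ C1 * (C2 * modI n β φ Ω u) := by gcongr; exact hC2 u hu.meas
      _ = _ := by ring

/-- The extension operator is bounded for the modular. -/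
lemma modI_extn_le (h : IsYoung φ) (hK : IsDoubling φ K) (hβ : 0 < β)
    (hCβ : CbetaFinite β φ) (hR : RegSet Ω θ) :
    ∃ C : ℝ≥0, ∀ u : EE n → ℝ, GoodFun Ω u →
      modI n β φ univ (extn Ω u) ≤ C * modI n β φ Ω u := by
  have hP := measurable_Phi h
  obtain ⟨C1, hC1⟩ := Phi_extn_pointwise_le (β := β) h hK hβ hR
  obtain ⟨C2, hC2⟩ := lintegral_near_le h hK hβ hCβ hR
  obtain ⟨C3, hC3⟩ := lintegral_tsum_Osc_le (φ := φ) h hβ Ω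
  obtain ⟨C4, hC4⟩ := lintegral_tsum_Err_le h hK hβ hR
  refine ⟨C1 * (om n * (C4 + C4 + (dy β (-2)).toNNReal * C3)) + C2 * C3 + C2 * C3,
    fun u hu => ?_⟩
  set v := extn Ω u with hv
  have hvm : Measurable v := measurable_extn hR.meas hu.meas
  have hEm := fun k => measurable_Err h hR.meas hu.meas k
  have hOm := fun k => measurable_Osc (Ω := Ω) h hu.meas k
  have hdm : Measurable fun x : EE n => infDist x Ω := (continuous_infDist_pt Ω).measurable
  set I := modI n β φ Ω u with hI
  set S : EE n → EE n → ℝ≥0∞ := fun x y => ∑' k : ℤ, dy (n + β) k *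
    (if dist x y < (2:ℝ) ^ k then
          Err φ Ω u x k + Err φ Ω u y k + Osc φ Ω u x (k + 2) else 0) with hS
  set G : EE n → EE n → ℝ≥0∞ := fun x y => Phi φ (v x - v y) * kr n β (dist x y) with hG
  set N : EE n → EE n → ℝ≥0∞ := fun x y => if dist x y < infDist x Ω / 2 then G x y else 0 with hN
  set N' : EE n → EE n → ℝ≥0∞ := fun x y => if dist x y < infDist y Ω / 2 then G x y else 0
    with hN'
  have hGm : Measurable fun p : EE n × EE n => G p.1 p.2 := by
    refine Measurable.mul (hP.comp ?_) (measurable_kr.comp ?_)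
    · fun_prop
    · fun_prop
  have hNm : Measurable fun p : EE n × EE n => N p.1 p.2 := by
    refine Measurable.ite (measurableSet_lt ?_ ?_) hGm measurable_const
    · fun_prop
    · exact (hdm.comp measurable_fst).div_const 2
  have hN'm : Measurable fun p : EE n × EE n => N' p.1 p.2 := by
    refine Measurable.ite (measurableSet_lt ?_ ?_) hGm measurable_const
    · fun_prop
    · exact (hdm.comp measurable_snd).div_const 2
  have hset : ∀ k : ℤ, MeasurableSet {p : EE n × EE n | dist p.1 p.2 < (2:ℝ) ^ k} := fun k =>
    measurableSet_lt (by fun_prop) measurable_const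
  have hTm : ∀ k : ℤ, Measurable fun p : EE n × EE n => dy (n + β) k *
      (if dist p.1 p.2 < (2:ℝ) ^ k then
          Err φ Ω u p.1 k + Err φ Ω u p.2 k + Osc φ Ω u p.1 (k + 2) else 0) := fun k =>
    (Measurable.ite (hset k) ((((hEm k).comp measurable_fst).add
      ((hEm k).comp measurable_snd)).add ((hOm (k + 2)).comp measurable_fst))
      measurable_const).const_mul _
  have hSm : Measurable fun p : EE n × EE n => S p.1 p.2 := Measurable.tsum hTm
  have sec : ∀ {F : EE n → EE n → ℝ≥0∞}, Measurable (fun p : EE n × EE n => F p.1 p.2) →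
      ∀ x, Measurable (F x) := fun hF x => hF.comp measurable_prodMk_left
  have par : ∀ {F : EE n → EE n → ℝ≥0∞}, Measurable (fun p : EE n × EE n => F p.1 p.2) →
      Measurable fun x => ∫⁻ y, F x y := fun hF => hF.lintegral_prod_right'
  have hNle : ∫⁻ x, ∫⁻ y, N x y ≤ C2 * (C3 * I) := by
    calc _ ≤ ∫⁻ x, C2 * ∑' k : ℤ, dy β k * Osc φ Ω u x k := by
          refine lintegral_mono fun x => ?_
          rcases infDist_nonneg (x := x) (s := Ω) |>.eq_or_lt with h0 | hd
          · have : ∀ y, N x y = 0 := fun y => if_neg (by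
              rw [← h0]; simp [dist_nonneg])
            simp only [this, lintegral_zero]
            exact zero_le
          · refine le_trans (le_of_eq ?_) (hC2 u hu x hd)
            rw [← lintegral_indicator measurableSet_ball]
            refine lintegral_congr fun y => ?_
            simp only [hN, hG, indicator_apply, mem_ball, dist_comm y x, hv]
      _ = C2 * ∫⁻ x, ∑' k : ℤ, dy β k * Osc φ Ω u x k :=
          lintegral_const_mul' _ _ ENNReal.coe_ne_top
      _ ≤ _ := by gcongr; exact hC3 u hu.meas
  have hNN : ∫⁻ x, ∫⁻ y, N' x y = ∫⁻ x, ∫⁻ y, N x y := by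
    rw [lintegral_lintegral_swap hN'm.aemeasurable]
    refine lintegral_congr fun x => lintegral_congr fun y => ?_
    simp only [hN, hN', hG, dist_comm y x, Phi_sub_comm (v y) (v x)]
  have hSle : ∫⁻ x, ∫⁻ y, S x y ≤ om n * ((C4 + C4 + dy β (-2) * C3) * I) := by
    have e1 : ∫⁻ x, ∫⁻ y, S x y = ∑' k : ℤ, om n * (dy β k * ((∫⁻ x, Err φ Ω u x k) +
        (∫⁻ x, Err φ Ω u x k) + ∫⁻ x, Osc φ Ω u x (k + 2))) := by
      have e2 : ∀ x, ∫⁻ y, S x y = ∑' k : ℤ, ∫⁻ y, dy (n + β) k *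
          (if dist x y < (2:ℝ) ^ k then
          Err φ Ω u x k + Err φ Ω u y k + Osc φ Ω u x (k + 2) else 0) := fun x =>
        lintegral_tsum fun k => ((hTm k).comp measurable_prodMk_left).aemeasurable
      simp_rw [e2]
      rw [lintegral_tsum fun k => (par (F := fun x y => dy (n + β) k *
          (if dist x y < (2:ℝ) ^ k then
          Err φ Ω u x k + Err φ Ω u y k + Osc φ Ω u x (k + 2) else 0)) (hTm k)).aemeasurable]
      refine tsum_congr fun k => ?_
      have m1 : Measurable fun p : EE n × EE n =>
          if dist p.1 p.2 < (2:ℝ) ^ k then Err φ Ω u p.1 k else 0 :=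
        Measurable.ite (hset k) ((hEm k).comp measurable_fst) measurable_const
      have m2 : Measurable fun p : EE n × EE n =>
          if dist p.1 p.2 < (2:ℝ) ^ k then Err φ Ω u p.2 k else 0 :=
        Measurable.ite (hset k) ((hEm k).comp measurable_snd) measurable_const
      have e3 : ∀ x y : EE n, (if dist x y < (2:ℝ) ^ k then
          Err φ Ω u x k + Err φ Ω u y k + Osc φ Ω u x (k + 2) else 0) =
          (if dist x y < (2:ℝ) ^ k then Err φ Ω u x k else 0) +
          (if dist x y < (2:ℝ) ^ k then Err φ Ω u y k else 0) +
          (if dist x y < (2:ℝ) ^ k then Osc φ Ω u x (k + 2) else 0) := by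
        intro x y; split_ifs <;> simp
      simp_rw [lintegral_const_mul' _ _ (dy_ne_top _ _), e3]
      have m12 : Measurable fun p : EE n × EE n =>
          (if dist p.1 p.2 < (2:ℝ) ^ k then Err φ Ω u p.1 k else 0) +
          (if dist p.1 p.2 < (2:ℝ) ^ k then Err φ Ω u p.2 k else 0) := m1.add m2
      have e4 : ∀ x, ∫⁻ y, ((if dist x y < (2:ℝ) ^ k then Err φ Ω u x k else 0) +
          (if dist x y < (2:ℝ) ^ k then Err φ Ω u y k else 0) +
          (if dist x y < (2:ℝ) ^ k then Osc φ Ω u x (k + 2) else 0)) =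
          (∫⁻ y, (if dist x y < (2:ℝ) ^ k then Err φ Ω u x k else 0)) +
          (∫⁻ y, (if dist x y < (2:ℝ) ^ k then Err φ Ω u y k else 0)) +
          ∫⁻ y, (if dist x y < (2:ℝ) ^ k then Osc φ Ω u x (k + 2) else 0) := by
        intro x
        rw [lintegral_add_left (sec (F := fun x y =>
          (if dist x y < (2:ℝ) ^ k then Err φ Ω u x k else 0) +
          (if dist x y < (2:ℝ) ^ k then Err φ Ω u y k else 0)) m12 x),
          lintegral_add_left (sec (F := fun x y =>
          if dist x y < (2:ℝ) ^ k then Err φ Ω u x k else 0) m1 x)]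
      simp_rw [e4]
      have m3 : Measurable fun x =>
          (∫⁻ y, (if dist x y < (2:ℝ) ^ k then Err φ Ω u x k else 0)) +
          (∫⁻ y, (if dist x y < (2:ℝ) ^ k then Err φ Ω u y k else 0)) := Measurable.add
          (par (F := fun x y => if dist x y < (2:ℝ) ^ k then Err φ Ω u x k else 0) m1)
          (par (F := fun x y => if dist x y < (2:ℝ) ^ k then Err φ Ω u y k else 0) m2)
      rw [lintegral_add_left m3,
        lintegral_add_left
          (par (F := fun x y => if dist x y < (2:ℝ) ^ k then Err φ Ω u x k else 0) m1),
        lintegral_if_dist_left k _ (hEm k), lintegral_if_dist_right k _ (hEm k),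
        lintegral_if_dist_left k _ (hOm (k + 2))]
      have e5 : dy β k = dy (n + β) k * dy (-n) k := by
        rw [← dy_add]; congr 1; ring
      rw [e5]
      ring
    rw [e1, ENNReal.tsum_mul_left]
    gcongr
    have e6 : ∑' k : ℤ, dy β k * ∫⁻ x, Err φ Ω u x k ≤ C4 * I := by
      refine le_trans (le_of_eq ?_) (hC4 u hu)
      rw [lintegral_tsum fun k => ((hEm k).const_mul _).aemeasurable]
      exact tsum_congr fun k => (lintegral_const_mul' _ _ (dy_ne_top _ _)).symm
    have e7 : ∑' k : ℤ, dy β k * ∫⁻ x, Osc φ Ω u x (k + 2) ≤ dy β (-2) * (C3 * I) := by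
      calc _ = dy β (-2) * ∑' k : ℤ, dy β (k + 2) * ∫⁻ x, Osc φ Ω u x (k + 2) := by
            rw [← ENNReal.tsum_mul_left]
            refine tsum_congr fun k => ?_
            rw [← mul_assoc, ← dy_shift]
            congr 2; ring
        _ = dy β (-2) * ∑' k : ℤ, dy β k * ∫⁻ x, Osc φ Ω u x k := by
            congr 1
            exact (Equiv.addRight (2:ℤ)).tsum_eq (fun k : ℤ => dy β k * ∫⁻ x, Osc φ Ω u x k)
        _ ≤ _ := by
            gcongr
            refine le_trans (le_of_eq ?_) (hC3 u hu.meas)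
            rw [lintegral_tsum fun k => ((hOm k).const_mul _).aemeasurable]
            exact tsum_congr fun k => (lintegral_const_mul' _ _ (dy_ne_top _ _)).symm
    simp_rw [mul_add]
    rw [ENNReal.tsum_add, ENNReal.tsum_add]
    calc _ ≤ C4 * I + C4 * I + dy β (-2) * (C3 * I) := by gcongr
      _ = _ := by ring
  calc modI n β φ univ v = ∫⁻ x, ∫⁻ y, G x y := by simp only [modI, Measure.restrict_univ, hG]
    _ ≤ ∫⁻ x, ∫⁻ y, (C1 * S x y + N x y + N' x y) :=
        lintegral_mono fun x => lintegral_mono fun y => hC1 u hu x y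
    _ = C1 * (∫⁻ x, ∫⁻ y, S x y) + (∫⁻ x, ∫⁻ y, N x y) + ∫⁻ x, ∫⁻ y, N' x y := by
        have m1 : ∀ x, Measurable fun y => C1 * S x y + N x y := fun x =>
          ((sec hSm x).const_mul _).add (sec hNm x)
        have m2 : Measurable fun x => C1 * (∫⁻ y, S x y) + ∫⁻ y, N x y :=
          ((par hSm).const_mul _).add (par hNm)
        have e : ∀ x, ∫⁻ y, (C1 * S x y + N x y + N' x y) =
            C1 * (∫⁻ y, S x y) + (∫⁻ y, N x y) + ∫⁻ y, N' x y := by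
          intro x
          rw [lintegral_add_left (m1 x),
            lintegral_add_left ((sec hSm x).const_mul _),
            lintegral_const_mul' _ _ ENNReal.coe_ne_top]
        simp_rw [e]
        rw [lintegral_add_left m2,
          lintegral_add_left ((par hSm).const_mul _),
          lintegral_const_mul' _ _ ENNReal.coe_ne_top]
    _ ≤ C1 * (om n * ((C4 + C4 + dy β (-2) * C3) * I)) + C2 * (C3 * I) + C2 * (C3 * I) := by
        rw [hNN]
        gcongr
    _ = _ := by
        push_cast
        rw [dy_toNNReal]
        ring

end Assembly

/-! ### Ahlfors regular domains are extension domains -/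

section Conclusion

variable {n : ℕ} {β : ℝ} {Ω : Set (EE n)} {θ : ℝ} {φ : ℝ → ℝ} {K : ℝ}

lemma modI_congr {u v : EE n → ℝ} (huv : u =ᵐ[volume.restrict Ω] v) :
    modI n β φ Ω u = modI n β φ Ω v := by
  refine lintegral_congr_ae ?_
  filter_upwards [huv] with x hx
  refine lintegral_congr_ae ?_
  filter_upwards [huv] with y hy
  rw [hx, hy]

lemma extn_congr (hΩ : MeasurableSet Ω) {u v : EE n → ℝ} (huv : u =ᵐ[volume.restrict Ω] v) :
    extn Ω u =ᵐ[volume] extn Ω v := by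
  have h1 := (ae_restrict_iff' hΩ).1 huv
  filter_upwards [h1] with x hx
  unfold extn
  split_ifs with hxΩ
  · exact hx hxΩ
  · congr 1
    refine integral_congr_ae ?_
    filter_upwards [huv] with z hz
    rw [hz]

lemma extn_smul (c : ℝ) (u : EE n → ℝ) : extn Ω (c • u) = c • extn Ω u := by
  funext x
  simp only [extn, Pi.smul_apply, smul_eq_mul]
  split_ifs
  · rfl
  · rw [← mul_div_assoc, ← integral_const_mul]
    congr 2
    funext z
    ring

lemma extn_div (u : EE n → ℝ) (lam : ℝ) :
    extn Ω (fun x => u x / lam) = fun x => extn Ω u x / lam := by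
  have := extn_smul (Ω := Ω) lam⁻¹ u
  simpa only [Pi.smul_def, smul_eq_mul, div_eq_inv_mul] using this

lemma integrableOn_of_div {u : EE n → ℝ} {s : Set (EE n)} {lam : ℝ} (hl : 0 < lam)
    (hu : IntegrableOn (fun x => u x / lam) s) : IntegrableOn u s := by
  have : IntegrableOn (fun x => lam * (u x / lam)) s := hu.const_mul lam
  refine this.congr_fun_ae (ae_of_all _ fun x => ?_)
  field_simp

/-- A function with finite modular agrees a.e. on `Ω` with a good one. -/
lemma exists_goodFun (h : IsYoung φ) (hβ : 0 < β) (hR : RegSet Ω θ) {u : EE n → ℝ}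
    (hu : AEStronglyMeasurable u (volume.restrict Ω)) {lam : ℝ} (hl : 0 < lam)
    (hI : modI n β φ Ω (fun x => u x / lam) ≤ 1) :
    ∃ v, GoodFun Ω v ∧ u =ᵐ[volume.restrict Ω] v := by
  refine ⟨hu.mk u, ⟨hu.stronglyMeasurable_mk.measurable, fun x R => ?_⟩, hu.ae_eq_mk⟩
  have h1 : IntegrableOn u (ball x R ∩ Ω) := by
    refine integrableOn_of_div hl ?_
    refine integrableOn_of_modI h hβ hR.meas (hR.isOpen.measure_pos volume hR.nonempty).ne'
      ?_ (ne_top_of_le_ne_top ENNReal.one_ne_top hI) (measurableSet_ball.inter hR.meas)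
      inter_subset_right (isBounded_ball.subset inter_subset_left)
    simpa only [div_eq_mul_inv] using hu.mul_const lam⁻¹
  exact h1.congr_fun_ae (ae_restrict_of_ae_restrict_of_subset inter_subset_right hu.ae_eq_mk)

/-- The boundedness of the extension, in the form of a map between admissible `λ`. -/
lemma modI_extn_div_le (h : IsYoung φ) (hK : IsDoubling φ K) (hβ : 0 < β)
    (hCβ : CbetaFinite β φ) (hR : RegSet Ω θ) :
    ∃ C : ℝ, 1 ≤ C ∧ ∀ u : EE n → ℝ, AEStronglyMeasurable u (volume.restrict Ω) →
      ∀ lam : ℝ, 0 < lam → modI n β φ Ω (fun x => u x / lam) ≤ 1 →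
        modI n β φ univ (fun x => extn Ω u x / (C * lam)) ≤ 1 := by
  obtain ⟨C, hC⟩ := modI_extn_le h hK hβ hCβ hR
  set D : ℝ := max (C : ℝ) 1 with hD
  have hD1 : 1 ≤ D := le_max_right _ _
  have hD0 : 0 < D := by positivity
  refine ⟨D, hD1, fun u hu lam hl hI => ?_⟩
  obtain ⟨v, hv, huv⟩ := exists_goodFun h hβ hR hu hl hI
  have hvl : GoodFun Ω (fun x => v x / lam) :=
    ⟨hv.meas.div_const lam, fun x R => (hv.int x R).div_const lam⟩
  have huvl : (fun x => u x / lam) =ᵐ[volume.restrict Ω] fun x => v x / lam := by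
    filter_upwards [huv] with x hx
    rw [hx]
  have hE : modI n β φ univ (fun x => extn Ω u x / lam) ≤ C := by
    rw [← extn_div, modI_congr (v := extn Ω fun x => v x / lam)
      (by rw [Measure.restrict_univ]; exact extn_congr hR.meas huvl)]
    calc _ ≤ C * modI n β φ Ω (fun x => v x / lam) := hC _ hvl
      _ = C * modI n β φ Ω (fun x => u x / lam) := by rw [modI_congr huvl]
      _ ≤ C * 1 := by gcongr
      _ = C := mul_one _
  have hPs : ∀ s : ℝ, Phi φ (D⁻¹ * s) ≤ ENNReal.ofReal D⁻¹ * Phi φ s := by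
    intro s
    unfold Phi
    rw [← ENNReal.ofReal_mul (by positivity), abs_mul, abs_of_pos (by positivity : 0 < D⁻¹)]
    exact ENNReal.ofReal_le_ofReal (h.scale (by positivity) (inv_le_one_of_one_le₀ hD1)
      (abs_nonneg _))
  calc modI n β φ univ (fun x => extn Ω u x / (D * lam))
      ≤ ENNReal.ofReal D⁻¹ * modI n β φ univ (fun x => extn Ω u x / lam) := by
        unfold modI
        rw [← lintegral_const_mul' _ _ ENNReal.ofReal_ne_top]
        refine lintegral_mono fun x => ?_
        rw [← lintegral_const_mul' _ _ ENNReal.ofReal_ne_top]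
        refine lintegral_mono fun y => ?_
        rw [← mul_assoc]
        gcongr
        refine le_trans (le_of_eq ?_) (hPs _)
        congr 1
        field_simp
    _ ≤ ENNReal.ofReal D⁻¹ * C := by gcongr
    _ ≤ ENNReal.ofReal D⁻¹ * ENNReal.ofReal D := by
        gcongr
        rw [← ENNReal.ofReal_coe_nnreal]
        exact ENNReal.ofReal_le_ofReal (le_max_left _ _)
    _ = 1 := by
        rw [← ENNReal.ofReal_mul (by positivity), inv_mul_cancel₀ hD0.ne', ENNReal.ofReal_one]

lemma extn_add (hR : RegSet Ω θ) {u v : EE n → ℝ}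
    (hu : ∃ u', GoodFun Ω u' ∧ u =ᵐ[volume.restrict Ω] u')
    (hv : ∃ v', GoodFun Ω v' ∧ v =ᵐ[volume.restrict Ω] v') :
    extn Ω (u + v) = extn Ω u + extn Ω v := by
  have h_int : ∀ {w : EE n → ℝ}, (∃ w', GoodFun Ω w' ∧ w =ᵐ[volume.restrict Ω] w') →
      ∀ x, IntegrableOn (fun z => tent Ω x z * w z) (ball x (3 * infDist x Ω) ∩ Ω) := by
    rintro w ⟨w', hw', hww⟩ x
    have h1 : IntegrableOn w (ball x (3 * infDist x Ω) ∩ Ω) :=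
      (hw'.int x _).congr_fun_ae
        (ae_restrict_of_ae_restrict_of_subset inter_subset_right hww.symm)
    refine h1.bdd_mul (c := infDist x Ω) (measurable_tent_right Ω x).aestronglyMeasurable ?_
    refine ae_of_all _ fun z => ?_
    rw [Real.norm_eq_abs, abs_of_nonneg (tent_nonneg _ _)]
    exact tent_le _ _
  funext x
  simp only [extn, Pi.add_apply]
  split_ifs
  · rfl
  · rw [← add_div]
    congr 1
    have e : ∀ f : EE n → ℝ, ∫ z in Ω, tent Ω x z * f z =
        ∫ z in ball x (3 * infDist x Ω) ∩ Ω, tent Ω x z * f z := fun f =>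
      setIntegral_tent_eq hR.meas (by simp) f
    rw [e u, e v, e (fun z => u z + v z), ← integral_add (h_int hu x) (h_int hv x)]
    congr 1
    funext z
    ring

lemma extension_of_ahlfors (h : IsYoung φ) (hK : IsDoubling φ K) (hβ : 0 < β)
    (hCβ : CbetaFinite β φ) (hR : RegSet Ω θ) : IsExtensionDomain n β φ Ω := by
  obtain ⟨C, hC1, hC⟩ := modI_extn_div_le h hK hβ hCβ hR
  have hC0 : 0 < C := by linarith
  have hae : ∀ u, MemW n β φ Ω u → AEStronglyMeasurable u (volume.restrict Ω) := fun u hu =>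
    hu.1.aestronglyMeasurable
  have hex : ∀ u, MemW n β φ Ω u → ∃ lam : ℝ, 0 < lam ∧
      modI n β φ Ω (fun x => u x / lam) ≤ 1 := by
    intro u hu
    obtain ⟨lam, ⟨h0, h1, h2⟩, -⟩ := sInf_lt_iff.1 (lt_top_iff_ne_top.2 hu.2)
    have hl := ENNReal.toReal_pos h0.ne' h1
    exact ⟨lam.toReal, hl, by rwa [← fracIntegral_eq_modI Ω u hl]⟩
  have hgood : ∀ u, MemW n β φ Ω u → ∃ v, GoodFun Ω v ∧ u =ᵐ[volume.restrict Ω] v := by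
    intro u hu
    obtain ⟨lam, hl, hI⟩ := hex u hu
    exact exists_goodFun h hβ hR (hae u hu) hl hI
  refine ⟨C, hC0, extn Ω, fun u v hu hv => extn_add hR (hgood u hu) (hgood v hv),
    fun c u _ => extn_smul c u, fun u hu => ?_⟩
  have hnorm : fracNorm n β φ univ (extn Ω u) ≤ ENNReal.ofReal C * fracNorm n β φ Ω u := by
    have hC0' : ENNReal.ofReal C ≠ 0 := (ENNReal.ofReal_pos.2 hC0).ne'
    rw [mul_comm, ← ENNReal.div_le_iff_le_mul (Or.inl hC0') (Or.inl ENNReal.ofReal_ne_top)]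
    refine le_sInf ?_
    rintro lam ⟨h0, h1, h2⟩
    have hl := ENNReal.toReal_pos h0.ne' h1
    rw [ENNReal.div_le_iff_le_mul (Or.inl hC0') (Or.inl ENNReal.ofReal_ne_top), mul_comm]
    refine sInf_le ⟨ENNReal.mul_pos hC0' h0.ne', ENNReal.mul_ne_top ENNReal.ofReal_ne_top h1, ?_⟩
    rw [fracIntegral_eq_modI _ _ hl] at h2
    rw [ENNReal.toReal_mul, ENNReal.toReal_ofReal hC0.le,
      fracIntegral_eq_modI _ _ (mul_pos hC0 hl)]
    exact hC u (hae u hu) _ hl h2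
  refine ⟨⟨?_, ne_top_of_le_ne_top (ENNReal.mul_ne_top ENNReal.ofReal_ne_top hu.2) hnorm⟩,
    (ae_restrict_iff' hR.meas).2 (ae_of_all _ fun x hx => if_pos hx), hnorm⟩
  obtain ⟨lam, hl, hI⟩ := hex u hu
  obtain ⟨v, hv, huv⟩ := hgood u hu
  have hm : AEStronglyMeasurable (extn Ω u) volume :=
    ⟨extn Ω v, (measurable_extn hR.meas hv.meas).stronglyMeasurable, extn_congr hR.meas huv⟩
  rw [locallyIntegrableOn_univ]
  intro x
  refine ⟨ball x 1, ball_mem_nhds x one_pos, integrableOn_of_div (mul_pos hC0 hl) ?_⟩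
  refine integrableOn_of_modI h hβ MeasurableSet.univ
    (isOpen_univ.measure_pos volume univ_nonempty).ne' ?_
    (ne_top_of_le_ne_top ENNReal.one_ne_top (hC u (hae u hu) lam hl hI)) measurableSet_ball
    (subset_univ _) isBounded_ball
  rw [Measure.restrict_univ]
  simpa only [div_eq_mul_inv] using hm.mul_const (C * lam)⁻¹

end Conclusion

/-- a domain is a `Ẇ^{β,φ}`-extension domain iff it is Ahlfors `n`-regular. -/
theorem extension_iff_ahlfors
    (n : ℕ) (hn : 1 ≤ n) (β : ℝ)
    (hβ : β ∈ Set.Ioo (0 : ℝ) (n : ℝ) ∪ Set.Ioi (n : ℝ))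
    (φ : ℝ → ℝ) (hφ : IsYoung φ) (hdbl : ∃ K : ℝ, IsDoubling φ K)
    (hCβ : CbetaFinite β φ)
    (Ω : Set (EuclideanSpace ℝ (Fin n))) (hΩopen : IsOpen Ω) (hΩconn : IsConnected Ω) :
    IsExtensionDomain n β φ Ω ↔ AhlforsRegular n Ω := by
  obtain ⟨K, hK⟩ := hdbl
  have hβ0 : 0 < β := by
    rcases hβ with hβ | hβ
    · exact hβ.1
    · exact lt_of_le_of_lt n.cast_nonneg hβ
  have hβn : β < n ∨ n < β := by
    rcases hβ with hβ | hβ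
    · exact Or.inl hβ.2
    · exact Or.inr hβ
  constructor
  · exact ahlfors_of_extension hn hφ hK hβ0 hβn hCβ hΩopen hΩconn
  · rintro ⟨θ, hθ, hvol⟩
    exact extension_of_ahlfors hφ hK hβ0 hCβ ⟨hΩopen, hΩconn.nonempty, hθ, hvol⟩
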